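/- arXiv:1010.6278 — 2 statements merged into one kernel-verified Lean document; each statement's English description precedes it below -/
import Mathlib

section
/- For every positive integer k and every constant ε > 0 there exist a constant c > 0 and an integer n0 such that for all n ≥ n0: the number of graphs G in (Ex (k+1)C)_n having some vertex v with deg_G(v) > n/ln n but deg_G(v) < (1/2 − ε)n or deg_G(v) > (1/2 + ε)n is at most e^{-c n} · |(Ex (k+1)C)_n|. -/
/-!
A vertex of degree above `n / log n` in a graph of `Ex (k + 1)C` is typically one of `k` apex
vertices over a forest, and the neighbourhood of an apex vertex is an arbitrary set, whose size
is concentrated around `n / 2`. The proof turns this into a comparison of two counts.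

*Structure.* By the Erdős–Pósa theorem (`erdos_posa`), proved through a maximal subgraph with
degrees `0`, `2` and `3`, a graph without `k + 1` disjoint cycles has a set of bounded size that
meets all its cycles. Enlarging this set by boundedly many vertices, `structure_thm` (through the
duality `forest_packing` over a forest) arranges that all but `k` of its members individually close
no cycle with the remaining forest. Such a member has at most one neighbour in each tree, hence at
most as many neighbours in the forest as there are trees.

*Upper bound.* The graph is therefore encoded, up to polynomially many choices, by `k` arbitrary
sets (the neighbourhoods of the `k` apex vertices), a parent map `p` on the forest, and `s` sets
of size at most the number of trees. If a vertex of degree above `n / log n` is exceptional, then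
either one of the `k` sets has a size far from `n / 2`, which by Chernoff's bound `dev_card` saves
an exponential factor, or `p` has at least about `n / log n` fixed points, or a vertex has
at least about `n / log n` preimages. The number of such `p` is bounded with the generating function
`sum_pow_fx_cnt` evaluated at `z = η n`: the factor `(η n) ^ (-n / log n)` is about `exp (-n)`.
The small sets are handled by weighting each of their elements with a small constant `x`, and this
costs only an arbitrarily small exponential factor. All of this is assembled in `card_bad_le` and
`bracket_le`.

*Lower bound.* Joining `k` vertices arbitrarily to a tree on `n - k` vertices gives graphs of
the class, so by Cayley's formula (`RF_one`, by Pitman's double count `RF_step`) the class has at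
least `2 ^ (k n) n ^ n` members up to a polynomial factor (`exCount_lower_real`). This is the main
factor of the upper bound, whose exponential saving therefore survives.
-/

open SimpleGraph Filter Real

def IsBlocker {V : Type*} (G : SimpleGraph V) (B : Set V) : Prop :=
  (G.induce Bᶜ).IsAcyclic

def HasDisjointCycles {V : Type*} (G : SimpleGraph V) (m : ℕ) : Prop :=
  ∃ c : Fin m → (Σ v : V, G.Walk v v),
    (∀ i, (c i).2.IsCycle) ∧
    ∀ i j, i ≠ j → ∀ v, v ∈ (c i).2.support → v ∉ (c j).2.support

noncomputable def apexCount (n k : ℕ) : ℕ :=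
  Nat.card {G : SimpleGraph (Fin n) // ∃ B : Finset (Fin n), B.card ≤ k ∧ IsBlocker G ↑B}

noncomputable def exCount (n k : ℕ) : ℕ :=
  Nat.card {G : SimpleGraph (Fin n) // ¬ HasDisjointCycles G k}

noncomputable def forestCount (n : ℕ) : ℕ :=
  Nat.card {G : SimpleGraph (Fin n) // G.IsAcyclic}

def IsSpike {V : Type*} (G : SimpleGraph V) (u v : V) : Prop :=
  G.Adj u v ∧ (G.neighborSet u).ncard = 1 ∧ (G.neighborSet v).ncard = 2 ∧
  ¬ ∃ a b c : V, a ≠ b ∧ b ≠ c ∧ a ≠ c ∧ G.Adj a b ∧ G.Adj b c ∧ ¬ G.Adj a c ∧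
      (G.connectedComponentMk u).supp = {a, b, c}

/-! ### Cores and cycles -/

section Cores
open scoped Classical

variable {V : Type*}

/-- The neighbours of `a` inside the finite set `A`. -/
noncomputable def nb (G : SimpleGraph V) (A : Finset V) (a : V) : Finset V := A.filter (G.Adj a)

/-- A core: a nonempty finite vertex set each of whose members has at least two neighbours in it.
Cores stand in for cycles: the vertex set of a cycle is a core, and every core contains a cycle. -/
def Core (G : SimpleGraph V) (A : Finset V) : Prop :=
  A.Nonempty ∧ ∀ a ∈ A, 2 ≤ (nb G A a).card

/-- `A` contains a core, i.e. the subgraph induced on `A` is not a forest. -/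
def HasCyc (G : SimpleGraph V) (A : Finset V) : Prop := ∃ C ⊆ A, Core G C

lemma mem_nb {G : SimpleGraph V} {A : Finset V} {a b : V} : b ∈ nb G A a ↔ b ∈ A ∧ G.Adj a b := by
  simp [nb]

lemma nb_mono {G H : SimpleGraph V} (h : G ≤ H) {A B : Finset V} (hAB : A ⊆ B) (a : V) :
    nb G A a ⊆ nb H B a := by
  intro x hx
  rw [mem_nb] at *
  exact ⟨hAB hx.1, h hx.2⟩

lemma HasCyc.mono {G H : SimpleGraph V} (h : G ≤ H) {A B : Finset V} (hAB : A ⊆ B)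
    (hA : HasCyc G A) : HasCyc H B := by
  obtain ⟨C, hC, hne, hd⟩ := hA
  exact ⟨C, hC.trans hAB, hne, fun a ha => (hd a ha).trans
    (Finset.card_le_card (nb_mono h subset_rfl a))⟩

lemma Core.hasCyc {G : SimpleGraph V} {A : Finset V} (h : Core G A) : HasCyc G A :=
  ⟨A, subset_rfl, h⟩

lemma core_of_cycle {G : SimpleGraph V} {v : V} (c : G.Walk v v) (hc : c.IsCycle) :
    Core G c.support.toFinset := by
  refine ⟨⟨v, by simp⟩, fun a ha => ?_⟩
  have ha' : a ∈ c.support := by simpa using ha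
  have h2 := hc.ncard_neighborSet_toSubgraph_eq_two ha'
  rw [← h2, ← Set.ncard_coe_finset]
  apply Set.ncard_le_ncard _ (Finset.finite_toSet _)
  intro x hx
  have hx' : c.toSubgraph.Adj a x := hx
  simp only [Finset.mem_coe, mem_nb, List.mem_toFinset]
  exact ⟨(c.mem_verts_toSubgraph).1 hx'.snd_mem, hx'.adj_sub⟩

lemma cycle_of_core {G : SimpleGraph V} {C : Finset V} (hC : Core G C) :
    ∃ v, ∃ c : G.Walk v v, c.IsCycle ∧ ∀ x ∈ c.support, x ∈ C := by
  have hna : ¬ (G.induce (C : Set V)).IsAcyclic := by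
    intro hac
    have : Nonempty (C : Set V) := by
      obtain ⟨x, hx⟩ := hC.1
      exact ⟨⟨x, hx⟩⟩
    obtain ⟨u, v, p, hp, hmax⟩ :=
      SimpleGraph.Walk.exists_isPath_forall_isPath_length_le_length (G.induce (C : Set V))
    have key : ∀ w, (G.induce (C : Set V)).Adj u w → w = p.snd := by
      intro w hw
      refine hac.eq_snd_of_adj_start hp hw ?_
      by_contra hns
      have := hmax _ _ (Walk.cons hw.symm p) (by simp [hp, hns])
      simp at this
    have h2 := hC.2 u.1 u.2
    obtain ⟨a, ha, b, hb, hab⟩ := Finset.one_lt_card.1 h2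
    rw [mem_nb] at ha hb
    have h1 := key ⟨a, ha.1⟩ ha.2
    have h2 := key ⟨b, hb.1⟩ hb.2
    exact hab (congrArg Subtype.val (h1.trans h2.symm))
  unfold SimpleGraph.IsAcyclic at hna
  push Not at hna
  obtain ⟨v, c, hc⟩ := hna
  let f : G.induce (C : Set V) →g G := (Embedding.induce (C : Set V)).toHom
  have hf : Function.Injective f := Subtype.val_injective
  refine ⟨f v, c.map f, hc.map hf, ?_⟩
  intro x hx
  rw [Walk.support_map, List.mem_map] at hx
  obtain ⟨y, -, rfl⟩ := hx
  exact y.2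

lemma isAcyclic_induce_of_not_hasCyc {G : SimpleGraph V} {A : Finset V} (h : ¬ HasCyc G A) :
    (G.induce (A : Set V)).IsAcyclic := by
  intro v c hc
  apply h
  let f : G.induce (A : Set V) →g G := (Embedding.induce (A : Set V)).toHom
  have hf : Function.Injective f := Subtype.val_injective
  refine ⟨_, ?_, core_of_cycle _ (hc.map hf)⟩
  intro x hx
  rw [List.mem_toFinset, Walk.support_map, List.mem_map] at hx
  obtain ⟨y, -, rfl⟩ := hx
  exact y.2

lemma not_hasCyc_of_isAcyclic_induce {G : SimpleGraph V} {A : Finset V}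
    (h : (G.induce (A : Set V)).IsAcyclic) : ¬ HasCyc G A := by
  rintro ⟨C, hCA, hC⟩
  obtain ⟨v, c, hc, hs⟩ := cycle_of_core hC
  have hs' : ∀ x ∈ c.support, x ∈ (A : Set V) := fun x hx => hCA (hs x hx)
  refine h (c.induce _ hs') (Walk.IsCycle.of_map
    (f := (Embedding.induce (G := G) (A : Set V)).toHom) ?_)
  rw [Walk.map_induce]
  exact hc

/-- `m` pairwise disjoint sets containing cores yield `m` disjoint cycles. -/
lemma hasDisjointCycles_of_hasCyc {G : SimpleGraph V} {m : ℕ} (T : Fin m → Finset V)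
    (hT : ∀ i, HasCyc G (T i)) (hd : ∀ i j, i ≠ j → Disjoint (T i) (T j)) :
    HasDisjointCycles G m := by
  have : ∀ i, ∃ v, ∃ c : G.Walk v v, c.IsCycle ∧ ∀ x ∈ c.support, x ∈ T i := by
    intro i
    obtain ⟨C, hCT, hC⟩ := hT i
    obtain ⟨v, c, hc, hs⟩ := cycle_of_core hC
    exact ⟨v, c, hc, fun x hx => hCT (hs x hx)⟩
  choose v c hc hs using this
  refine ⟨fun i => ⟨v i, c i⟩, hc, fun i j hij x hx hx' => ?_⟩
  exact (Finset.disjoint_left.1 (hd i j hij)) (hs i x hx) (hs j x hx')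

lemma hasDisjointCycles_of_family {ι : Type*} {G : SimpleGraph V} {m : ℕ} (I : Finset ι)
    (hI : m ≤ I.card) (T : ι → Finset V) (hT : ∀ i ∈ I, HasCyc G (T i))
    (hd : ∀ i ∈ I, ∀ j ∈ I, i ≠ j → Disjoint (T i) (T j)) : HasDisjointCycles G m := by
  obtain ⟨J, hJI, hJ⟩ := Finset.exists_subset_card_eq hI
  let e := J.equivFinOfCardEq hJ
  refine hasDisjointCycles_of_hasCyc (fun i => T (e.symm i)) (fun i => hT _ (hJI (e.symm i).2))
    (fun i j hij => hd _ (hJI (e.symm i).2) _ (hJI (e.symm j).2) ?_)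
  intro h
  exact hij (e.symm.injective (Subtype.ext h))

lemma HasDisjointCycles.mono {G H : SimpleGraph V} (h : G ≤ H) {m : ℕ}
    (hG : HasDisjointCycles G m) : HasDisjointCycles H m := by
  obtain ⟨c, hc, hd⟩ := hG
  refine hasDisjointCycles_of_hasCyc (fun i => (c i).2.support.toFinset)
    (fun i => (core_of_cycle _ (hc i)).hasCyc.mono h subset_rfl) ?_
  intro i j hij
  rw [Finset.disjoint_left]
  intro a ha hb
  exact hd i j hij a (by simpa using ha) (by simpa using hb)

lemma not_hasDisjointCycles_of_blocker [Fintype V] {G : SimpleGraph V} {k : ℕ} (B : Finset V)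
    (hB : B.card ≤ k) (h : ¬ HasCyc G Bᶜ) : ¬ HasDisjointCycles G (k + 1) := by
  rintro ⟨c, hc, hd⟩
  have : ∀ i, ∃ x ∈ B, x ∈ (c i).2.support := by
    intro i
    by_contra hcon
    push Not at hcon
    refine h ⟨_, ?_, core_of_cycle _ (hc i)⟩
    intro x hx
    simp only [List.mem_toFinset] at hx
    rw [Finset.mem_compl]
    exact fun hxB => hcon x hxB hx
  choose f hf hf' using this
  have := Finset.exists_ne_map_eq_of_card_lt_of_maps_to (s := Finset.univ) (t := B) (f := f)
    (by simp; omega) (by intro i _; exact hf i)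
  obtain ⟨i, -, j, -, hij, he⟩ := this
  exact hd i j hij (f i) (hf' i) (he ▸ hf' j)

/-- Number of ordered pairs `(a, b)` in `A × B` with `a` adjacent to `b`; each edge inside `A`
is counted twice in `dc G A A`. -/
noncomputable def dc (G : SimpleGraph V) (A B : Finset V) : ℕ := ∑ a ∈ A, (nb G B a).card

lemma dc_eq_sum (G : SimpleGraph V) (A B : Finset V) :
    dc G A B = ∑ a ∈ A, ∑ b ∈ B, if G.Adj a b then 1 else 0 := by
  simp only [dc, nb, Finset.card_filter]

lemma dc_comm (G : SimpleGraph V) (A B : Finset V) : dc G A B = dc G B A := by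
  rw [dc_eq_sum, dc_eq_sum, Finset.sum_comm]
  simp [G.adj_comm]

lemma dc_union_left (G : SimpleGraph V) {A A' : Finset V} (B : Finset V) (h : Disjoint A A') :
    dc G (A ∪ A') B = dc G A B + dc G A' B := by
  rw [dc, Finset.sum_union h]; rfl

lemma dc_union_right (G : SimpleGraph V) {A A' : Finset V} (B : Finset V) (h : Disjoint A A') :
    dc G B (A ∪ A') = dc G B A + dc G B A' := by
  rw [dc_comm, dc_union_left _ _ h, dc_comm, dc_comm G A' B]

lemma dc_union_self (G : SimpleGraph V) {A B : Finset V} (h : Disjoint A B) :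
    dc G (A ∪ B) (A ∪ B) = dc G A A + dc G B B + 2 * dc G A B := by
  rw [dc_union_left _ _ h, dc_union_right _ _ h, dc_union_right _ _ h, dc_comm G B A]
  ring

lemma dc_mono (G : SimpleGraph V) {A A' B B' : Finset V} (h : A ⊆ A') (h' : B ⊆ B') :
    dc G A B ≤ dc G A' B' := by
  rw [dc, dc]
  calc _ ≤ ∑ a ∈ A, (nb G B' a).card :=
        Finset.sum_le_sum fun a _ => Finset.card_le_card (nb_mono le_rfl h' a)
    _ ≤ _ := Finset.sum_le_sum_of_subset h

lemma dc_singleton_left (G : SimpleGraph V) (a : V) (B : Finset V) :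
    dc G {a} B = (nb G B a).card := by simp [dc]

lemma dc_singleton_self (G : SimpleGraph V) (a : V) : dc G {a} {a} = 0 := by
  rw [dc_singleton_left, Finset.card_eq_zero, Finset.eq_empty_iff_forall_notMem]
  intro x hx
  rw [mem_nb, Finset.mem_singleton] at hx
  obtain ⟨rfl, h⟩ := hx
  exact G.loopless.irrefl _ h

lemma dc_erase (G : SimpleGraph V) {A : Finset V} {a : V} (ha : a ∈ A) :
    dc G A A = dc G (A.erase a) (A.erase a) + 2 * (nb G A a).card := by
  have h1 : A = {a} ∪ A.erase a := by
    ext x; simp only [Finset.mem_union, Finset.mem_singleton, Finset.mem_erase]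
    by_cases h : x = a <;> simp [h, ha]
  have hd : Disjoint {a} (A.erase a) := by simp
  have h2 : (nb G A a).card = dc G {a} (A.erase a) := by
    rw [← dc_singleton_left]
    conv_lhs => rw [h1]
    rw [dc_union_right _ _ hd, dc_singleton_self, zero_add]
  conv_lhs => rw [h1]
  rw [dc_union_self _ hd, dc_singleton_self, h2]
  ring

/-- A nonempty set spanning at least as many edges as vertices contains a core. -/
lemma hasCyc_of_dc (G : SimpleGraph V) (A : Finset V) (hne : A.Nonempty)
    (h : 2 * A.card ≤ dc G A A) : HasCyc G A := by
  induction A using Finset.strongInduction with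
  | H A ih =>
    by_cases hc : Core G A
    · exact hc.hasCyc
    · have : ∃ a ∈ A, (nb G A a).card ≤ 1 := by
        by_contra hcon
        push Not at hcon
        exact hc ⟨hne, hcon⟩
      obtain ⟨a, ha, hle⟩ := this
      have h1 := dc_erase G ha
      have h2 := Finset.card_erase_add_one ha
      have hne' : (A.erase a).Nonempty := by
        rw [Finset.nonempty_iff_ne_empty]
        intro h0
        have hA : A = {a} := by
          rw [← Finset.insert_erase ha, h0]; rfl
        rw [hA, dc_singleton_self] at h
        simp at h
      exact (ih _ (Finset.erase_ssubset ha) hne' (by omega)).mono le_rfl (Finset.erase_subset _ _)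

/-- A set with at least two vertices, all of which except possibly `v` have two neighbours in the
set, contains a core: pruning `v` when it has degree at most one preserves the hypothesis. -/
lemma hasCyc_of_almost (G : SimpleGraph V) (A : Finset V) (v : V) (hv : v ∈ A)
    (hcard : 2 ≤ A.card) (h : ∀ a ∈ A, a ≠ v → 2 ≤ (nb G A a).card) : HasCyc G A := by
  induction A using Finset.strongInduction generalizing v with
  | H A ih =>
    by_cases h2 : 2 ≤ (nb G A v).card
    · refine Core.hasCyc ⟨⟨v, hv⟩, fun a ha => ?_⟩
      by_cases hav : a = v
      · exact hav ▸ h2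
      · exact h a ha hav
    · have hsub : A.erase v ⊆ A := Finset.erase_subset _ _
      have hnb : ∀ a, ¬ G.Adj a v → nb G (A.erase v) a = nb G A a := by
        intro a hav
        ext x
        simp only [mem_nb, Finset.mem_erase]
        constructor
        · rintro ⟨⟨_, h1⟩, h2⟩; exact ⟨h1, h2⟩
        · rintro ⟨h1, h2⟩; exact ⟨⟨fun h => hav (h ▸ h2), h1⟩, h2⟩
      have hex : ∃ u ∈ A.erase v, ∀ a ∈ A, G.Adj v a → a = u := by
        by_cases h0 : (nb G A v) = ∅
        · obtain ⟨u, hu⟩ : (A.erase v).Nonempty := by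
            rw [← Finset.card_pos, Finset.card_erase_of_mem hv]; omega
          refine ⟨u, hu, fun a ha hva => ?_⟩
          have : a ∈ nb G A v := mem_nb.2 ⟨ha, hva⟩
          simp [h0] at this
        · have : (nb G A v).card = 1 := by
            have := Finset.card_pos.2 (Finset.nonempty_iff_ne_empty.2 h0)
            omega
          obtain ⟨u, hu⟩ := Finset.card_eq_one.1 this
          have hu' : u ∈ nb G A v := by simp [hu]
          rw [mem_nb] at hu'
          refine ⟨u, Finset.mem_erase.2 ⟨hu'.2.ne', hu'.1⟩, fun a ha hva => ?_⟩
          have : a ∈ nb G A v := mem_nb.2 ⟨ha, hva⟩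
          simpa [hu] using this
      obtain ⟨u, hu, huu⟩ := hex
      have huA := Finset.mem_erase.1 hu
      refine (ih _ (Finset.erase_ssubset hv) u hu ?_ ?_).mono le_rfl hsub
      · -- `u` has a second neighbour, different from `v`
        have := h u huA.2 huA.1
        obtain ⟨a, ha, b, hb, hab⟩ := Finset.one_lt_card.1 this
        rw [mem_nb] at ha hb
        rw [Nat.succ_le_iff, Finset.one_lt_card]
        by_cases hav : a = v
        · exact ⟨u, hu, b, Finset.mem_erase.2 ⟨fun h => hab (hav.trans h.symm), hb.1⟩, hb.2.ne⟩
        · exact ⟨u, hu, a, Finset.mem_erase.2 ⟨hav, ha.1⟩, ha.2.ne⟩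
      · intro a ha hau
        have ha' := Finset.mem_erase.1 ha
        rw [hnb a (fun hav => hau (huu a ha'.2 hav.symm))]
        exact h a ha'.2 ha'.1

end Cores

/-! ### Disjoint cycles in graphs of maximum degree three -/

section Blocks
open scoped Classical

variable {V : Type*}

lemma even_dc (G : SimpleGraph V) (A : Finset V) : Even (dc G A A) := by
  induction A using Finset.strongInduction with
  | H A ih =>
    rcases A.eq_empty_or_nonempty with rfl | ⟨a, ha⟩
    · simp [dc]
    · rw [dc_erase G ha]
      exact (ih _ (Finset.erase_ssubset ha)).add (even_two_mul _)

lemma dc_pos_of_mem (G : SimpleGraph V) {A B : Finset V} (h : dc G A B = 0) {a b : V} (ha : a ∈ A)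
    (hb : b ∈ B) : ¬ G.Adj a b := by
  intro hab
  rw [dc, Finset.sum_eq_zero_iff] at h
  have := h a ha
  rw [Finset.card_eq_zero] at this
  have h2 : b ∈ nb G B a := mem_nb.2 ⟨hb, hab⟩
  simp [this] at h2

lemma dc_biUnion_left (G : SimpleGraph V) (P : Finset (Finset V))
    (hP : ∀ b ∈ P, ∀ b' ∈ P, b ≠ b' → Disjoint b b') (B : Finset V) :
    dc G (P.biUnion id) B = ∑ b ∈ P, dc G b B := by
  rw [dc, Finset.sum_biUnion]
  · rfl
  · intro b hb b' hb' hne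
    exact hP b hb b' hb' hne

/-- Partitions of `A` into blocks, each spanning at least `|b| - 1` edges (as a tree does), and of
weight at most `W`, where the weight of a block is the sum of `deg - 2` over its members. -/
structure Blk (G : SimpleGraph V) (A : Finset V) (W : ℕ) (P : Finset (Finset V)) : Prop where
  disj : ∀ b ∈ P, ∀ b' ∈ P, b ≠ b' → Disjoint b b'
  cover : P.biUnion id = A
  nonempty : ∀ b ∈ P, b.Nonempty
  tree : ∀ b ∈ P, 2 * b.card ≤ dc G b b + 2
  weight : ∀ b ∈ P, dc G b A ≤ 2 * b.card + W

lemma Blk.sub {G : SimpleGraph V} {A : Finset V} {W : ℕ} {P : Finset (Finset V)}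
    (h : Blk G A W P) {b : Finset V} (hb : b ∈ P) : b ⊆ A := by
  rw [← h.cover]
  exact Finset.subset_biUnion_of_mem id hb

/-- Singletons form such a partition. -/
lemma blk_exists (G : SimpleGraph V) (A : Finset V) (W : ℕ) (hW : 1 ≤ W)
    (h3 : ∀ a ∈ A, (nb G A a).card ≤ 3) : ∃ P, Blk G A W P := by
  refine ⟨A.image (fun a => {a}), ?_, ?_, ?_, ?_, ?_⟩
  · intro b hb b' hb' hne
    simp only [Finset.mem_image] at hb hb'
    obtain ⟨a, -, rfl⟩ := hb
    obtain ⟨a', -, rfl⟩ := hb'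
    simpa using fun h : a = a' => hne (h ▸ rfl)
  · ext x; simp
  · intro b hb
    simp only [Finset.mem_image] at hb
    obtain ⟨a, -, rfl⟩ := hb
    simp
  · intro b hb
    simp only [Finset.mem_image] at hb
    obtain ⟨a, -, rfl⟩ := hb
    simp
  · intro b hb
    simp only [Finset.mem_image] at hb
    obtain ⟨a, ha, rfl⟩ := hb
    rw [dc_singleton_left]
    have := h3 a ha
    simp; omega

/-- Two adjacent blocks whose weights add up to at most `W` can be merged, so that a partition
with fewest blocks has no two adjacent light blocks. -/
lemma Blk.merge {G : SimpleGraph V} {A : Finset V} {W : ℕ} {P : Finset (Finset V)}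
    (h : Blk G A W P) {b b' : Finset V} (hb : b ∈ P) (hb' : b' ∈ P) (hne : b ≠ b')
    (hadj : 1 ≤ dc G b b') (hw : dc G b A + dc G b' A ≤ 2 * b.card + 2 * b'.card + W) :
    ∃ P', Blk G A W P' ∧ P'.card < P.card := by
  have hd := h.disj b hb b' hb' hne
  have hb'2 : b' ∈ P.erase b := Finset.mem_erase.2 ⟨hne.symm, hb'⟩
  have hmem : ∀ x, x ∈ insert (b ∪ b') ((P.erase b).erase b') ↔
      x = b ∪ b' ∨ (x ≠ b' ∧ x ≠ b ∧ x ∈ P) := by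
    intro x; simp
  refine ⟨insert (b ∪ b') ((P.erase b).erase b'), ⟨?_, ?_, ?_, ?_, ?_⟩, ?_⟩
  · have key : ∀ x, (x ≠ b' ∧ x ≠ b ∧ x ∈ P) → Disjoint (b ∪ b') x := by
      rintro x ⟨h1, h2, h3⟩
      rw [Finset.disjoint_union_left]
      exact ⟨h.disj _ hb _ h3 h2.symm, h.disj _ hb' _ h3 h1.symm⟩
    intro x hx y hy hxy
    rw [hmem] at hx hy
    rcases hx with rfl | hx <;> rcases hy with rfl | hy
    · exact absurd rfl hxy
    · exact key _ hy
    · exact (key _ hx).symm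
    · exact h.disj _ hx.2.2 _ hy.2.2 hxy
  · rw [← h.cover]
    ext x
    simp only [Finset.mem_biUnion, hmem, id]
    constructor
    · rintro ⟨y, rfl | hy, hx⟩
      · rcases Finset.mem_union.1 hx with hx | hx
        · exact ⟨b, hb, hx⟩
        · exact ⟨b', hb', hx⟩
      · exact ⟨y, hy.2.2, hx⟩
    · rintro ⟨y, hy, hx⟩
      by_cases h1 : y = b'
      · exact ⟨_, Or.inl rfl, Finset.mem_union_right _ (h1 ▸ hx)⟩
      · by_cases h2 : y = b
        · exact ⟨_, Or.inl rfl, Finset.mem_union_left _ (h2 ▸ hx)⟩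
        · exact ⟨y, Or.inr ⟨h1, h2, hy⟩, hx⟩
  · intro x hx
    rw [hmem] at hx
    rcases hx with rfl | hx
    · exact (h.nonempty b hb).mono Finset.subset_union_left
    · exact h.nonempty x hx.2.2
  · intro x hx
    rw [hmem] at hx
    rcases hx with rfl | hx
    · rw [dc_union_self _ hd, Finset.card_union_of_disjoint hd]
      have := h.tree b hb
      have := h.tree b' hb'
      omega
    · exact h.tree x hx.2.2
  · intro x hx
    rw [hmem] at hx
    rcases hx with rfl | hx
    · rw [dc_union_left _ _ hd, Finset.card_union_of_disjoint hd]
      omega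
    · exact h.weight x hx.2.2
  · have h1 := Finset.card_insert_le (b ∪ b') ((P.erase b).erase b')
    have h2 := Finset.card_erase_add_one hb'2
    have h3 := Finset.card_erase_add_one hb
    omega

/-- Deleting at most four blocks from `A` lowers the excess `dc G A A - 2 * |A|` by at most
`8 * W + 8`: the blocks have bounded weight, and this weight counts twice the edges inside them, which are at
least those of trees. -/
lemma blk_loss {G : SimpleGraph V} {A : Finset V} {W : ℕ} {P : Finset (Finset V)}
    (h : Blk G A W P) (Q : Finset (Finset V)) (hQ : Q ⊆ P) (hQ4 : Q.card ≤ 4) :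
    dc G A A + 2 * (Q.biUnion id).card ≤
      dc G (A \ Q.biUnion id) (A \ Q.biUnion id) + 2 * A.card -
        2 * (A \ Q.biUnion id).card + 2 * (Q.biUnion id).card + (8 * W + 8) := by
  set C := Q.biUnion id with hC
  have hdQ : ∀ b ∈ Q, ∀ b' ∈ Q, b ≠ b' → Disjoint b b' :=
    fun b hb b' hb' => h.disj b (hQ hb) b' (hQ hb')
  have hCA : C ⊆ A := by
    rw [← h.cover]
    exact Finset.biUnion_subset_biUnion_of_subset_left _ hQ
  have hcard : C.card = ∑ b ∈ Q, b.card := by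
    rw [hC]
    exact Finset.card_biUnion (fun b hb b' hb' hne => hdQ b hb b' hb' hne)
  have h1 : dc G C A = ∑ b ∈ Q, dc G b A := dc_biUnion_left G Q hdQ A
  have h2 : dc G C A ≤ 2 * C.card + 4 * W := by
    rw [h1, hcard, Finset.mul_sum]
    calc _ ≤ ∑ b ∈ Q, (2 * b.card + W) := Finset.sum_le_sum fun b hb => h.weight b (hQ hb)
      _ = ∑ b ∈ Q, 2 * b.card + Q.card * W := by
        rw [Finset.sum_add_distrib]; simp
      _ ≤ _ := by gcongr
  have h3 : 2 * C.card ≤ dc G C C + 8 := by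
    have : ∑ b ∈ Q, dc G b b ≤ dc G C C := by
      rw [dc_biUnion_left G Q hdQ C]
      exact Finset.sum_le_sum fun b hb => dc_mono G subset_rfl (Finset.subset_biUnion_of_mem id hb)
    have h4 : ∑ b ∈ Q, 2 * b.card ≤ ∑ b ∈ Q, (dc G b b + 2) :=
      Finset.sum_le_sum fun b hb => h.tree b (hQ hb)
    rw [Finset.sum_add_distrib] at h4
    rw [hcard, Finset.mul_sum]
    simp only [Finset.sum_const, smul_eq_mul] at h4
    omega
  have hd : Disjoint C (A \ C) := Finset.disjoint_sdiff
  have hU : C ∪ (A \ C) = A := Finset.union_sdiff_of_subset hCA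
  have h4 : dc G A A = dc G C C + dc G (A \ C) (A \ C) + 2 * dc G C (A \ C) := by
    conv_lhs => rw [← hU]
    rw [dc_union_self _ hd]
  have h5 : dc G C A = dc G C C + dc G C (A \ C) := by
    conv_lhs => rw [← hU]
    rw [dc_union_right _ _ hd]
  have h6 : A.card = C.card + (A \ C).card := by
    rw [← Finset.card_union_of_disjoint hd, hU]
  omega

/-- The quotient estimate. If no union of at most four blocks contains a core, then two blocks span
at most one edge, light blocks are pairwise nonadjacent, and two light blocks have at most one
common heavy neighbour; this bounds the excess by `3 q²` with `q` the number of heavy blocks. -/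
lemma blk_excess {G : SimpleGraph V} {A : Finset V} {W X : ℕ} {P : Finset (Finset V)}
    (h : Blk G A W P) (hmin : ∀ P', Blk G A W P' → P.card ≤ P'.card)
    (h2 : ∀ a ∈ A, 2 ≤ (nb G A a).card) (hX : dc G A A = 2 * A.card + X)
    (hno : ∀ Q ⊆ P, Q.card ≤ 4 → ¬ HasCyc G (Q.biUnion id)) :
    ∃ q : ℕ, q * W ≤ 2 * X ∧ X ≤ 3 * q ^ 2 := by
  have hw2 : ∀ b ∈ P, 2 * b.card ≤ dc G b A := by
    intro b hb
    have : ∑ a ∈ b, 2 ≤ ∑ a ∈ b, (nb G A a).card := Finset.sum_le_sum fun a ha => h2 a (h.sub hb ha)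
    simpa [dc, mul_comm] using this
  have hcardA : A.card = ∑ b ∈ P, b.card := by
    conv_lhs => rw [← h.cover]
    exact Finset.card_biUnion (fun b hb b' hb' hne => h.disj b hb b' hb' hne)
  -- four blocks in cyclic adjacency, or fewer, span too many edges
  have htree : ∀ b ∈ P, dc G b b + 2 = 2 * b.card := by
    intro b hb
    have h1 := hno {b} (by simpa using hb) (by simp)
    have h3 := h.tree b hb
    have h4 : dc G b b < 2 * b.card := by
      by_contra hcon
      apply h1
      simpa using hasCyc_of_dc G b (h.nonempty b hb) (by omega)
    obtain ⟨r, hr⟩ := even_dc G b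
    omega
  have hone : ∀ b ∈ P, ∀ b' ∈ P, b ≠ b' → dc G b b' ≤ 1 := by
    intro b hb b' hb' hne
    by_contra hcon
    apply hno {b, b'} (by intro x hx; simp at hx; rcases hx with rfl | rfl <;> assumption)
      (Finset.card_le_two.trans (by norm_num))
    have hd := h.disj b hb b' hb' hne
    have : ({b, b'} : Finset (Finset V)).biUnion id = b ∪ b' := by simp [Finset.biUnion_insert]
    rw [this]
    refine hasCyc_of_dc G _ ((h.nonempty b hb).mono Finset.subset_union_left) ?_
    rw [dc_union_self _ hd, Finset.card_union_of_disjoint hd]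
    have := htree b hb
    have := htree b' hb'
    omega
  have hfour : ∀ b ∈ P, ∀ b' ∈ P, ∀ c ∈ P, ∀ c' ∈ P, b ≠ b' → c ≠ c' → b ≠ c → b ≠ c' → b' ≠ c →
      b' ≠ c' → 1 ≤ dc G b c → 1 ≤ dc G b c' → 1 ≤ dc G b' c → 1 ≤ dc G b' c' → False := by
    intro b hb b' hb' c hc c' hc' n1 n2 n3 n4 n5 n6 a1 a2 a3 a4
    apply hno {b, b', c, c'}
      (by intro x hx; simp at hx; rcases hx with rfl | rfl | rfl | rfl <;> assumption)
      Finset.card_le_four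
    have : ({b, b', c, c'} : Finset (Finset V)).biUnion id = (b ∪ b') ∪ (c ∪ c') := by
      simp [Finset.biUnion_insert, Finset.union_assoc]
    rw [this]
    have d1 := h.disj b hb b' hb' n1
    have d2 := h.disj c hc c' hc' n2
    have d3 : Disjoint (b ∪ b') (c ∪ c') := by
      rw [Finset.disjoint_union_left, Finset.disjoint_union_right, Finset.disjoint_union_right]
      exact ⟨⟨h.disj b hb c hc n3, h.disj b hb c' hc' n4⟩, h.disj b' hb' c hc n5,
        h.disj b' hb' c' hc' n6⟩
    refine hasCyc_of_dc G _ ((h.nonempty b hb).mono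
      (Finset.subset_union_left.trans Finset.subset_union_left)) ?_
    rw [dc_union_self _ d3, dc_union_self _ d1, dc_union_self _ d2, dc_union_left _ _ d1,
      dc_union_right _ _ d2, dc_union_right _ _ d2, Finset.card_union_of_disjoint d3,
      Finset.card_union_of_disjoint d1, Finset.card_union_of_disjoint d2]
    have := htree b hb
    have := htree b' hb'
    have := htree c hc
    have := htree c' hc'
    omega
  set Hv := P.filter (fun b => 4 * b.card + W < 2 * dc G b A) with hHv
  set Lt := P.filter (fun b => ¬ 4 * b.card + W < 2 * dc G b A) with hLt
  have hHP : ∀ b ∈ Hv, b ∈ P := fun b hb => (Finset.mem_filter.1 hb).1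
  have hLP : ∀ b ∈ Lt, b ∈ P := fun b hb => (Finset.mem_filter.1 hb).1
  have hHL : ∀ b ∈ Hv, ∀ l ∈ Lt, l ≠ b := by
    rintro b hb l hl rfl
    exact (Finset.mem_filter.1 hl).2 (Finset.mem_filter.1 hb).2
  have hLL : ∀ l ∈ Lt, ∀ l' ∈ Lt, l ≠ l' → dc G l l' = 0 := by
    intro l hl l' hl' hne
    by_contra hcon
    obtain ⟨hlP, hlw⟩ := Finset.mem_filter.1 hl
    obtain ⟨hlP', hlw'⟩ := Finset.mem_filter.1 hl'
    obtain ⟨P', hP', hlt⟩ := h.merge hlP hlP' hne (by omega) (by omega)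
    exact absurd (hmin P' hP') (by omega)
  have hsplit : ∀ f : Finset V → ℤ, ∑ b ∈ P, f b = ∑ b ∈ Hv, f b + ∑ b ∈ Lt, f b := by
    intro f
    rw [Finset.sum_filter_add_sum_filter_not]
  refine ⟨Hv.card, ?_, ?_⟩
  · have h1 : ∑ b ∈ P, dc G b A = 2 * ∑ b ∈ P, b.card + X := by
      rw [← dc_biUnion_left G P h.disj A, h.cover, hX, hcardA]
    have h3 : ∑ b ∈ Hv, W ≤ ∑ b ∈ Hv, (2 * (dc G b A - 2 * b.card)) := by
      refine Finset.sum_le_sum fun b hb => ?_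
      have := (Finset.mem_filter.1 hb).2
      omega
    have h4 : ∑ b ∈ Hv, (2 * (dc G b A - 2 * b.card)) ≤ ∑ b ∈ P, (2 * (dc G b A - 2 * b.card)) :=
      Finset.sum_le_sum_of_subset (Finset.filter_subset _ _)
    have h5 : ∑ b ∈ P, (dc G b A - 2 * b.card) + ∑ b ∈ P, 2 * b.card = ∑ b ∈ P, dc G b A := by
      rw [← Finset.sum_add_distrib]
      exact Finset.sum_congr rfl fun b hb => by have := hw2 b hb; omega
    rw [← Finset.mul_sum] at h4 h5
    rw [← Finset.mul_sum] at h4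
    simp only [Finset.sum_const, smul_eq_mul] at h3
    rw [← Finset.mul_sum] at h3
    omega
  · -- work in the integers with `a b b'` the number of edges between distinct blocks
    let a : Finset V → Finset V → ℤ := fun b b' => if b = b' then 0 else (dc G b b' : ℤ)
    have ha0 : ∀ b b', 0 ≤ a b b' := by
      intro b b'; simp only [a]; split_ifs <;> positivity
    have ha1 : ∀ b ∈ P, ∀ b' ∈ P, a b b' ≤ 1 := by
      intro b hb b' hb'
      simp only [a]
      split_ifs with hbb
      · norm_num
      · exact_mod_cast hone b hb b' hb' hbb
    have hasymm : ∀ b b', a b b' = a b' b := by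
      intro b b'
      simp only [a, eq_comm (a := b) (b := b'), dc_comm G b b']
    have hrow : ∀ b ∈ P, (dc G b A : ℤ) = 2 * b.card - 2 + ∑ b' ∈ P, a b b' := by
      intro b hb
      have h1 : dc G b A = ∑ b' ∈ P, dc G b b' := by
        rw [dc_comm, ← h.cover, dc_biUnion_left G P h.disj b]
        exact Finset.sum_congr rfl fun b' _ => dc_comm _ _ _
      have h3 : ∀ b' ∈ P, (dc G b b' : ℤ) = a b b' + if b = b' then (dc G b b : ℤ) else 0 := by
        intro b' _
        simp only [a]
        split_ifs with hbb
        · subst hbb; simp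
        · simp
      rw [h1]
      push_cast
      rw [Finset.sum_congr rfl h3, Finset.sum_add_distrib, Finset.sum_ite_eq, if_pos hb]
      have := htree b hb
      omega
    have hsum : (X : ℤ) = ∑ b ∈ P, (∑ b' ∈ P, a b b' - 2) := by
      have h1 : (dc G A A : ℤ) = ∑ b ∈ P, (dc G b A : ℤ) := by
        have := dc_biUnion_left G P h.disj A
        rw [h.cover] at this
        rw [this]; push_cast; rfl
      rw [Finset.sum_congr rfl hrow] at h1
      have h3 : (A.card : ℤ) = ∑ b ∈ P, (b.card : ℤ) := by rw [hcardA]; push_cast; rfl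
      have h4 : (dc G A A : ℤ) = 2 * A.card + X := by exact_mod_cast hX
      rw [h4, h3] at h1
      rw [Finset.mul_sum] at h1
      have h5 : ∑ b ∈ P, ((2 * b.card : ℤ) - 2 + ∑ b' ∈ P, a b b') =
          ∑ b ∈ P, (2 * b.card : ℤ) + ∑ b ∈ P, (∑ b' ∈ P, a b b' - 2) := by
        rw [← Finset.sum_add_distrib]
        exact Finset.sum_congr rfl fun b _ => by ring
      linarith
    let d : Finset V → ℤ := fun l => ∑ b ∈ Hv, a l b
    have hLrow : ∀ l ∈ Lt, ∑ b' ∈ P, a l b' = d l := by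
      intro l hl
      rw [hsplit]
      have : ∑ b ∈ Lt, a l b = 0 := by
        refine Finset.sum_eq_zero fun l' hl' => ?_
        simp only [a]
        split_ifs with hll
        · rfl
        · exact_mod_cast hLL l hl l' hl' hll
      rw [this, add_zero]
    have hHrow : ∑ b ∈ Hv, ∑ b' ∈ P, a b b' ≤ (Hv.card : ℤ) ^ 2 + ∑ l ∈ Lt, d l := by
      have h1 : ∀ b ∈ Hv, ∑ b' ∈ P, a b b' ≤ (Hv.card : ℤ) + ∑ l ∈ Lt, a l b := by
        intro b hb
        rw [hsplit]
        have : ∑ b' ∈ Hv, a b b' ≤ ∑ b' ∈ Hv, (1 : ℤ) :=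
          Finset.sum_le_sum fun b' hb' => ha1 b (hHP b hb) b' (hHP b' hb')
        simp only [Finset.sum_const, nsmul_eq_mul, mul_one] at this
        have h3 : ∑ l ∈ Lt, a b l = ∑ l ∈ Lt, a l b :=
          Finset.sum_congr rfl fun l _ => hasymm _ _
        linarith
      calc _ ≤ ∑ b ∈ Hv, ((Hv.card : ℤ) + ∑ l ∈ Lt, a l b) := Finset.sum_le_sum h1
        _ = _ := by
          rw [Finset.sum_add_distrib, Finset.sum_comm]
          simp only [Finset.sum_const, nsmul_eq_mul, d]
          ring
    have hpairs : ∑ l ∈ Lt, (d l * d l - d l) ≤ (Hv.card : ℤ) ^ 2 := by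
      have h1 : ∀ l ∈ Lt, d l * d l - d l ≤
          ∑ b ∈ Hv, ∑ c ∈ Hv, if b = c then 0 else a l b * a l c := by
        intro l hl
        have e1 : ∀ b ∈ Hv, ∑ c ∈ Hv, (if b = c then 0 else a l b * a l c) =
            a l b * d l - a l b * a l b := by
          intro b hb
          have : ∀ c ∈ Hv, (if b = c then 0 else a l b * a l c) =
              a l b * a l c - if b = c then a l b * a l c else 0 := by
            intro c _; split_ifs <;> ring
          rw [Finset.sum_congr rfl this, Finset.sum_sub_distrib, Finset.sum_ite_eq, if_pos hb,
            ← Finset.mul_sum]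
        rw [Finset.sum_congr rfl e1, Finset.sum_sub_distrib, ← Finset.sum_mul]
        have : ∑ b ∈ Hv, a l b * a l b ≤ d l := by
          refine Finset.sum_le_sum fun b hb => ?_
          have := ha0 l b
          have := ha1 l (hLP l hl) b (hHP b hb)
          nlinarith
        change _ ≤ d l * d l - _
        linarith
      refine (Finset.sum_le_sum h1).trans ?_
      rw [Finset.sum_comm]
      have h3 : ∀ b ∈ Hv, ∑ l ∈ Lt, ∑ c ∈ Hv, (if b = c then 0 else a l b * a l c) ≤ Hv.card := by
        intro b hb
        rw [Finset.sum_comm]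
        have : ∀ c ∈ Hv, ∑ l ∈ Lt, (if b = c then 0 else a l b * a l c) ≤ 1 := by
          intro c hc
          by_cases hbc : b = c
          · simp [hbc]
          · simp only [hbc, if_false]
            by_cases hex : ∃ l ∈ Lt, a l b * a l c ≠ 0
            · obtain ⟨l, hl, hne⟩ := hex
              rw [Finset.sum_eq_single l]
              · have q1 := ha0 l b
                have q2 := ha1 l (hLP l hl) b (hHP b hb)
                have q3 := ha0 l c
                have q4 := ha1 l (hLP l hl) c (hHP c hc)
                nlinarith
              · intro l' hl' hll
                by_contra hne'
                have pos : ∀ m ∈ Lt, a m b * a m c ≠ 0 → 1 ≤ dc G m b ∧ 1 ≤ dc G m c := by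
                  intro m hm hmne
                  have m1 : m ≠ b := hHL b hb m hm
                  have m2 : m ≠ c := hHL c hc m hm
                  simp only [a, m1, m2, if_false] at hmne
                  constructor
                  · by_contra hz
                    have : dc G m b = 0 := by omega
                    simp [this] at hmne
                  · by_contra hz
                    have : dc G m c = 0 := by omega
                    simp [this] at hmne
                exact hfour l (hLP l hl) l' (hLP l' hl') b (hHP b hb) c (hHP c hc) (Ne.symm hll) hbc
                  (hHL b hb l hl) (hHL c hc l hl) (hHL b hb l' hl') (hHL c hc l' hl')
                  (pos l hl hne).1 (pos l hl hne).2 (pos l' hl' hne').1 (pos l' hl' hne').2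
              · exact fun hn => absurd hl hn
            · push Not at hex
              rw [Finset.sum_eq_zero hex]; norm_num
        calc _ ≤ ∑ c ∈ Hv, (1 : ℤ) := Finset.sum_le_sum this
          _ = _ := by simp
      calc _ ≤ ∑ b ∈ Hv, (Hv.card : ℤ) := Finset.sum_le_sum h3
        _ = _ := by simp [sq]
    have hfin : (X : ℤ) ≤ 3 * (Hv.card : ℤ) ^ 2 := by
      rw [hsum, hsplit, Finset.sum_sub_distrib]
      have e1 : ∑ l ∈ Lt, (∑ b' ∈ P, a l b' - 2) = ∑ l ∈ Lt, (d l - 2) :=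
        Finset.sum_congr rfl fun l hl => by rw [hLrow l hl]
      rw [e1]
      have e2 : ∑ l ∈ Lt, (d l - 2) + ∑ l ∈ Lt, d l ≤ 2 * ∑ l ∈ Lt, (d l * d l - d l) := by
        rw [← Finset.sum_add_distrib, Finset.mul_sum]
        refine Finset.sum_le_sum fun l hl => ?_
        nlinarith [sq_nonneg (d l - 1)]
      have e3 : 0 ≤ ∑ b ∈ Hv, (2 : ℤ) := Finset.sum_nonneg fun _ _ => by norm_num
      linarith
    exact_mod_cast hfin

/-- A subgraph of maximum degree three with large excess contains many disjoint cycles: by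
`blk_excess` a few blocks of a partition with fewest blocks contain a cycle, and by `blk_loss` the
rest still has at least half of the excess. -/
lemma many_cycles (G : SimpleGraph V) (k : ℕ) : ∀ A : Finset V,
    (∀ a ∈ A, (nb G A a).card ≤ 3) → 2 * A.card + 20000 * 2 ^ k ≤ dc G A A →
    ∃ T : Fin k → Finset V, (∀ i, T i ⊆ A) ∧ (∀ i, HasCyc G (T i)) ∧
      ∀ i j, i ≠ j → Disjoint (T i) (T j) := by
  induction k with
  | zero => exact fun A _ _ => ⟨fun i => i.elim0, fun i => i.elim0, fun i => i.elim0,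
      fun i => i.elim0⟩
  | succ k ih =>
    intro A0 h30 hA0
    -- shrink to a minimal set of large excess, which has minimum degree two
    obtain ⟨A, hAA0, hAmin⟩ : ∃ A ⊆ A0, Minimal
        (fun A => 2 * A.card + 20000 * 2 ^ (k + 1) ≤ dc G A A) A := by
      obtain ⟨A, hA, hm⟩ := exists_minimal_le_of_wellFoundedLT
        (fun A : Finset V => 2 * A.card + 20000 * 2 ^ (k + 1) ≤ dc G A A) A0 hA0
      exact ⟨A, hA, hm⟩
    have h3 : ∀ a ∈ A, (nb G A a).card ≤ 3 := fun a ha =>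
      (Finset.card_le_card (nb_mono le_rfl hAA0 a)).trans (h30 a (hAA0 ha))
    have hA := hAmin.prop
    have h2 : ∀ a ∈ A, 2 ≤ (nb G A a).card := by
      intro a ha
      by_contra hcon
      have e1 := dc_erase G ha
      have e2 := Finset.card_erase_add_one ha
      have := hAmin.le_of_le (y := A.erase a) (by omega) (Finset.erase_subset _ _)
      exact Finset.notMem_erase a A (this ha)
    obtain ⟨X, hX⟩ := Nat.exists_eq_add_of_le (show 2 * A.card ≤ dc G A A by omega)
    have hXbig : 20000 * 2 ^ (k + 1) ≤ X := by omega
    have hpow : 1 ≤ 2 ^ k := Nat.one_le_two_pow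
    have hX4 : 40000 ≤ X := by rw [pow_succ] at hXbig; omega
    set W := X / 32 with hW
    have hexP := blk_exists G A W (by omega) h3
    obtain ⟨P, hP, hPmin⟩ : ∃ P, Blk G A W P ∧ ∀ P', Blk G A W P' → P.card ≤ P'.card := by
      have hne : {m | ∃ P, Blk G A W P ∧ P.card = m}.Nonempty := by
        obtain ⟨P, hP⟩ := hexP
        exact ⟨_, P, hP, rfl⟩
      obtain ⟨P, hP, hc⟩ := Nat.sInf_mem hne
      exact ⟨P, hP, fun P' hP' => hc ▸ Nat.sInf_le ⟨P', hP', rfl⟩⟩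
    have : ∃ Q ⊆ P, Q.card ≤ 4 ∧ HasCyc G (Q.biUnion id) := by
      by_contra hcon
      push Not at hcon
      obtain ⟨q, hq1, hq2⟩ := blk_excess hP hPmin h2 hX hcon
      -- `q W ≤ 2 X` and `W ≥ X / 33` give `q ≤ 66`, so `X ≤ 3 * 66 ^ 2`
      have hq : q ≤ 66 := by
        by_contra hq
        have h1 : 67 * W ≤ q * W := Nat.mul_le_mul_right _ (by omega)
        omega
      have : q ^ 2 ≤ 66 ^ 2 := Nat.pow_le_pow_left hq 2
      omega
    obtain ⟨Q, hQP, hQ4, hQc⟩ := this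
    have hloss := blk_loss hP Q hQP hQ4
    set C := Q.biUnion id with hC
    have hCA : C ⊆ A := by
      rw [← hP.cover]
      exact Finset.biUnion_subset_biUnion_of_subset_left _ hQP
    have hcc := Finset.card_sdiff_add_card_eq_card hCA
    obtain ⟨T, hT1, hT2, hT3⟩ := ih (A \ C)
      (fun a ha => (Finset.card_le_card (nb_mono le_rfl Finset.sdiff_subset a)).trans
        (h3 a (Finset.mem_sdiff.1 ha).1)) (by rw [pow_succ] at hXbig; omega)
    have hdisj : ∀ i, Disjoint C (T i) := fun i =>
      Finset.disjoint_sdiff.mono_right (hT1 i)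
    refine ⟨Fin.cons C T, ?_, ?_, ?_⟩
    · intro i
      refine Fin.cases ?_ (fun i => ?_) i
      · exact hCA.trans hAA0
      · exact (hT1 i).trans (Finset.sdiff_subset.trans hAA0)
    · intro i
      refine Fin.cases ?_ (fun i => ?_) i
      · exact hQc
      · exact hT2 i
    · intro i j
      refine Fin.cases ?_ (fun i => ?_) i <;> refine Fin.cases ?_ (fun j => ?_) j
      · intro h; exact absurd rfl h
      · intro _; exact hdisj j
      · intro _; exact (hdisj i).symm
      · intro h; exact hT3 i j (fun hij => h (by rw [hij]))

end Blocks

/-! ### The Erdős–Pósa theorem -/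

section ErdosPosa
open scoped Classical

variable {V : Type*} [Fintype V]

/-- The degree of `a`. -/
noncomputable def dg (G : SimpleGraph V) (a : V) : ℕ := (nb G Finset.univ a).card

lemma dg_eq_ncard (G : SimpleGraph V) (a : V) : dg G a = (G.neighborSet a).ncard := by
  rw [dg, ← Set.ncard_coe_finset]
  congr 1
  ext x
  simp [mem_nb]

lemma dg_eq_zero {G : SimpleGraph V} {a : V} : dg G a = 0 ↔ ∀ b, ¬ G.Adj a b := by
  simp [dg, Finset.card_eq_zero, Finset.eq_empty_iff_forall_notMem, mem_nb]

/-- A subgraph of `G` all of whose degrees are `0`, `2` or `3`. -/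
def Sub23 (G H : SimpleGraph V) : Prop :=
  H ≤ G ∧ ∀ a, dg H a = 0 ∨ dg H a = 2 ∨ dg H a = 3

lemma exists_maximal_sub23 (G : SimpleGraph V) : ∃ H, Maximal (Sub23 G) H := by
  obtain ⟨H, -, hH⟩ := (Set.toFinite {H | Sub23 G H}).exists_le_maximal (a := ⊥)
    ⟨bot_le, fun a => Or.inl (dg_eq_zero.2 (by simp))⟩
  exact ⟨H, hH⟩

/-- Absorption: a subgraph of `G` which has degree `2` only where `H` has degree `0`, and degree
`1` only where `H` has degree `2`, already lies inside a maximal `H`. -/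
lemma sub23_absorb {G H : SimpleGraph V} (hH : Maximal (Sub23 G) H) (J : SimpleGraph V)
    (hJG : J ≤ G) (hJ : ∀ a, dg J a = 0 ∨ (dg H a = 0 ∧ dg J a = 2) ∨ (dg H a = 2 ∧ dg J a = 1)) :
    J ≤ H := by
  have hP : Sub23 G (H ⊔ J) := by
    refine ⟨sup_le hH.1.1 hJG, fun a => ?_⟩
    have h1 : nb (H ⊔ J) Finset.univ a = nb H Finset.univ a ∪ nb J Finset.univ a := by
      ext x; simp [mem_nb]
    have h2 : dg (H ⊔ J) a ≤ dg H a + dg J a := by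
      rw [dg, h1]; exact Finset.card_union_le _ _
    have h3 : dg H a ≤ dg (H ⊔ J) a := Finset.card_le_card (nb_mono le_sup_left subset_rfl a)
    have h4 : dg J a ≤ dg (H ⊔ J) a := Finset.card_le_card (nb_mono le_sup_right subset_rfl a)
    have h5 := hH.1.2 a
    have h6 := hJ a
    omega
  exact le_sup_right.trans (hH.2 hP le_sup_left)

lemma dg_spanningCoe {G : SimpleGraph V} (S : G.Subgraph) (a : V) :
    dg S.spanningCoe a = (S.neighborSet a).ncard := by
  rw [dg_eq_ncard]; rfl

lemma spanningCoe_le' {V : Type*} {G : SimpleGraph V} (S : G.Subgraph) : S.spanningCoe ≤ G :=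
  fun _ _ h => S.adj_sub h

/-- A cycle in `G` avoiding `H` could be added to `H`. -/
lemma zeros_acyclic {G H : SimpleGraph V} (hH : Maximal (Sub23 G) H) :
    ¬ HasCyc G (Finset.univ.filter fun a => dg H a = 0) := by
  rintro ⟨C, hC, hcore⟩
  obtain ⟨v, c, hc, hs⟩ := cycle_of_core hcore
  have hz : ∀ x ∈ c.support, dg H x = 0 := fun x hx => by simpa using hC (hs x hx)
  have h2 : ∀ x ∈ c.support, dg c.toSubgraph.spanningCoe x = 2 := fun x hx => by
    rw [dg_spanningCoe, hc.ncard_neighborSet_toSubgraph_eq_two hx]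
  have := sub23_absorb hH c.toSubgraph.spanningCoe (spanningCoe_le' _) (fun a => by
    by_cases ha : a ∈ c.support
    · exact Or.inr (Or.inl ⟨hz a ha, h2 a ha⟩)
    · left
      rw [dg_eq_zero]
      intro b hb
      have : a ∈ c.toSubgraph.verts := c.toSubgraph.edge_vert hb
      exact ha (by simpa using this))
  have h4 : dg c.toSubgraph.spanningCoe v ≤ dg H v :=
    Finset.card_le_card (nb_mono this subset_rfl v)
  rw [h2 v (by simp), hz v (by simp)] at h4
  omega

/-- An edge of `G` between vertices of `H`-degree `2` could be added to `H`. -/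
lemma twos_induced {G H : SimpleGraph V} (hH : Maximal (Sub23 G) H) {w w' : V}
    (hw : dg H w = 2) (hw' : dg H w' = 2) (h : G.Adj w w') : H.Adj w w' := by
  have hne := h.ne
  have := sub23_absorb hH (SimpleGraph.edge w w') (by
    intro a b hab
    rw [SimpleGraph.edge_adj] at hab
    obtain ⟨⟨rfl, rfl⟩ | ⟨rfl, rfl⟩, _⟩ := hab
    · exact h
    · exact h.symm) (fun a => by
      by_cases ha : a = w
      · subst ha
        refine Or.inr (Or.inr ⟨hw, ?_⟩)
        rw [dg, Finset.card_eq_one]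
        refine ⟨w', ?_⟩
        ext x
        simp only [mem_nb, Finset.mem_univ, true_and, SimpleGraph.edge_adj, Finset.mem_singleton]
        grind
      · by_cases ha' : a = w'
        · subst ha'
          refine Or.inr (Or.inr ⟨hw', ?_⟩)
          rw [dg, Finset.card_eq_one]
          refine ⟨w, ?_⟩
          ext x
          simp only [mem_nb, Finset.mem_univ, true_and, SimpleGraph.edge_adj, Finset.mem_singleton]
          grind
        · left
          rw [dg_eq_zero]
          intro b hb
          rw [SimpleGraph.edge_adj] at hb
          grind)
  exact this ((SimpleGraph.edge_adj ..).2 ⟨Or.inl ⟨rfl, rfl⟩, hne⟩)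

/-- The part of `G` on `w` and the vertices of `H`-degree `0`. -/
def gam (G H : SimpleGraph V) (w : V) : SimpleGraph V where
  Adj a b := G.Adj a b ∧ (a = w ∨ dg H a = 0) ∧ (b = w ∨ dg H b = 0)
  symm := ⟨fun _ _ h => ⟨h.1.symm, h.2.2, h.2.1⟩⟩
  loopless := ⟨fun _ h => G.loopless.irrefl _ h.1⟩

/-- No vertex of `H`-degree `0` is linked to two vertices of `H`-degree `2` through vertices of
`H`-degree `0`, since the connecting path could be added to `H`. -/
lemma gam_unique {G H : SimpleGraph V} (hH : Maximal (Sub23 G) H) {w w' o : V}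
    (hw : dg H w = 2) (hw' : dg H w' = 2) (h : (gam G H w).Reachable o w)
    (h' : (gam G H w').Reachable o w') : w = w' := by
  by_contra hne
  let Γ : SimpleGraph V :=
    { Adj := fun a b => G.Adj a b ∧ (dg H a = 0 ∨ dg H b = 0) ∧ (a = w ∨ a = w' ∨ dg H a = 0) ∧
        (b = w ∨ b = w' ∨ dg H b = 0)
      symm := ⟨fun _ _ h => ⟨h.1.symm, h.2.1.symm, h.2.2.2, h.2.2.1⟩⟩
      loopless := ⟨fun _ h => G.loopless.irrefl _ h.1⟩ }
  have e1 : gam G H w ≤ Γ := by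
    intro a b hab
    have := hab.1.ne
    refine ⟨hab.1, ?_, ?_, ?_⟩ <;> have h1 := hab.2.1 <;> have h2 := hab.2.2 <;> grind
  have e2 : gam G H w' ≤ Γ := by
    intro a b hab
    have := hab.1.ne
    refine ⟨hab.1, ?_, ?_, ?_⟩ <;> have h1 := hab.2.1 <;> have h2 := hab.2.2 <;> grind
  have hr : Γ.Reachable w w' := (h.mono e1).symm.trans (h'.mono e2)
  obtain ⟨p, hp⟩ := hr.exists_isPath
  have hnil : ¬ p.Nil := fun hn => hne hn.eq
  have hΓ : Γ ≤ G := fun a b hab => hab.1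
  have hJG : p.toSubgraph.spanningCoe ≤ Γ := spanningCoe_le' _
  have hstart : dg p.toSubgraph.spanningCoe w = 1 := by
    rw [dg_spanningCoe, hp.neighborSet_toSubgraph_startpoint hnil, Set.ncard_singleton]
  have hend : dg p.toSubgraph.spanningCoe w' = 1 := by
    rw [dg_spanningCoe, hp.neighborSet_toSubgraph_endpoint hnil, Set.ncard_singleton]
  have hJ := sub23_absorb hH p.toSubgraph.spanningCoe (hJG.trans hΓ) (fun a => by
    by_cases haw : a = w
    · subst haw; exact Or.inr (Or.inr ⟨hw, hstart⟩)
    by_cases haw' : a = w'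
    · subst haw'; exact Or.inr (Or.inr ⟨hw', hend⟩)
    by_cases h0 : dg p.toSubgraph.spanningCoe a = 0
    · exact Or.inl h0
    right; left
    rw [dg_eq_zero] at h0
    push Not at h0
    obtain ⟨b, hb⟩ := h0
    have hz := (hJG hb).2.2.1
    refine ⟨by tauto, ?_⟩
    have : a ∈ p.toSubgraph.verts := p.toSubgraph.edge_vert hb
    have ha : a ∈ p.support := by simpa using this
    obtain ⟨i, rfl, hi⟩ := Walk.mem_support_iff_exists_getVert.1 ha
    rw [dg_spanningCoe]
    refine hp.ncard_neighborSet_toSubgraph_internal_eq_two ?_ ?_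
    · rintro rfl; exact haw (by simp)
    · refine lt_of_le_of_ne hi ?_
      rintro rfl; exact haw' (by simp))
  have : ∃ x, p.toSubgraph.spanningCoe.Adj w x := by
    by_contra hcon
    push Not at hcon
    rw [dg_eq_zero.2 hcon] at hstart
    omega
  obtain ⟨x, hx⟩ := this
  have h1 := (hJG hx).2.1
  have h2 := hJ hx
  rcases h1 with h1 | h1
  · omega
  · exact dg_eq_zero.1 h1 _ h2.symm

/-- The Erdős–Pósa theorem. For a maximal `H` with degrees `0`, `2` and `3`, the blocking set
consists of the vertices of `H`-degree `3` (few by `many_cycles`), of the vertices of `H`-degree `2`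
that close a cycle with the trees of `H`-degree `0` hanging at them (at most `k`, since these cycles
are disjoint), and of one vertex on each component of `H` that is a cycle. -/
theorem erdos_posa (k : ℕ) (G : SimpleGraph V) (hG : ¬ HasDisjointCycles G (k + 1)) :
    ∃ B : Finset V, B.card ≤ 20000 * 2 ^ (k + 1) + 2 * k ∧ ¬ HasCyc G Bᶜ := by
  obtain ⟨H, hH⟩ := exists_maximal_sub23 G
  set O := Finset.univ.filter fun a => dg H a = 0 with hO
  set W := Finset.univ.filter fun a => dg H a = 2 with hW
  set U := Finset.univ.filter fun a => dg H a = 3 with hU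
  have hcov : ∀ a, a ∈ O ∨ a ∈ W ∨ a ∈ U := by
    intro a; simpa [hO, hW, hU] using hH.1.2 a
  have mO : ∀ a, a ∈ O ↔ dg H a = 0 := fun a => by simp [hO]
  have mW : ∀ a, a ∈ W ↔ dg H a = 2 := fun a => by simp [hW]
  have mU : ∀ a, a ∈ U ↔ dg H a = 3 := fun a => by simp [hU]
  have hUcard : U.card ≤ 20000 * 2 ^ (k + 1) := by
    by_contra hcon
    push Not at hcon
    have hnb : ∀ a, nb H (W ∪ U) a = nb H Finset.univ a := by
      intro a
      ext x
      simp only [mem_nb, Finset.mem_univ, true_and, and_iff_right_iff_imp]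
      intro hax
      have hx : dg H x ≠ 0 := fun h => dg_eq_zero.1 h _ hax.symm
      have := hcov x
      rw [mO] at this
      rw [Finset.mem_union]
      tauto
    have hdis : Disjoint W U := by
      rw [Finset.disjoint_left]; intro a h1 h2
      rw [mW] at h1; rw [mU] at h2; omega
    obtain ⟨T, hT1, hT2, hT3⟩ := many_cycles H (k + 1) (W ∪ U) (fun a ha => by
        rw [hnb]
        have := hH.1.2 a
        change dg H a ≤ 3
        omega) (by
        have e1 : dc H (W ∪ U) (W ∪ U) = ∑ a ∈ W ∪ U, dg H a :=
          Finset.sum_congr rfl fun a _ => by rw [hnb]; rfl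
        rw [e1, Finset.sum_union hdis, Finset.card_union_of_disjoint hdis,
          Finset.sum_congr rfl (fun a ha => (mW a).1 ha),
          Finset.sum_congr rfl (fun a ha => (mU a).1 ha)]
        simp only [Finset.sum_const, smul_eq_mul]
        omega)
    exact hG (HasDisjointCycles.mono hH.1.1 (hasDisjointCycles_of_hasCyc T hT2 hT3))
  -- the trees hanging at the vertices of degree two
  let T : V → Finset V := fun w => Finset.univ.filter fun o =>
    o = w ∨ (dg H o = 0 ∧ (gam G H w).Reachable o w)
  set Z := W.filter fun w => HasCyc G (T w) with hZ
  have hZcard : Z.card ≤ k := by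
    by_contra hcon
    refine hG (hasDisjointCycles_of_family Z (by omega) T
      (fun w hw => (Finset.mem_filter.1 hw).2) ?_)
    intro w hw w' hw' hne
    have h1 := (mW w).1 (Finset.mem_filter.1 hw).1
    have h2 := (mW w').1 (Finset.mem_filter.1 hw').1
    rw [Finset.disjoint_left]
    intro o ho ho'
    simp only [T, Finset.mem_filter, Finset.mem_univ, true_and] at ho ho'
    rcases ho with rfl | ⟨ho0, hor⟩ <;> rcases ho' with rfl | ⟨ho0', hor'⟩
    · exact hne rfl
    · omega
    · omega
    · exact hne (gam_unique hH h1 h2 hor hor')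
  -- the components of `H` that are cycles
  let comp : H.ConnectedComponent → Finset V := fun c =>
    Finset.univ.filter fun v => H.connectedComponentMk v = c
  set I : Finset H.ConnectedComponent := Finset.univ.filter fun c => comp c ⊆ W with hI
  have hIcard : I.card ≤ k := by
    by_contra hcon
    refine hG (hasDisjointCycles_of_family I (by omega) comp ?_ ?_)
    · intro c hc
      rw [hI, Finset.mem_filter] at hc
      refine Core.hasCyc ⟨?_, fun a ha => ?_⟩
      · obtain ⟨v, hv⟩ := c.exists_rep
        refine ⟨v, ?_⟩
        simp only [comp, Finset.mem_filter, Finset.mem_univ, true_and]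
        exact hv
      · have h2 : dg H a = 2 := (mW a).1 (hc.2 ha)
        rw [← h2]
        refine Finset.card_le_card fun x hx => ?_
        rw [mem_nb] at hx ⊢
        refine ⟨?_, hH.1.1 hx.2⟩
        simp only [comp, Finset.mem_filter, Finset.mem_univ, true_and] at ha ⊢
        rw [← ha, ConnectedComponent.eq]
        exact hx.2.symm.reachable
    · intro c _ c' _ hne
      rw [Finset.disjoint_left]
      intro v hv hv'
      simp only [comp, Finset.mem_filter, Finset.mem_univ, true_and] at hv hv'
      exact hne (hv.symm.trans hv')
  set X : Finset V := I.image fun c => c.out with hX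
  have hXcard : X.card ≤ k := Finset.card_image_le.trans hIcard
  refine ⟨U ∪ Z ∪ X, ?_, ?_⟩
  · have h1 := Finset.card_union_le (U ∪ Z) X
    have h2 := Finset.card_union_le U Z
    omega
  rintro ⟨A, hA, hAne, hAcore⟩
  have hAB : ∀ a ∈ A, a ∉ U ∧ a ∉ Z ∧ a ∉ X := by
    intro a ha
    have := hA ha
    simp only [Finset.mem_compl, Finset.mem_union] at this
    tauto
  have hAOW : ∀ a ∈ A, dg H a = 0 ∨ dg H a = 2 := by
    intro a ha
    have h1 := (hAB a ha).1
    rw [mU] at h1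
    have := hH.1.2 a
    tauto
  by_cases hAO : ∃ o ∈ A, dg H o = 0
  · obtain ⟨o, hoA, ho⟩ := hAO
    -- either the trees met by the core hang at some vertex `w` of degree two, or they hang nowhere
    -- and the core restricts to one of vertices of degree zero only
    by_cases hL : ∃ o ∈ A, dg H o = 0 ∧ ∃ w, dg H w = 2 ∧ (gam G H w).Reachable o w
    · obtain ⟨o, hoA, ho, w, hw, hr⟩ := hL
      set A' := A.filter fun x => dg H x = 0 ∧ (gam G H w).Reachable x w with hA'
      have hoA' : o ∈ A' := by simp [hA', hoA, ho, hr]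
      have hstep : ∀ a ∈ A', ∀ b ∈ nb G A a, b ∈ A' ∨ b = w := by
        intro a ha b hb
        rw [mem_nb] at hb
        rw [hA', Finset.mem_filter] at ha
        rcases hAOW b hb.1 with hb0 | hb2
        · left
          rw [hA', Finset.mem_filter]
          refine ⟨hb.1, hb0, Reachable.trans (Adj.reachable ?_) ha.2.2⟩
          exact ⟨hb.2.symm, Or.inr hb0, Or.inr ha.2.1⟩
        · right
          have : (gam G H b).Reachable a b :=
            Adj.reachable (G := gam G H b) ⟨hb.2, Or.inr ha.2.1, Or.inl rfl⟩
          exact (gam_unique hH hw hb2 ha.2.2 this).symm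
      by_cases hwA : w ∈ A
      · have hwA' : w ∉ A' := by simp [hA', hw]
        have hc : HasCyc G (insert w A') := by
          refine hasCyc_of_almost G _ w (Finset.mem_insert_self _ _) ?_ ?_
          · rw [Finset.card_insert_of_notMem hwA']
            have : 0 < A'.card := Finset.card_pos.2 ⟨o, hoA'⟩
            omega
          · intro a ha haw
            have ha' : a ∈ A' := (Finset.mem_insert.1 ha).resolve_left haw
            refine (hAcore a (Finset.mem_filter.1 ha').1).trans
              (Finset.card_le_card fun b hb => ?_)
            rw [mem_nb]
            refine ⟨?_, (mem_nb.1 hb).2⟩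
            rw [Finset.mem_insert]
            exact (hstep a ha' b hb).symm
        have hwZ : w ∈ Z := by
          rw [hZ, Finset.mem_filter, mW]
          refine ⟨hw, hc.mono le_rfl fun x hx => ?_⟩
          simp only [T, Finset.mem_filter, Finset.mem_univ, true_and]
          rcases Finset.mem_insert.1 hx with rfl | hx
          · exact Or.inl rfl
          · exact Or.inr (Finset.mem_filter.1 hx).2
        exact (hAB w hwA).2.1 hwZ
      · refine zeros_acyclic hH ⟨A', fun a ha => by
          simpa using (Finset.mem_filter.1 ha).2.1, ⟨o, hoA'⟩, fun a ha => ?_⟩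
        refine (hAcore a (Finset.mem_filter.1 ha).1).trans (Finset.card_le_card fun b hb => ?_)
        rw [mem_nb]
        refine ⟨?_, (mem_nb.1 hb).2⟩
        rcases hstep a ha b hb with h | rfl
        · exact h
        · exact absurd (mem_nb.1 hb).1 hwA
    · push Not at hL
      refine zeros_acyclic hH ⟨A.filter fun x => dg H x = 0, fun a ha => by
        simpa using (Finset.mem_filter.1 ha).2, ⟨o, by simp [hoA, ho]⟩, fun a ha => ?_⟩
      rw [Finset.mem_filter] at ha
      refine (hAcore a ha.1).trans (Finset.card_le_card fun b hb => ?_)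
      rw [mem_nb] at hb ⊢
      refine ⟨Finset.mem_filter.2 ⟨hb.1, ?_⟩, hb.2⟩
      rcases hAOW b hb.1 with hb0 | hb2
      · exact hb0
      · exact absurd (Adj.reachable (G := gam G H b) ⟨hb.2, Or.inr ha.2, Or.inl rfl⟩)
          (hL a ha.1 ha.2 b hb2)
  · push Not at hAO
    have hA2 : ∀ a ∈ A, dg H a = 2 := fun a ha => (hAOW a ha).resolve_left (hAO a ha)
    have hclosed : ∀ a ∈ A, ∀ b, H.Adj a b → b ∈ A := by
      intro a ha b hab
      have h1 : nb G A a ⊆ nb H Finset.univ a := by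
        intro x hx
        rw [mem_nb] at hx ⊢
        exact ⟨Finset.mem_univ _, twos_induced hH (hA2 a ha) (hA2 x hx.1) hx.2⟩
      have h2 : nb G A a = nb H Finset.univ a := by
        refine Finset.eq_of_subset_of_card_le h1 ?_
        have := hA2 a ha
        rw [dg] at this
        rw [this]
        exact hAcore a ha
      have : b ∈ nb G A a := by rw [h2, mem_nb]; exact ⟨Finset.mem_univ _, hab⟩
      exact (mem_nb.1 this).1
    obtain ⟨a, ha⟩ := hAne
    have hreach : ∀ b, H.Reachable a b → b ∈ A := by
      rintro b ⟨p⟩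
      induction p with
      | nil => exact ha
      | cons h p ih => exact ih (hclosed _ ha _ h)
    have hsub : comp (H.connectedComponentMk a) ⊆ A := by
      intro b hb
      simp only [comp, Finset.mem_filter, Finset.mem_univ, true_and] at hb
      exact hreach b (ConnectedComponent.eq.1 hb).symm
    have hmemI : H.connectedComponentMk a ∈ I := by
      rw [hI, Finset.mem_filter]
      exact ⟨Finset.mem_univ _, fun b hb => (mW b).2 (hA2 b (hsub hb))⟩
    have hout : (H.connectedComponentMk a).out ∈ A := by
      apply hsub
      simp only [comp, Finset.mem_filter, Finset.mem_univ, true_and]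
      exact Quot.out_eq _
    exact (hAB _ hout).2.2 (Finset.mem_image.2 ⟨_, hmemI, rfl⟩)

end ErdosPosa

/-! ### Rooted forests and the structure of graphs without many disjoint cycles -/

section Forests
open scoped Classical

variable {V : Type*}

/-- The graph induced by `G` on `F` is the rooted forest with parent map `p` (roots are the fixed
points of `p`, and `p` is the identity off `F`) and height function `d`. -/
structure PF (G : SimpleGraph V) (F : Finset V) (p : V → V) (d : V → ℕ) : Prop where
  out : ∀ x, x ∉ F → p x = x
  mem : ∀ x ∈ F, p x ∈ F
  dep : ∀ x ∈ F, p x ≠ x → d (p x) < d x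
  adj : ∀ x ∈ F, ∀ y ∈ F, (G.Adj x y ↔ x ≠ y ∧ (p x = y ∨ p y = x))

/-- Every induced forest can be rooted. -/
lemma exists_PF (G : SimpleGraph V) (F : Finset V) (hF : ¬ HasCyc G F) : ∃ p d, PF G F p d := by
  induction F using Finset.strongInduction with
  | H F ih =>
    rcases F.eq_empty_or_nonempty with rfl | hne
    · exact ⟨id, fun _ => 0, by constructor <;> simp⟩
    have : ∃ a ∈ F, (nb G F a).card ≤ 1 := by
      by_contra hcon
      push Not at hcon
      exact hF (Core.hasCyc ⟨hne, fun a ha => hcon a ha⟩)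
    obtain ⟨a, ha, hc⟩ := this
    obtain ⟨p, d, h⟩ := ih (F.erase a) (Finset.erase_ssubset ha)
      (fun h => hF (h.mono le_rfl (Finset.erase_subset _ _)))
    -- the parent of the removed vertex is its neighbour, or itself if there is none
    have hb : ∃ b ∈ F, ∀ y ∈ F, G.Adj a y ↔ a ≠ y ∧ y = b := by
      rcases Nat.lt_or_ge (nb G F a).card 1 with h0 | h1
      · refine ⟨a, ha, fun y hy => ?_⟩
        have : nb G F a = ∅ := by rw [← Finset.card_eq_zero]; omega
        have hn : y ∉ nb G F a := by simp [this]
        rw [mem_nb] at hn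
        grind
      · obtain ⟨b, hb⟩ := Finset.card_eq_one.1 (le_antisymm hc h1)
        have hb' : b ∈ nb G F a := by simp [hb]
        refine ⟨b, (mem_nb.1 hb').1, fun y hy => ?_⟩
        have : y ∈ nb G F a ↔ y = b := by simp [hb]
        rw [mem_nb] at this
        constructor
        · intro hay; exact ⟨hay.ne, this.1 ⟨hy, hay⟩⟩
        · rintro ⟨_, rfl⟩; exact (mem_nb.1 hb').2
    obtain ⟨b, hbF, hb⟩ := hb
    refine ⟨Function.update p a b, Function.update d a (d b + 1), ?_, ?_, ?_, ?_⟩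
    · intro x hx
      have : x ≠ a := by rintro rfl; exact hx ha
      rw [Function.update_of_ne this]
      exact h.out x (fun h' => hx (Finset.mem_of_mem_erase h'))
    · intro x hx
      by_cases hxa : x = a
      · subst hxa; simpa using hbF
      · rw [Function.update_of_ne hxa]
        exact Finset.mem_of_mem_erase (h.mem x (Finset.mem_erase.2 ⟨hxa, hx⟩))
    · intro x hx
      by_cases hxa : x = a
      · subst hxa
        intro hne'
        simp only [Function.update_self] at hne' ⊢
        rw [Function.update_of_ne hne']
        omega
      · rw [Function.update_of_ne hxa, Function.update_of_ne hxa]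
        have hm := h.mem x (Finset.mem_erase.2 ⟨hxa, hx⟩)
        rw [Function.update_of_ne (Finset.ne_of_mem_erase hm)]
        exact h.dep x (Finset.mem_erase.2 ⟨hxa, hx⟩)
    · intro x hx y hy
      by_cases hxa : x = a
      · subst hxa
        by_cases hya : y = x
        · subst hya; simp
        · rw [hb y hy]
          have hm := Finset.ne_of_mem_erase (h.mem y (Finset.mem_erase.2 ⟨hya, hy⟩))
          simp only [Function.update_self, Function.update_of_ne hya]
          grind
      · by_cases hya : y = a
        · subst hya
          rw [G.adj_comm, hb x hx]
          have hm := Finset.ne_of_mem_erase (h.mem x (Finset.mem_erase.2 ⟨hxa, hx⟩))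
          simp only [Function.update_self, Function.update_of_ne hxa]
          grind
        · rw [Function.update_of_ne hxa, Function.update_of_ne hya]
          exact h.adj x (Finset.mem_erase.2 ⟨hxa, hx⟩) y (Finset.mem_erase.2 ⟨hya, hy⟩)

/-- If `F` with one more vertex `v` still spans a forest, then `v` has at most as many neighbours
in `F` as `F` has trees. -/
lemma PF.nb_le_roots {G : SimpleGraph V} {F : Finset V} {p : V → V} {d : V → ℕ}
    (h : PF G F p d) {v : V} (hv : v ∉ F) (hc : ¬ HasCyc G (insert v F)) :
    (nb G F v).card ≤ (F.filter fun x => p x = x).card := by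
  have h1 : 2 * (F.filter fun x => ¬ p x = x).card ≤ dc G F F := by
    have e1 : ∑ a ∈ F, ∑ b ∈ F, (if p a = b ∧ a ≠ b then 1 else 0) =
        (F.filter fun x => ¬ p x = x).card := by
      rw [Finset.card_filter]
      refine Finset.sum_congr rfl fun a ha => ?_
      rw [Finset.sum_eq_single (p a)]
      · by_cases hpa : p a = a
        · simp [hpa]
        · simp [hpa, Ne.symm hpa]
      · intro b _ hb; rw [if_neg]; exact fun h' => hb h'.1.symm
      · intro hn; exact absurd (h.mem a ha) hn
    have e2 : ∑ a ∈ F, ∑ b ∈ F, (if p b = a ∧ b ≠ a then 1 else 0) =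
        (F.filter fun x => ¬ p x = x).card := by
      rw [Finset.sum_comm, e1]
    rw [two_mul, dc_eq_sum]
    nth_rewrite 1 [← e1]
    rw [← e2, ← Finset.sum_add_distrib]
    refine Finset.sum_le_sum fun a ha => ?_
    rw [← Finset.sum_add_distrib]
    refine Finset.sum_le_sum fun b hb => ?_
    have hadj := h.adj a ha b hb
    have d1 := h.dep a ha
    have d2 := h.dep b hb
    by_cases c1 : p a = b ∧ a ≠ b
    · have c2 : ¬ (p b = a ∧ b ≠ a) := by
        rintro ⟨c2, c3⟩
        rw [c1.1] at d1; rw [c2] at d2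
        have := d1 c3; have := d2 c1.2; omega
      rw [if_pos c1, if_neg c2, if_pos (hadj.2 ⟨c1.2, Or.inl c1.1⟩)]
    · by_cases c2 : p b = a ∧ b ≠ a
      · rw [if_neg c1, if_pos c2, if_pos (hadj.2 ⟨c2.2.symm, Or.inr c2.1⟩)]
      · rw [if_neg c1, if_neg c2]; simp
  have h2 : dc G (insert v F) (insert v F) < 2 * (insert v F).card := by
    by_contra hcon
    exact hc (hasCyc_of_dc G _ (Finset.insert_nonempty _ _) (by omega))
  have h3 := dc_erase G (Finset.mem_insert_self v F)
  rw [Finset.erase_insert hv] at h3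
  rw [Finset.card_insert_of_notMem hv] at h2
  have h4 : (nb G F v).card ≤ (nb G (insert v F) v).card :=
    Finset.card_le_card (nb_mono le_rfl (Finset.subset_insert _ _) v)
  have h5 := Finset.card_filter_add_card_filter_not (s := F) (fun x => p x = x)
  omega

/-- The descendants of `y`. -/
noncomputable def desc (F : Finset V) (p : V → V) (y : V) : Finset V :=
  F.filter fun x => ∃ n : ℕ, p^[n] x = y

lemma mem_desc {F : Finset V} {p : V → V} {x y : V} :
    x ∈ desc F p y ↔ x ∈ F ∧ ∃ n : ℕ, p^[n] x = y := by simp [desc]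

lemma desc_parent {G : SimpleGraph V} {F : Finset V} {p : V → V} {d : V → ℕ} (h : PF G F p d)
    {x y : V} (hx : x ∈ desc F p y) (hxy : x ≠ y) : p x ∈ desc F p y := by
  rw [mem_desc] at *
  obtain ⟨hxF, n, hn⟩ := hx
  refine ⟨h.mem x hxF, ?_⟩
  cases n with
  | zero => exact absurd hn hxy
  | succ n => exact ⟨n, by rwa [Function.iterate_succ_apply] at hn⟩

lemma desc_child {F : Finset V} {p : V → V} {x y : V} (hx : x ∈ F) (hp : p x ∈ desc F p y) :
    x ∈ desc F p y := by
  rw [mem_desc] at *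
  obtain ⟨_, n, hn⟩ := hp
  exact ⟨hx, n + 1, by rwa [Function.iterate_succ_apply]⟩

lemma desc_adj {G : SimpleGraph V} {F : Finset V} {p : V → V} {d : V → ℕ} (h : PF G F p d)
    {x b y : V} (hx : x ∈ desc F p y) (hb : b ∈ F) (hxb : G.Adj x b) :
    b ∈ desc F p y ∨ (x = y ∧ p y = b ∧ p y ≠ y) := by
  obtain ⟨hne, h1 | h1⟩ := (h.adj x (mem_desc.1 hx).1 b hb).1 hxb
  · by_cases hxy : x = y
    · subst hxy; right; exact ⟨rfl, h1, by rw [h1]; exact hne.symm⟩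
    · left; rw [← h1]; exact desc_parent h hx hxy
  · left; exact desc_child hb (by rwa [h1])

/-- A core through `j ∉ F` that meets the descendants of `c` but avoids the parent of `c` yields
a cycle through `j` and the descendants of `c`. -/
lemma hasCyc_desc {G : SimpleGraph V} {F : Finset V} {p : V → V} {d : V → ℕ} (h : PF G F p d)
    {A : Finset V} {j c z : V} (hj : j ∉ F) (hA : A ⊆ insert j F) (hcore : Core G A)
    (hz : z ∈ A) (hzc : z ∈ desc F p c) (hpc : p c ∉ A ∨ p c = c) :
    HasCyc G (insert j (desc F p c)) := by
  set A' := A.filter fun x => x ∈ desc F p c with hA'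
  have hjA' : j ∉ A' := fun h' => hj (mem_desc.1 (Finset.mem_filter.1 h').2).1
  have : HasCyc G (insert j A') := by
    refine hasCyc_of_almost G _ j (Finset.mem_insert_self _ _) ?_ ?_
    · rw [Finset.card_insert_of_notMem hjA']
      have : 0 < A'.card := Finset.card_pos.2 ⟨z, by simp [hA', hz, hzc]⟩
      omega
    · intro a ha haj
      have ha' : a ∈ A' := (Finset.mem_insert.1 ha).resolve_left haj
      rw [hA', Finset.mem_filter] at ha'
      refine (hcore.2 a ha'.1).trans (Finset.card_le_card fun b hb => ?_)
      rw [mem_nb] at hb ⊢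
      refine ⟨?_, hb.2⟩
      rw [Finset.mem_insert]
      rcases Finset.mem_insert.1 (hA hb.1) with hbj | hbF
      · exact Or.inl hbj
      · right
        rw [hA', Finset.mem_filter]
        refine ⟨hb.1, ?_⟩
        rcases desc_adj h ha'.2 hbF hb.2 with h1 | ⟨h1, h2, h3⟩
        · exact h1
        · rcases hpc with h4 | h4
          · rw [h2] at h4; exact absurd hb.1 h4
          · exact absurd h4 h3
  refine this.mono le_rfl (Finset.insert_subset_insert _ fun x hx => ?_)
  exact (Finset.mem_filter.1 hx).2

lemma exists_root {G : SimpleGraph V} {F : Finset V} {p : V → V} {d : V → ℕ} (h : PF G F p d)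
    (z : V) (hz : z ∈ F) : ∃ r ∈ F, p r = r ∧ z ∈ desc F p r := by
  induction hn : d z using Nat.strong_induction_on generalizing z with
  | _ n ih =>
    by_cases hp : p z = z
    · exact ⟨z, hz, hp, mem_desc.2 ⟨hz, 0, rfl⟩⟩
    · obtain ⟨r, hr, hpr, hd⟩ := ih (d (p z)) (hn ▸ h.dep z hz hp) (p z) (h.mem z hz) rfl
      exact ⟨r, hr, hpr, desc_child hz hd⟩

lemma exists_child {G : SimpleGraph V} {F : Finset V} {p : V → V} {d : V → ℕ} (h : PF G F p d)
    {z y : V} (hz : z ∈ desc F p y) (hzy : z ≠ y) :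
    ∃ c ∈ F, p c = y ∧ c ≠ y ∧ z ∈ desc F p c := by
  obtain ⟨hzF, n, hn⟩ := mem_desc.1 hz
  induction n generalizing z with
  | zero => exact absurd hn hzy
  | succ n ih =>
    by_cases hp : p z = y
    · exact ⟨z, hzF, hp, hzy, mem_desc.2 ⟨hzF, 0, rfl⟩⟩
    · obtain ⟨c, hc, h1, h2, h3⟩ := ih (desc_parent h hz hzy) hp (h.mem z hzF)
        (by rwa [Function.iterate_succ_apply] at hn)
      exact ⟨c, hc, h1, h2, desc_child hzF h3⟩

/-- Erdős–Pósa duality over a forest `F`: either the outside vertices `I` lie on cycles using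
disjoint parts of `F`, or all cycles through one of them and `F` can be destroyed by deleting at
most `|I|` vertices of `F`. -/
lemma forest_packing (G : SimpleGraph V) (m : ℕ) : ∀ (F I : Finset V), ¬ HasCyc G F →
    Disjoint F I → I.card = m →
    (∃ T : V → Finset V, (∀ i ∈ I, T i ⊆ F ∧ HasCyc G (insert i (T i))) ∧
      ∀ i ∈ I, ∀ j ∈ I, i ≠ j → Disjoint (T i) (T j)) ∨
    ∃ i ∈ I, ∃ Y ⊆ F, Y.card ≤ m ∧ ¬ HasCyc G (insert i (F \ Y)) := by
  induction m with
  | zero =>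
    intro F I _ _ hI
    rw [Finset.card_eq_zero] at hI
    subst hI
    exact Or.inl ⟨fun _ => ∅, by simp, by simp⟩
  | succ m ih =>
    intro F I hF hd hI
    obtain ⟨p, d, h⟩ := exists_PF G F hF
    have hIF : ∀ j ∈ I, j ∉ F := fun j hj hjF => Finset.disjoint_left.1 hd hjF hj
    -- the core of a cycle through `j` and the forest contains `j` and something else
    have hcoreI : ∀ j ∈ I, ∀ A, A ⊆ insert j F → Core G A → j ∈ A ∧ ∃ z ∈ A, z ∈ F := by
      intro j hj A hA hc
      have hjA : j ∈ A := by
        by_contra hjA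
        refine hF ⟨A, fun x hx => ?_, hc⟩
        exact (Finset.mem_insert.1 (hA hx)).resolve_left (fun hxj => hjA (hxj ▸ hx))
      refine ⟨hjA, ?_⟩
      have h2 := hc.2 j hjA
      obtain ⟨z, hz⟩ := Finset.card_pos.1 (show 0 < (nb G A j).card by omega)
      rw [mem_nb] at hz
      exact ⟨z, hz.1, (Finset.mem_insert.1 (hA hz.1)).resolve_left hz.2.ne'⟩
    by_cases hy : (F.filter fun y => ∃ i ∈ I, HasCyc G (insert i (desc F p y))).Nonempty
    · obtain ⟨y, hy, hmax⟩ := Finset.exists_max_image _ d hy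
      obtain ⟨hyF, i, hiI, hcyc⟩ := Finset.mem_filter.1 hy
      set T := desc F p y with hT
      have hTF : T ⊆ F := Finset.filter_subset _ _
      rcases ih (F \ T) (I.erase i)
        (fun h' => hF (h'.mono le_rfl Finset.sdiff_subset))
        (hd.mono Finset.sdiff_subset (Finset.erase_subset _ _))
        (by rw [Finset.card_erase_of_mem hiI]; omega) with ⟨T', h1, h2⟩ | ⟨j, hj, Y, hY, hYc, hnc⟩
      · left
        refine ⟨Function.update T' i T, ?_, ?_⟩
        · intro j hj
          by_cases hji : j = i
          · subst hji; simpa using ⟨hTF, hcyc⟩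
          · rw [Function.update_of_ne hji]
            obtain ⟨h3, h4⟩ := h1 j (Finset.mem_erase.2 ⟨hji, hj⟩)
            exact ⟨h3.trans Finset.sdiff_subset, h4⟩
        · have hdT : ∀ j ∈ I, j ≠ i → Disjoint T (T' j) := fun j hj hji =>
            Finset.disjoint_sdiff.mono_right (h1 j (Finset.mem_erase.2 ⟨hji, hj⟩)).1
          intro a ha b hb hab
          by_cases hai : a = i
          · subst hai
            rw [Function.update_self, Function.update_of_ne hab.symm]
            exact hdT b hb hab.symm
          · rw [Function.update_of_ne hai]
            by_cases hbi : b = i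
            · subst hbi
              rw [Function.update_self]
              exact (hdT a ha hab).symm
            · rw [Function.update_of_ne hbi]
              exact h2 a (Finset.mem_erase.2 ⟨hai, ha⟩) b (Finset.mem_erase.2 ⟨hbi, hb⟩) hab
      · right
        have hjI := Finset.mem_of_mem_erase hj
        have hjF := hIF j hjI
        refine ⟨j, hjI, insert y Y, ?_, ?_, ?_⟩
        · exact Finset.insert_subset hyF (hY.trans Finset.sdiff_subset)
        · exact (Finset.card_insert_le _ _).trans (by omega)
        rintro ⟨A, hA, hcore⟩
        have hAF : A ⊆ insert j F := hA.trans (Finset.insert_subset_insert _ Finset.sdiff_subset)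
        obtain ⟨hjA, z, hzA, hzF⟩ := hcoreI j hjI A hAF hcore
        have hyA : y ∉ A := by
          intro hyA
          rcases Finset.mem_insert.1 (hA hyA) with h3 | h3
          · exact hjF (h3 ▸ hyF)
          · exact (Finset.mem_sdiff.1 h3).2 (Finset.mem_insert_self _ _)
        by_cases hzT : z ∈ T
        · obtain ⟨c, hcF, hpc, hcy, hzc⟩ := exists_child h hzT (fun h' => hyA (h' ▸ hzA))
          have hcyc' := hasCyc_desc h hjF hAF hcore hzA hzc (Or.inl (hpc ▸ hyA))
          have h3 := hmax c (Finset.mem_filter.2 ⟨hcF, j, hjI, hcyc'⟩)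
          have h4 := h.dep c hcF (by rw [hpc]; exact hcy.symm)
          rw [hpc] at h4
          omega
        · refine hnc ?_
          have hjT : j ∉ T := fun h' => hjF (hTF h')
          have : HasCyc G (A \ T) := by
            refine hasCyc_of_almost G _ j (Finset.mem_sdiff.2 ⟨hjA, hjT⟩) ?_ ?_
            · refine Finset.one_lt_card.2 ⟨j, Finset.mem_sdiff.2 ⟨hjA, hjT⟩, z,
                Finset.mem_sdiff.2 ⟨hzA, hzT⟩, ?_⟩
              rintro rfl; exact hjF hzF
            · intro a ha haj
              rw [Finset.mem_sdiff] at ha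
              have haF := (Finset.mem_insert.1 (hAF ha.1)).resolve_left haj
              refine (hcore.2 a ha.1).trans (Finset.card_le_card fun b hb => ?_)
              rw [mem_nb] at hb ⊢
              refine ⟨Finset.mem_sdiff.2 ⟨hb.1, fun hbT => ?_⟩, hb.2⟩
              rcases desc_adj h hbT haF hb.2.symm with h3 | ⟨h3, _⟩
              · exact ha.2 h3
              · exact hyA (h3 ▸ hb.1)
          refine this.mono le_rfl fun x hx => ?_
          rw [Finset.mem_sdiff] at hx
          have := hA hx.1
          simp only [Finset.mem_insert, Finset.mem_sdiff] at this ⊢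
          tauto
    · right
      rw [Finset.not_nonempty_iff_eq_empty, Finset.filter_eq_empty_iff] at hy
      obtain ⟨i, hi⟩ := Finset.card_pos.1 (show 0 < I.card by omega)
      refine ⟨i, hi, ∅, by simp, by simp, ?_⟩
      rw [Finset.sdiff_empty]
      rintro ⟨A, hA, hcore⟩
      obtain ⟨-, z, hzA, hzF⟩ := hcoreI i hi A hA hcore
      obtain ⟨r, hr, hpr, hzr⟩ := exists_root h z hzF
      exact hy hr ⟨i, hi, hasCyc_desc h (hIF i hi) hA hcore hzA hzr (Or.inr hpr)⟩

lemma exists_cover_fun [Nonempty V] (B : Finset V) (s : ℕ) (h : B.card ≤ s) :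
    ∃ f : Fin s → V, ∀ b ∈ B, ∃ i, f i = b := by
  let e := B.equivFin
  refine ⟨fun i => if hi : (i : ℕ) < B.card then (e.symm ⟨i, hi⟩ : V) else Classical.arbitrary V,
    fun b hb => ?_⟩
  refine ⟨⟨e ⟨b, hb⟩, (e ⟨b, hb⟩).2.trans_le h⟩, ?_⟩
  simp

/-- The bound on the size of the blocking set in `structure_thm`. -/
def sz (k : ℕ) : ℕ := (20000 * 2 ^ (k + 1) + 2 * k) * (k + 2)

/-- A graph without `k + 1` disjoint cycles has a blocking set of bounded size such that all but
`k` of its members individually close no cycle with the remaining forest. -/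
theorem structure_thm [Fintype V] [Nonempty V] (k : ℕ) (G : SimpleGraph V)
    (hG : ¬ HasDisjointCycles G (k + 1)) :
    ∃ (σ : Fin k → V) (ρ : Fin (sz k) → V) (F : Finset V),
      (∀ v, v ∉ F ↔ (∃ i, σ i = v) ∨ ∃ j, ρ j = v) ∧ ¬ HasCyc G F ∧
      ∀ j, (∀ i, σ i ≠ ρ j) → ¬ HasCyc G (insert (ρ j) F) := by
  obtain ⟨B0, hB0, hF0⟩ := erdos_posa k G hG
  set F := B0ᶜ with hF
  let good : V → Prop := fun v => ∃ Y ⊆ F, Y.card ≤ k + 1 ∧ ¬ HasCyc G (insert v (F \ Y))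
  set S := B0.filter fun v => ¬ good v with hS
  have hSc : S.card ≤ k := by
    by_contra hcon
    obtain ⟨I, hIS, hIc⟩ := Finset.exists_subset_card_eq (show k + 1 ≤ S.card by omega)
    have hIB : ∀ i ∈ I, i ∉ F := fun i hi => by
      rw [hF, Finset.mem_compl, not_not]; exact (Finset.mem_filter.1 (hIS hi)).1
    rcases forest_packing G (k + 1) F I hF0
      (Finset.disjoint_left.2 fun x hx hxI => hIB x hxI hx) hIc with ⟨T, h1, h2⟩ | ⟨i, hi, Y, h1⟩
    · refine hG (hasDisjointCycles_of_family I hIc.ge (fun i => insert i (T i))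
        (fun i hi => (h1 i hi).2) ?_)
      intro i hi j hj hij
      rw [Finset.disjoint_left]
      intro x hx hx'
      rcases Finset.mem_insert.1 hx with rfl | hx <;> rcases Finset.mem_insert.1 hx' with rfl | hx'
      · exact hij rfl
      · exact hIB _ hi ((h1 j hj).1 hx')
      · exact hIB _ hj ((h1 i hi).1 hx)
      · exact Finset.disjoint_left.1 (h2 i hi j hj hij) hx hx'
    · exact (Finset.mem_filter.1 (hIS hi)).2 ⟨Y, h1⟩
  have hY : ∀ v, ∃ Y ⊆ F, Y.card ≤ k + 1 ∧ (v ∈ B0 → v ∉ S → ¬ HasCyc G (insert v (F \ Y))) := by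
    intro v
    by_cases hv : good v
    · obtain ⟨Y, h1, h2, h3⟩ := hv
      exact ⟨Y, h1, h2, fun _ _ => h3⟩
    · exact ⟨∅, by simp, by simp, fun h1 h2 => absurd (Finset.mem_filter.2 ⟨h1, hv⟩) h2⟩
  choose Y hYF hYc hYg using hY
  set B := B0 ∪ B0.biUnion Y with hB
  have hBc : B.card ≤ sz k := by
    calc B.card ≤ B0.card + (B0.biUnion Y).card := Finset.card_union_le _ _
      _ ≤ B0.card + B0.card * (k + 1) := by
        gcongr; exact Finset.card_biUnion_le_card_mul _ _ _ fun v _ => hYc v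
      _ = B0.card * (k + 2) := by ring
      _ ≤ _ := by unfold sz; gcongr
  obtain ⟨σ, hσ⟩ := exists_cover_fun S k hSc
  obtain ⟨ρ, hρ⟩ := exists_cover_fun B (sz k) hBc
  let F' : Finset V := Finset.univ.filter fun v => ¬ ((∃ i, σ i = v) ∨ ∃ j, ρ j = v)
  have hF'B : ∀ v ∈ F', v ∉ B := by
    intro v hv hvB
    simp only [F', Finset.mem_filter] at hv
    exact hv.2 (Or.inr (hρ v hvB))
  have hF'F : F' ⊆ F := fun v hv => by
    rw [hF, Finset.mem_compl]
    exact fun h' => hF'B v hv (Finset.mem_union_left _ h')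
  refine ⟨σ, ρ, F', fun v => by simp only [F', Finset.mem_filter, Finset.mem_univ, true_and,
    not_not], fun h' => hF0 (h'.mono le_rfl hF'F), ?_⟩
  intro j hj hcyc
  by_cases hv : ρ j ∈ B0
  · refine hYg (ρ j) hv (fun hS' => ?_) (hcyc.mono le_rfl (Finset.insert_subset_insert _ ?_))
    · obtain ⟨i, hi⟩ := hσ _ hS'
      exact hj i hi
    · intro x hx
      refine Finset.mem_sdiff.2 ⟨hF'F hx, fun hxY => hF'B x hx ?_⟩
      exact Finset.mem_union_right _ (Finset.mem_biUnion.2 ⟨_, hv, hxY⟩)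
  · refine hF0 (hcyc.mono le_rfl (Finset.insert_subset ?_ hF'F))
    rw [hF, Finset.mem_compl]; exact hv

end Forests

/-! ### Encoding graphs with an exceptional vertex -/

section Codes
open scoped Classical

variable {V : Type*}

/-- `v` is one of the listed blocking vertices. -/
def InR {k s : ℕ} (σ : Fin k → V) (ρ : Fin s → V) (v : V) : Prop :=
  (∃ i, σ i = v) ∨ ∃ j, ρ j = v

/-- `(σ, ρ, Q, N, p, M)` encodes `G`: `N i` is the neighbourhood of `σ i`, `Q` records the edges
among the `ρ j`, `p` is the parent map of the remaining forest, and `M j` is the set of neighbours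
in the forest of `ρ j`, provided that `ρ j` is not some `σ i`. -/
structure Enc {k s : ℕ} (G : SimpleGraph V) (σ : Fin k → V) (ρ : Fin s → V)
    (Q : Fin s → Fin s → Prop) (N : Fin k → Finset V) (p : V → V) (M : Fin s → Finset V) :
    Prop where
  hN : ∀ i v, v ∈ N i ↔ G.Adj (σ i) v
  hQ : ∀ j j', Q j j' ↔ G.Adj (ρ j) (ρ j')
  hp : ∀ u v, ¬ InR σ ρ u → ¬ InR σ ρ v → (G.Adj u v ↔ u ≠ v ∧ (p u = v ∨ p v = u))
  hM : ∀ j v, v ∈ M j ↔ ¬ InR σ ρ v ∧ (∀ i, σ i ≠ ρ j) ∧ G.Adj (ρ j) v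

/-- A graph is determined by its code. -/
lemma Enc.unique {k s : ℕ} {G G' : SimpleGraph V} {σ : Fin k → V} {ρ : Fin s → V}
    {Q : Fin s → Fin s → Prop} {N : Fin k → Finset V} {p : V → V} {M : Fin s → Finset V}
    (h : Enc G σ ρ Q N p M) (h' : Enc G' σ ρ Q N p M) : G = G' := by
  have hσ : ∀ i v, G.Adj (σ i) v ↔ G'.Adj (σ i) v := fun i v => by rw [← h.hN, ← h'.hN]
  have hρ : ∀ j v, ¬ InR σ ρ v → (∀ i, σ i ≠ ρ j) → (G.Adj (ρ j) v ↔ G'.Adj (ρ j) v) := by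
    intro j v hv hj
    have h1 := h.hM j v
    have h2 := h'.hM j v
    tauto
  ext u v
  by_cases hu : ∃ i, σ i = u
  · obtain ⟨i, rfl⟩ := hu; exact hσ i v
  by_cases hv : ∃ i, σ i = v
  · obtain ⟨i, rfl⟩ := hv; rw [G.adj_comm, G'.adj_comm]; exact hσ i u
  push Not at hu hv
  by_cases hu' : ∃ j, ρ j = u
  · obtain ⟨j, rfl⟩ := hu'
    by_cases hv' : ∃ j, ρ j = v
    · obtain ⟨j', rfl⟩ := hv'
      rw [← h.hQ, ← h'.hQ]
    · refine hρ j v ?_ hu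
      rintro (⟨i, hi⟩ | hj)
      · exact hv i hi
      · exact hv' hj
  · have hu2 : ¬ InR σ ρ u := by
      rintro (⟨i, hi⟩ | hj)
      · exact hu i hi
      · exact hu' hj
    by_cases hv' : ∃ j, ρ j = v
    · obtain ⟨j, rfl⟩ := hv'
      rw [G.adj_comm, G'.adj_comm]
      exact hρ j u hu2 hv
    · have hv2 : ¬ InR σ ρ v := by
        rintro (⟨i, hi⟩ | hj)
        · exact hv i hi
        · exact hv' hj
      rw [h.hp u v hu2 hv2, h'.hp u v hu2 hv2]

variable [Fintype V]

/-- The number of fixed points of `p`. -/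
noncomputable def fx (p : V → V) : ℕ := (Finset.univ.filter fun u => p u = u).card

/-- The number of preimages of `v` under `p`. -/
noncomputable def cnt (p : V → V) (v : V) : ℕ := (Finset.univ.filter fun u => p u = v).card

/-- The size of `N` deviates from half by more than the proportion `ε`. -/
def Dev (ε : ℝ) (N : Finset V) : Prop :=
  (N.card : ℝ) < (1 / 2 - ε) * Fintype.card V ∨ (1 / 2 + ε) * Fintype.card V < (N.card : ℝ)

/-- The properties of codes of graphs with an exceptional vertex of large degree. No `M j` has more
elements than `p` has fixed points, and the exceptional neighbourhood is a deviating `N i`, or the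
forest has many trees, or some vertex has many children. -/
def CP {k s : ℕ} (ε t : ℝ) (N : Fin k → Finset V) (p : V → V) (M : Fin s → Finset V) : Prop :=
  (∀ j, (M j).card ≤ fx p) ∧ ((∃ i, Dev ε (N i)) ∨ t < fx p ∨ ∃ v, t < cnt p v)

/-- The code of a graph with an exceptional vertex `v`. If `v` is some `σ i`, then `N i` deviates;
if it is another blocking vertex, its neighbours in the forest lie in different trees; and if it is
in the forest, then nearly all its neighbours are its children. -/
lemma exists_code [Nonempty V] (k : ℕ) (ε L : ℝ) (G : SimpleGraph V)
    (hG : ¬ HasDisjointCycles G (k + 1)) (v : V) (hL : L < dg G v)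
    (hv : (dg G v : ℝ) < (1 / 2 - ε) * Fintype.card V ∨
      (1 / 2 + ε) * Fintype.card V < (dg G v : ℝ)) :
    ∃ (σ : Fin k → V) (ρ : Fin (sz k) → V) (Q : Fin (sz k) → Fin (sz k) → Prop)
      (N : Fin k → Finset V) (p : V → V) (M : Fin (sz k) → Finset V),
      Enc G σ ρ Q N p M ∧ CP ε (L - (k + sz k + 1 : ℕ)) N p M := by
  obtain ⟨σ, ρ, F, hF, hFc, hρ⟩ := structure_thm k G hG
  obtain ⟨p, d, h⟩ := exists_PF G F hFc
  have hFR : ∀ v, v ∈ F ↔ ¬ InR σ ρ v := fun v => by rw [InR, ← hF, not_not]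
  let N : Fin k → Finset V := fun i => nb G Finset.univ (σ i)
  let M : Fin (sz k) → Finset V := fun j => if (∀ i, σ i ≠ ρ j) then nb G F (ρ j) else ∅
  have hM : ∀ j, (M j).card ≤ fx p := by
    intro j
    by_cases hj : ∀ i, σ i ≠ ρ j
    · simp only [M, if_pos hj]
      refine (h.nb_le_roots ((hF _).2 (Or.inr ⟨j, rfl⟩)) (hρ j hj)).trans ?_
      exact Finset.card_le_card (Finset.filter_subset_filter _ (Finset.subset_univ _))
    · simp only [M, if_neg hj]; simp
  refine ⟨σ, ρ, fun j j' => G.Adj (ρ j) (ρ j'), N, p, M, ⟨?_, ?_, ?_, ?_⟩, hM, ?_⟩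
  · intro i v; simp [N, mem_nb]
  · intro j j'; rfl
  · intro u v hu hv
    exact h.adj u ((hFR u).2 hu) v ((hFR v).2 hv)
  · intro j v
    by_cases hj : ∀ i, σ i ≠ ρ j
    · simp only [M, if_pos hj, mem_nb, hFR]; tauto
    · simp only [M, if_neg hj]; simp only [Finset.notMem_empty, false_iff]; tauto
  -- all but few neighbours of `v` lie in the forest
  have hRc : (Fᶜ).card ≤ k + sz k := by
    have : Fᶜ ⊆ Finset.univ.image σ ∪ Finset.univ.image ρ := by
      intro x hx
      rw [Finset.mem_compl, hF] at hx
      simpa using hx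
    refine (Finset.card_le_card this).trans ((Finset.card_union_le _ _).trans ?_)
    gcongr
    · exact Finset.card_image_le.trans (by simp)
    · exact Finset.card_image_le.trans (by simp)
  have hdeg : dg G v ≤ (nb G F v).card + (k + sz k) := by
    have : nb G Finset.univ v ⊆ nb G F v ∪ Fᶜ := by
      intro x hx
      rw [mem_nb] at hx
      rw [Finset.mem_union, mem_nb, Finset.mem_compl]
      tauto
    exact (Finset.card_le_card this).trans ((Finset.card_union_le _ _).trans (by gcongr))
  have hdeg' : (dg G v : ℝ) ≤ (nb G F v).card + ((k : ℝ) + sz k) := by exact_mod_cast hdeg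
  by_cases h1 : ∃ i, σ i = v
  · obtain ⟨i, rfl⟩ := h1
    exact Or.inl ⟨i, hv⟩
  right
  by_cases h2 : ∃ j, ρ j = v
  · left
    obtain ⟨j, rfl⟩ := h2
    push Not at h1
    have h3 := hM j
    simp only [M, if_pos h1] at h3
    have h3' : ((nb G F (ρ j)).card : ℝ) ≤ fx p := by exact_mod_cast h3
    push_cast
    linarith
  · right
    have hvF : v ∈ F := by rw [hFR, InR]; tauto
    refine ⟨v, ?_⟩
    have h3 : (nb G F v).card ≤ cnt p v + 1 := by
      have : nb G F v ⊆ (Finset.univ.filter fun u => p u = v) ∪ {p v} := by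
        intro x hx
        rw [mem_nb] at hx
        have := ((h.adj v hvF x hx.1).1 hx.2).2
        simp only [Finset.mem_union, Finset.mem_filter, Finset.mem_univ, true_and,
          Finset.mem_singleton]
        tauto
      exact (Finset.card_le_card this).trans ((Finset.card_union_le _ _).trans (by simp [cnt]))
    have h3' : ((nb G F v).card : ℝ) ≤ cnt p v + 1 := by exact_mod_cast h3
    push_cast
    linarith

/-! ### Weighted enumeration of codes -/

lemma sum_prod_fun (g : V → V → ℝ) : ∑ p : V → V, ∏ u, g u (p u) = ∏ u, ∑ a, g u a := by
  rw [Finset.prod_univ_sum, Fintype.piFinset_univ]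

/-- The generating function of parent maps by fixed points. -/
lemma sum_pow_fx (y : ℝ) (hy : 0 ≤ y) :
    ∑ p : V → V, y ^ fx p ≤ ((Fintype.card V : ℝ) + y) ^ Fintype.card V := by
  have e : ∀ p : V → V, y ^ fx p = ∏ u, (if p u = u then y else 1) := by
    intro p; rw [Finset.prod_ite]; simp [fx]
  simp_rw [e]
  rw [sum_prod_fun (fun u a => if a = u then y else 1), ← Finset.card_univ, ← Finset.prod_const]
  refine Finset.prod_le_prod (fun u _ => Finset.sum_nonneg fun a _ => by positivity) fun u _ => ?_
  calc ∑ a, (if a = u then y else (1 : ℝ)) ≤ ∑ a, (1 + if a = u then y else 0) :=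
        Finset.sum_le_sum fun a _ => by split_ifs <;> linarith
    _ = _ := by rw [Finset.sum_add_distrib]; simp

/-- The generating function of parent maps by fixed points and by preimages of `v`. The two
statistics interact only in the value of `p` at `v`, whence the last factor. -/
lemma sum_pow_fx_cnt (y z : ℝ) (hy : 0 ≤ y) (hz : 0 ≤ z) (v : V) :
    ∑ p : V → V, y ^ fx p * z ^ cnt p v ≤
      ((Fintype.card V : ℝ) + (y + z)) ^ Fintype.card V * (1 + y * z) := by
  have e : ∀ p : V → V, y ^ fx p * z ^ cnt p v =
      ∏ u, ((if p u = u then y else 1) * (if p u = v then z else 1)) := by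
    intro p; rw [Finset.prod_mul_distrib, Finset.prod_ite, Finset.prod_ite]; simp [fx, cnt]
  have hn : (1 : ℝ) ≤ Fintype.card V := by
    have : 0 < Fintype.card V := Fintype.card_pos_iff.2 ⟨v⟩
    exact_mod_cast this
  simp_rw [e]
  rw [sum_prod_fun (fun u a => (if a = u then y else 1) * (if a = v then z else 1))]
  have hyz : 0 ≤ y * z := by positivity
  have e2 : ((Fintype.card V : ℝ) + (y + z)) ^ Fintype.card V * (1 + y * z) =
      ∏ u : V, (((Fintype.card V : ℝ) + (y + z)) * if u = v then 1 + y * z else 1) := by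
    rw [Finset.prod_mul_distrib]; simp
  rw [e2]
  refine Finset.prod_le_prod (fun u _ => Finset.sum_nonneg fun a _ => by positivity) fun u _ => ?_
  by_cases huv : u = v
  · subst huv
    rw [if_pos rfl]
    calc _ ≤ ∑ a, (1 + if a = u then y * z else 0) :=
          Finset.sum_le_sum fun a _ => by split_ifs <;> linarith
      _ = (Fintype.card V : ℝ) + y * z := by rw [Finset.sum_add_distrib]; simp
      _ ≤ _ := by nlinarith [mul_nonneg (sub_nonneg.2 hn) hyz, mul_nonneg (add_nonneg hy hz) hyz]
  · rw [if_neg huv, mul_one]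
    calc _ ≤ ∑ a, (1 + ((if a = u then y else 0) + (if a = v then z else 0))) :=
          Finset.sum_le_sum fun a _ => by
            split_ifs with h1 h2 <;> first | linarith | exact absurd (h1.symm.trans h2) huv
      _ = _ := by simp [Finset.sum_add_distrib]

lemma sum_pow_card (x : ℝ) : ∑ N : Finset V, x ^ N.card = (1 + x) ^ Fintype.card V := by
  have := Fintype.sum_pow_mul_eq_add_pow V x 1
  simp only [one_pow, mul_one] at this
  rw [this, add_comm]

lemma sum_prod_sets (s : ℕ) (x : ℝ) :
    ∑ M : Fin s → Finset V, ∏ j, x ^ (M j).card = ((1 + x) ^ Fintype.card V) ^ s := by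
  have : ∑ M : Fin s → Finset V, ∏ j, x ^ (M j).card = ∏ _j : Fin s, ∑ N : Finset V, x ^ N.card := by
    rw [Finset.prod_univ_sum, Fintype.piFinset_univ]
  rw [this, sum_pow_card]; simp

/-- Chernoff's bound for the sizes of subsets. -/
lemma dev_card (ε : ℝ) (hε : 0 < ε) :
    (((Finset.univ : Finset (Finset V)).filter fun N => Dev ε N).card : ℝ) ≤
      2 ^ Fintype.card V * (2 * Real.exp (-(2 * ε ^ 2 * Fintype.card V))) := by
  set n := Fintype.card V with hn
  have hS : ∀ a : ℝ, ∑ N : Finset V, Real.exp (a * (2 * N.card - n)) ≤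
      2 ^ n * Real.exp (n * (a ^ 2 / 2)) := by
    intro a
    have h1 := Fintype.sum_pow_mul_eq_add_pow V (Real.exp a) (Real.exp (-a))
    have h2 : ∀ N : Finset V, Real.exp (a * (2 * N.card - n)) =
        Real.exp a ^ N.card * Real.exp (-a) ^ (Fintype.card V - N.card) := by
      intro N
      rw [← Real.exp_nat_mul, ← Real.exp_nat_mul, ← Real.exp_add, Nat.cast_sub (Finset.card_le_univ N)]
      congr 1; ring
    simp_rw [h2]
    rw [h1, Real.exp_nat_mul, ← mul_pow]
    refine pow_le_pow_left₀ (by positivity) ?_ _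
    have := Real.cosh_le_exp_half_sq a
    rw [Real.cosh_eq] at this
    linarith
  have key : (((Finset.univ : Finset (Finset V)).filter fun N => Dev ε N).card : ℝ) *
      Real.exp (4 * ε ^ 2 * n) ≤ 2 * (2 ^ n * Real.exp (n * ((2 * ε) ^ 2 / 2))) := by
    calc _ = ∑ N ∈ (Finset.univ : Finset (Finset V)).filter fun N => Dev ε N,
          Real.exp (4 * ε ^ 2 * n) := by simp
      _ ≤ ∑ N ∈ (Finset.univ : Finset (Finset V)).filter fun N => Dev ε N,
          (Real.exp ((2 * ε) * (2 * N.card - n)) + Real.exp ((-(2 * ε)) * (2 * N.card - n))) := by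
        refine Finset.sum_le_sum fun N hN => ?_
        have hD : Dev ε N := (Finset.mem_filter.1 hN).2
        have p1 := Real.exp_pos ((2 * ε) * (2 * N.card - n))
        have p2 := Real.exp_pos ((-(2 * ε)) * (2 * N.card - n))
        rcases hD with hD | hD
        · have : Real.exp (4 * ε ^ 2 * n) ≤ Real.exp ((-(2 * ε)) * (2 * N.card - n)) := by
            rw [Real.exp_le_exp]; nlinarith
          linarith
        · have : Real.exp (4 * ε ^ 2 * n) ≤ Real.exp ((2 * ε) * (2 * N.card - n)) := by
            rw [Real.exp_le_exp]; nlinarith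
          linarith
      _ ≤ ∑ N : Finset V,
          (Real.exp ((2 * ε) * (2 * N.card - n)) + Real.exp ((-(2 * ε)) * (2 * N.card - n))) :=
        Finset.sum_le_sum_of_subset_of_nonneg (Finset.filter_subset _ _)
          (fun _ _ _ => by positivity)
      _ ≤ _ := by
        rw [Finset.sum_add_distrib]
        have h1 := hS (2 * ε)
        have h2 := hS (-(2 * ε))
        rw [neg_sq] at h2
        linarith
  have e1 : Real.exp (n * ((2 * ε) ^ 2 / 2)) =
      Real.exp (-(2 * ε ^ 2 * n)) * Real.exp (4 * ε ^ 2 * n) := by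
    rw [← Real.exp_add]; congr 1; ring
  rw [e1] at key
  have hp := Real.exp_pos (4 * ε ^ 2 * n)
  refine le_of_mul_le_mul_right ?_ hp
  linarith

/-- A bound for the number of `k`-tuples of sets, counted once for each deviating member. -/
lemma dev_tuples (k : ℕ) (ε : ℝ) (hε : 0 < ε) :
    ∑ N : Fin k → Finset V, ∑ i, (if Dev ε (N i) then (1 : ℝ) else 0) ≤
      k * (2 ^ (Fintype.card V * k) * (2 * Real.exp (-(2 * ε ^ 2 * Fintype.card V)))) := by
  rw [Finset.sum_comm]
  have : ∀ i : Fin k, ∑ N : Fin k → Finset V, (if Dev ε (N i) then (1 : ℝ) else 0) ≤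
      2 ^ (Fintype.card V * k) * (2 * Real.exp (-(2 * ε ^ 2 * Fintype.card V))) := by
    intro i
    have e : ∀ N : Fin k → Finset V, (if Dev ε (N i) then (1 : ℝ) else 0) =
        ∏ i', (if i' = i then (if Dev ε (N i') then (1 : ℝ) else 0) else 1) := by
      intro N; simp
    simp_rw [e]
    have e2 := Finset.prod_univ_sum (fun _ : Fin k => (Finset.univ : Finset (Finset V)))
      (fun i' N => if i' = i then (if Dev ε N then (1 : ℝ) else 0) else 1)
    rw [Fintype.piFinset_univ] at e2
    rw [← e2]
    have e3 : (2 : ℝ) ^ (Fintype.card V * k) * (2 * Real.exp (-(2 * ε ^ 2 * Fintype.card V))) =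
        ∏ i' : Fin k, (2 ^ Fintype.card V *
          if i' = i then 2 * Real.exp (-(2 * ε ^ 2 * Fintype.card V)) else 1) := by
      rw [Finset.prod_mul_distrib]; simp [pow_mul]
    rw [e3]
    refine Finset.prod_le_prod (fun i' _ => Finset.sum_nonneg fun N _ => by positivity)
      fun i' _ => ?_
    by_cases hi : i' = i
    · simp only [hi, if_true]
      have := dev_card (V := V) ε hε
      rw [Finset.card_filter] at this
      push_cast at this
      exact this
    · simp [hi]
  calc _ ≤ ∑ _i : Fin k, 2 ^ (Fintype.card V * k) *
        (2 * Real.exp (-(2 * ε ^ 2 * Fintype.card V))) := Finset.sum_le_sum fun i _ => this i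
    _ = _ := by simp

end Codes

/-! ### The number of codes -/

section CodeCount
open scoped Classical

variable {V : Type*} [Fintype V]

/-- Each code weighs at least `1` in the sum on the right, which then factorises. -/
lemma card_CP_le [Nonempty V] (k s : ℕ) (ε t x z : ℝ) (hε : 0 < ε) (hx : 0 < x) (hx1 : x ≤ 1)
    (hz : 1 ≤ z) :
    ((Finset.univ.filter fun c : (Fin k → Finset V) × (V → V) × (Fin s → Finset V) =>
        CP ε t c.1 c.2.1 c.2.2).card : ℝ) ≤
      2 ^ (Fintype.card V * k) * ((1 + x) ^ Fintype.card V) ^ s *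
      (k * (2 * Real.exp (-(2 * ε ^ 2 * Fintype.card V))) *
          (Fintype.card V + (x ^ s)⁻¹) ^ Fintype.card V +
        z ^ (-t) * ((Fintype.card V + 2 * ((x ^ s)⁻¹ * z)) ^ Fintype.card V *
          (1 + Fintype.card V * (1 + (x ^ s)⁻¹ * z)))) := by
  set n := Fintype.card V with hn
  set y := (x ^ s)⁻¹ with hy
  have hxs : 0 < x ^ s := by positivity
  have hy1 : 1 ≤ y := (one_le_inv₀ hxs).2 (pow_le_one₀ hx.le hx1)
  have hy0 : 0 < y := by positivity
  have hz0 : 0 < z := by linarith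
  let X : (Fin s → Finset V) → ℝ := fun M => ∏ j, x ^ (M j).card
  let D : (Fin k → Finset V) → ℝ := fun N => ∑ i, (if Dev ε (N i) then (1 : ℝ) else 0)
  let P2 : (V → V) → ℝ := fun p => (y * z) ^ fx p + ∑ v, y ^ fx p * z ^ cnt p v
  let w : (Fin k → Finset V) × (V → V) × (Fin s → Finset V) → ℝ := fun c =>
    X c.2.2 * (D c.1 * y ^ fx c.2.1 + z ^ (-t) * P2 c.2.1)
  have hD0 : ∀ N, 0 ≤ D N := fun N => Finset.sum_nonneg fun i _ => by positivity
  have hS0 : ∀ p : V → V, 0 ≤ ∑ v, y ^ fx p * z ^ cnt p v :=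
    fun p => Finset.sum_nonneg fun v _ => by positivity
  have hw0 : ∀ c, 0 ≤ w c := by
    intro c
    have h1 := hD0 c.1
    have h2 := hS0 c.2.1
    have h3 : 0 ≤ X c.2.2 := Finset.prod_nonneg fun j _ => by positivity
    simp only [w, P2]
    positivity
  have hzt : ∀ m : ℕ, t < m → 1 ≤ z ^ (-t) * z ^ m := by
    intro m hm
    rw [← Real.rpow_natCast z m, ← Real.rpow_add hz0]
    exact Real.one_le_rpow hz (by linarith)
  have hw1 : ∀ c, CP ε t c.1 c.2.1 c.2.2 → 1 ≤ w c := by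
    rintro ⟨N, p, M⟩ ⟨hM, hc⟩
    simp only at hM hc
    have hXy : 1 ≤ X M * y ^ fx p := by
      have h1 : x ^ (fx p * s) ≤ X M := by
        calc x ^ (fx p * s) = ∏ _j : Fin s, x ^ fx p := by simp [pow_mul]
          _ ≤ _ := Finset.prod_le_prod (fun _ _ => by positivity)
            fun j _ => pow_le_pow_of_le_one hx.le hx1 (hM j)
      have h2 : y ^ fx p = (x ^ (fx p * s))⁻¹ := by
        rw [hy, inv_pow, ← pow_mul, mul_comm]
      rw [h2, ← div_eq_mul_inv, one_le_div (by positivity)]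
      exact h1
    have hX0 : 0 ≤ X M := Finset.prod_nonneg fun j _ => by positivity
    have hb : 1 ≤ D N + z ^ (-t) * (z ^ fx p + ∑ v, z ^ cnt p v) := by
      have a1 := hD0 N
      have a2 : 0 ≤ z ^ (-t) * z ^ fx p := by positivity
      have a3 : 0 ≤ z ^ (-t) * ∑ v, z ^ cnt p v :=
        mul_nonneg (by positivity) (Finset.sum_nonneg fun v _ => by positivity)
      rw [mul_add]
      rcases hc with ⟨i, hi⟩ | hf | ⟨v, hv⟩
      · have : 1 ≤ D N := by
          have := Finset.single_le_sum (f := fun i => if Dev ε (N i) then (1 : ℝ) else 0)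
            (fun i _ => by positivity) (Finset.mem_univ i)
          simpa [D, hi] using this
        linarith
      · have := hzt _ hf
        linarith
      · have h1 : z ^ cnt p v ≤ ∑ v, z ^ cnt p v :=
          Finset.single_le_sum (f := fun v => z ^ cnt p v) (fun i _ => by positivity)
            (Finset.mem_univ v)
        have h2 := hzt _ hv
        have h3 : z ^ (-t) * z ^ cnt p v ≤ z ^ (-t) * ∑ v, z ^ cnt p v :=
          mul_le_mul_of_nonneg_left h1 (by positivity)
        linarith
    have e : w (N, p, M) = (X M * y ^ fx p) * (D N + z ^ (-t) * (z ^ fx p + ∑ v, z ^ cnt p v)) := by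
      simp only [w, P2, mul_pow, ← Finset.mul_sum]
      ring
    rw [e]
    nlinarith
  have h1 : ((Finset.univ.filter fun c : (Fin k → Finset V) × (V → V) × (Fin s → Finset V) =>
        CP ε t c.1 c.2.1 c.2.2).card : ℝ) ≤ ∑ c, w c := by
    calc _ = ∑ c ∈ Finset.univ.filter fun c : (Fin k → Finset V) × (V → V) × (Fin s → Finset V) =>
        CP ε t c.1 c.2.1 c.2.2, (1 : ℝ) := by simp
      _ ≤ ∑ c ∈ Finset.univ.filter fun c : (Fin k → Finset V) × (V → V) × (Fin s → Finset V) =>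
        CP ε t c.1 c.2.1 c.2.2, w c :=
        Finset.sum_le_sum fun c hc => hw1 c (Finset.mem_filter.1 hc).2
      _ ≤ _ := Finset.sum_le_sum_of_subset_of_nonneg (Finset.filter_subset _ _)
          fun c _ _ => hw0 c
  have h2 : ∑ c, w c = (∑ M, X M) * ((∑ N, D N) * (∑ p : V → V, y ^ fx p) +
      2 ^ (n * k) * (z ^ (-t) * ∑ p, P2 p)) := by
    have hcard : ((Finset.univ : Finset (Fin k → Finset V)).card : ℝ) = 2 ^ (n * k) := by
      simp [hn, pow_mul]
    simp only [w]
    rw [Fintype.sum_prod_type]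
    simp_rw [Fintype.sum_prod_type, ← Finset.sum_mul, ← Finset.mul_sum, Finset.sum_add_distrib,
      ← Finset.mul_sum, ← Finset.sum_mul]
    rw [Finset.sum_const, nsmul_eq_mul, hcard]
    ring
  have h3 : ∑ M, X M = ((1 + x) ^ n) ^ s := sum_prod_sets s x
  have h4 : ∑ N, D N ≤ k * (2 ^ (n * k) * (2 * Real.exp (-(2 * ε ^ 2 * n)))) := dev_tuples k ε hε
  have h5 : ∑ p : V → V, y ^ fx p ≤ (n + y) ^ n := sum_pow_fx y hy0.le
  have hyz : y + z ≤ 2 * (y * z) := by nlinarith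
  have hyz0 : 0 ≤ y * z := by positivity
  have h6 : ∑ p, P2 p ≤ (n + 2 * (y * z)) ^ n * (1 + n * (1 + y * z)) := by
    simp only [P2]
    rw [Finset.sum_add_distrib, Finset.sum_comm]
    have a1 : ∑ p : V → V, (y * z) ^ fx p ≤ (n + 2 * (y * z)) ^ n :=
      (sum_pow_fx (y * z) hyz0).trans (pow_le_pow_left₀ (by positivity) (by linarith) _)
    have a2 : ∑ v, ∑ p : V → V, y ^ fx p * z ^ cnt p v ≤
        ∑ _v : V, (n + 2 * (y * z)) ^ n * (1 + y * z) := by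
      refine Finset.sum_le_sum fun v _ => (sum_pow_fx_cnt y z hy0.le hz0.le v).trans ?_
      gcongr
    rw [Finset.sum_const, nsmul_eq_mul, Finset.card_univ, ← hn] at a2
    linarith
  refine h1.trans ?_
  rw [h2, h3]
  have h7 : (∑ N, D N) * (∑ p : V → V, y ^ fx p) ≤
      (k * (2 ^ (n * k) * (2 * Real.exp (-(2 * ε ^ 2 * n))))) * (n + y) ^ n :=
    mul_le_mul h4 h5 (Finset.sum_nonneg fun p _ => by positivity) (by positivity)
  have h8 : 2 ^ (n * k) * (z ^ (-t) * ∑ p, P2 p) ≤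
      2 ^ (n * k) * (z ^ (-t) * ((n + 2 * (y * z)) ^ n * (1 + n * (1 + y * z)))) := by
    gcongr
  calc _ ≤ ((1 + x) ^ n) ^ s * ((k * (2 ^ (n * k) * (2 * Real.exp (-(2 * ε ^ 2 * n))))) *
        (n + y) ^ n + 2 ^ (n * k) * (z ^ (-t) * ((n + 2 * (y * z)) ^ n *
          (1 + n * (1 + y * z))))) := by gcongr
    _ = _ := by ring

/-- The number of graphs with an exceptional vertex of degree above `L` is at most the number of
their codes: the first two factors count `(σ, ρ)` and `Q`, the rest is `card_CP_le`. -/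
theorem card_bad_le [Nonempty V] (k : ℕ) (ε L x z : ℝ) (hε : 0 < ε) (hx : 0 < x) (hx1 : x ≤ 1)
    (hz : 1 ≤ z) :
    (Nat.card {G : SimpleGraph V // ¬ HasDisjointCycles G (k + 1) ∧ ∃ v, L < (dg G v : ℝ) ∧
      ((dg G v : ℝ) < (1 / 2 - ε) * Fintype.card V ∨
        (1 / 2 + ε) * Fintype.card V < (dg G v : ℝ))} : ℝ) ≤
      (Fintype.card V) ^ (k + sz k) * 2 ^ (sz k * sz k) *
      (2 ^ (Fintype.card V * k) * ((1 + x) ^ Fintype.card V) ^ sz k *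
      (k * (2 * Real.exp (-(2 * ε ^ 2 * Fintype.card V))) *
          (Fintype.card V + (x ^ sz k)⁻¹) ^ Fintype.card V +
        z ^ (-(L - (k + sz k + 1 : ℕ))) *
        ((Fintype.card V + 2 * ((x ^ sz k)⁻¹ * z)) ^ Fintype.card V *
          (1 + Fintype.card V * (1 + (x ^ sz k)⁻¹ * z))))) := by
  refine le_trans ?_ (mul_le_mul_of_nonneg_left
    (card_CP_le (V := V) k (sz k) ε (L - (k + sz k + 1 : ℕ)) x z hε hx hx1 hz) (by positivity))
  set P : ((Fin k → Finset V) × (V → V) × (Fin (sz k) → Finset V)) → Prop :=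
    fun c => CP ε (L - (k + sz k + 1 : ℕ)) c.1 c.2.1 c.2.2 with hP
  have hcode : ∀ G : {G : SimpleGraph V // ¬ HasDisjointCycles G (k + 1) ∧
      ∃ v, L < (dg G v : ℝ) ∧ ((dg G v : ℝ) < (1 / 2 - ε) * Fintype.card V ∨
        (1 / 2 + ε) * Fintype.card V < (dg G v : ℝ))},
      ∃ (σ : Fin k → V) (ρ : Fin (sz k) → V) (Q : Fin (sz k) → Fin (sz k) → Prop)
        (N : Fin k → Finset V) (p : V → V) (M : Fin (sz k) → Finset V),
        Enc G.1 σ ρ Q N p M ∧ CP ε (L - (k + sz k + 1 : ℕ)) N p M := by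
    intro G
    obtain ⟨v, h1, h2⟩ := G.2.2
    exact exists_code k ε L G.1 G.2.1 v h1 h2
  choose σ ρ Q N p M hE hC using hcode
  let f : {G : SimpleGraph V // ¬ HasDisjointCycles G (k + 1) ∧
      ∃ v, L < (dg G v : ℝ) ∧ ((dg G v : ℝ) < (1 / 2 - ε) * Fintype.card V ∨
        (1 / 2 + ε) * Fintype.card V < (dg G v : ℝ))} →
      ((Fin k → V) × (Fin (sz k) → V) × (Fin (sz k) → Fin (sz k) → Prop)) × {c // P c} :=
    fun G => ((σ G, ρ G, Q G), ⟨(N G, p G, M G), hC G⟩)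
  have hf : Function.Injective f := by
    intro G G' hGG
    simp only [f, Prod.mk.injEq, Subtype.mk.injEq] at hGG
    obtain ⟨⟨e1, e2, e3⟩, e4, e5, e6⟩ := hGG
    have h1 := hE G
    rw [e1, e2, e3, e4, e5, e6] at h1
    exact Subtype.ext (h1.unique (hE G'))
  have hcard := Nat.card_le_card_of_injective f hf
  rw [Nat.card_prod] at hcard
  have c1 : Nat.card {c // P c} = (Finset.univ.filter P).card := by
    rw [Nat.card_eq_fintype_card, Fintype.card_subtype]
  have c2 : Nat.card ((Fin k → V) × (Fin (sz k) → V) × (Fin (sz k) → Fin (sz k) → Prop)) =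
      (Fintype.card V) ^ (k + sz k) * 2 ^ (sz k * sz k) := by
    rw [Nat.card_eq_fintype_card]
    simp only [Fintype.card_prod, Fintype.card_fun, Fintype.card_fin, Fintype.card_prop]
    ring
  rw [c1, c2] at hcard
  exact_mod_cast hcard

end CodeCount

/-! ### Cayley's formula and the lower bound for the whole class -/

section LowerBound
open scoped Classical

variable {V : Type*}

/-- The parent maps of rooted forests on `V` with exactly `j` trees. -/
noncomputable def RF (V : Type*) [Fintype V] (j : ℕ) : Finset (V → V) :=
  Finset.univ.filter fun p => (∃ d : V → ℕ, ∀ x, p x ≠ x → d (p x) < d x) ∧ fx p = j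

lemma exists_root' {p : V → V} {d : V → ℕ} (h : ∀ x, p x ≠ x → d (p x) < d x) (x : V) :
    ∃ r, p r = r ∧ ∃ n : ℕ, p^[n] x = r := by
  induction hn : d x using Nat.strong_induction_on generalizing x with
  | _ n ih =>
    by_cases hp : p x = x
    · exact ⟨x, hp, 0, rfl⟩
    · obtain ⟨r, hr, m, hm⟩ := ih (d (p x)) (hn ▸ h x hp) (p x) rfl
      exact ⟨r, hr, m + 1, by rwa [Function.iterate_succ_apply]⟩

/-- Hanging a root `r` of a forest under a vertex `x` of another tree gives a forest. -/
lemma hang {p : V → V} {d : V → ℕ} (h : ∀ x, p x ≠ x → d (p x) < d x) {r s x : V}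
    (hr : p r = r) (hs : p s = s) (hrs : s ≠ r) (hx : ∃ n : ℕ, p^[n] x = s) :
    ∃ d' : V → ℕ, ∀ y, Function.update p r x y ≠ y → d' (Function.update p r x y) < d' y := by
  have hroot : ∀ y z : V, p y = y → ∀ n, p^[n] y = z → y = z := by
    intro y z hy n hn
    rw [Function.iterate_fixed hy] at hn; exact hn
  -- the tree of `r` is lifted above `x`
  refine ⟨fun y => if ∃ n : ℕ, p^[n] y = r then d y + d x + 1 else d y, fun y hy => ?_⟩
  have hxr : ¬ ∃ n : ℕ, p^[n] x = r := by
    rintro ⟨n, hn⟩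
    obtain ⟨m, hm⟩ := hx
    have h1 : p^[m + n] x = r := by
      rw [Function.iterate_add_apply, hn, Function.iterate_fixed hr]
    have h2 : p^[n + m] x = s := by
      rw [Function.iterate_add_apply, hm, Function.iterate_fixed hs]
    rw [add_comm, h1] at h2
    exact hrs h2.symm
  by_cases hyr : y = r
  · subst hyr
    simp only [Function.update_self]
    rw [if_neg hxr, if_pos ⟨0, rfl⟩]
    omega
  · rw [Function.update_of_ne hyr] at hy ⊢
    have h1 := h y hy
    by_cases h2 : ∃ n : ℕ, p^[n] y = r
    · have h3 : ∃ n : ℕ, p^[n] (p y) = r := by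
        obtain ⟨n, hn⟩ := h2
        cases n with
        | zero => exact absurd hn hyr
        | succ n => exact ⟨n, by rwa [Function.iterate_succ_apply] at hn⟩
      simp only [if_pos h2, if_pos h3]; omega
    · have h3 : ¬ ∃ n : ℕ, p^[n] (p y) = r := by
        rintro ⟨n, hn⟩
        exact h2 ⟨n + 1, by rwa [Function.iterate_succ_apply]⟩
      simp only [if_neg h2, if_neg h3]; exact h1

lemma fx_update [Fintype V] {p : V → V} {r x : V} (hr : p r = r) (hx : x ≠ r) :
    fx (Function.update p r x) + 1 = fx p := by
  have : (Finset.univ.filter fun u => Function.update p r x u = u) =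
      (Finset.univ.filter fun u => p u = u).erase r := by
    ext u
    simp only [Finset.mem_filter, Finset.mem_univ, true_and, Finset.mem_erase]
    by_cases hu : u = r
    · subst hu; simp [hx]
    · rw [Function.update_of_ne hu]; simp [hu]
  rw [fx, fx, this, Finset.card_erase_of_mem (by simp [hr])]
  have : 0 < (Finset.univ.filter fun u => p u = u).card := Finset.card_pos.2 ⟨r, by simp [hr]⟩
  omega

/-- Pitman's double count of the ways of merging two trees of a rooted forest. -/
lemma RF_step [Fintype V] (j : ℕ) :
    (RF V (j + 1)).card * (Fintype.card V * j) ≤ (RF V j).card * (Fintype.card V - j) := by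
  have key : ∀ p ∈ RF V (j + 1), ∀ x : V, ∃ s : V, p s = s ∧ ∃ n : ℕ, p^[n] x = s := by
    intro p hp x
    obtain ⟨⟨d, hd⟩, _⟩ := (Finset.mem_filter.1 hp).2
    exact exists_root' hd x
  let rt : (V → V) → V → V := fun p x => if h : ∃ s : V, p s = s ∧ ∃ n : ℕ, p^[n] x = s
    then h.choose else x
  have hrt : ∀ p ∈ RF V (j + 1), ∀ x, p (rt p x) = rt p x ∧ ∃ n : ℕ, p^[n] x = rt p x := by
    intro p hp x
    simp only [rt, dif_pos (key p hp x)]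
    exact (key p hp x).choose_spec
  let A : Finset (Σ _ : V → V, Σ _ : V, V) := (RF V (j + 1)).sigma fun p =>
    Finset.univ.sigma fun x => (Finset.univ.filter fun u => p u = u).erase (rt p x)
  let B : Finset (Σ _ : V → V, V) := (RF V j).sigma fun p => Finset.univ.filter fun u => ¬ p u = u
  have hA : A.card = (RF V (j + 1)).card * (Fintype.card V * j) := by
    rw [Finset.card_sigma, ← smul_eq_mul, ← Finset.sum_const]
    refine Finset.sum_congr rfl fun p hp => ?_
    rw [Finset.card_sigma, ← Finset.card_univ, ← smul_eq_mul, ← Finset.sum_const]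
    refine Finset.sum_congr rfl fun x _ => ?_
    rw [Finset.card_erase_of_mem (by simpa using (hrt p hp x).1)]
    have : fx p = j + 1 := (Finset.mem_filter.1 hp).2.2
    rw [fx] at this
    omega
  have hB : B.card = (RF V j).card * (Fintype.card V - j) := by
    rw [Finset.card_sigma, ← smul_eq_mul, ← Finset.sum_const]
    refine Finset.sum_congr rfl fun p hp => ?_
    have h1 : fx p = j := (Finset.mem_filter.1 hp).2.2
    have h2 := Finset.card_filter_add_card_filter_not (s := Finset.univ) (fun x => p x = x)
    rw [fx] at h1
    rw [Finset.card_univ] at h2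
    omega
  rw [← hA, ← hB]
  refine Finset.card_le_card_of_injOn
    (fun t => ⟨Function.update t.1 t.2.2 t.2.1, t.2.2⟩) ?_ ?_
  · rintro ⟨p, x, r⟩ ht
    have ht' : p ∈ RF V (j + 1) ∧ r ≠ rt p x ∧ p r = r := by simpa [A, and_comm] using ht
    obtain ⟨hp, hne, hr⟩ := ht'
    obtain ⟨⟨d, hd⟩, hfx⟩ := (Finset.mem_filter.1 hp).2
    obtain ⟨h1, h2⟩ := hrt p hp x
    have hxr : x ≠ r := by
      rintro rfl
      obtain ⟨n, hn⟩ := h2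
      rw [Function.iterate_fixed hr] at hn
      exact hne hn
    simp only [B, Finset.coe_sigma, Set.mem_sigma_iff, Finset.mem_coe, RF, Finset.mem_filter,
      Finset.mem_univ, true_and, Function.update_self]
    refine ⟨⟨hang hd hr h1 hne.symm h2, ?_⟩, hxr⟩
    have := fx_update hr hxr
    omega
  · rintro ⟨p, x, r⟩ ht ⟨p', x', r'⟩ ht' he
    have h1 : p r = r := by
      have : p ∈ RF V (j + 1) ∧ r ≠ rt p x ∧ p r = r := by simpa [A, and_comm] using ht
      exact this.2.2
    have h2 : p' r' = r' := by
      have : p' ∈ RF V (j + 1) ∧ r' ≠ rt p' x' ∧ p' r' = r' := by simpa [A, and_comm] using ht'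
      exact this.2.2
    simp only [Sigma.mk.injEq, heq_eq_eq] at he
    obtain ⟨he, rfl⟩ := he
    have hx : x = x' := by
      have := congrFun he r
      simpa using this
    have hp : p = p' := by
      funext u
      by_cases hu : u = r
      · subst hu; rw [h1, h2]
      · have := congrFun he u
        rwa [Function.update_of_ne hu, Function.update_of_ne hu] at this
    subst hx hp
    rfl

/-- Iterating `RF_step`, starting from the forest without edges. -/
lemma RF_lower [Fintype V] (m : ℕ) (hm : Fintype.card V = m) (hm1 : 1 ≤ m) : ∀ i, i ≤ m - 1 →
    (m - 1).choose i * m ^ i ≤ (RF V (m - i)).card := by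
  intro i
  induction i with
  | zero =>
    intro _
    simp only [Nat.choose_zero_right, pow_zero, mul_one, Nat.sub_zero]
    refine Finset.card_pos.2 ⟨id, ?_⟩
    simp only [RF, Finset.mem_filter, Finset.mem_univ, true_and]
    exact ⟨⟨fun _ => 0, fun x hx => absurd rfl hx⟩, by simp [fx, hm]⟩
  | succ i ih =>
    intro hi
    have h1 := ih (by omega)
    have h2 := RF_step (V := V) (m - (i + 1))
    rw [hm, show m - (i + 1) + 1 = m - i by omega, show m - (m - (i + 1)) = i + 1 by omega] at h2
    have h3 := Nat.choose_succ_right_eq (m - 1) i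
    rw [show m - 1 - i = m - (i + 1) by omega] at h3
    refine Nat.le_of_mul_le_mul_right ?_ (Nat.succ_pos i)
    calc (m - 1).choose (i + 1) * m ^ (i + 1) * (i + 1)
        = ((m - 1).choose (i + 1) * (i + 1)) * m ^ (i + 1) := by ring
      _ = (m - 1).choose i * m ^ i * (m * (m - (i + 1))) := by rw [h3]; ring
      _ ≤ (RF V (m - i)).card * (m * (m - (i + 1))) := Nat.mul_le_mul_right _ h1
      _ ≤ _ := h2

/-- Cayley's formula, as a lower bound for rooted trees. -/
lemma RF_one [Fintype V] (m : ℕ) (hm : Fintype.card V = m) (hm1 : 1 ≤ m) :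
    m ^ (m - 1) ≤ (RF V 1).card := by
  have := RF_lower (V := V) m hm hm1 (m - 1) le_rfl
  rwa [Nat.choose_self, one_mul, show m - (m - 1) = 1 by omega] at this

/-- The graph joining every vertex to its parent. -/
def pg (p : V → V) : SimpleGraph V where
  Adj x y := x ≠ y ∧ (p x = y ∨ p y = x)
  symm := ⟨fun _ _ h => ⟨h.1.symm, h.2.symm⟩⟩
  loopless := ⟨fun _ h => h.1 rfl⟩

/-- A condition forcing a graph to be a forest: each vertex has at most one neighbour that is
not higher than itself. -/
def Graded (G : SimpleGraph V) (d : V → ℕ) : Prop :=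
  ∀ v w w', G.Adj v w → G.Adj v w' → d w ≤ d v → d w' ≤ d v → w = w'

lemma graded_pg {p : V → V} {d : V → ℕ} (h : ∀ x, p x ≠ x → d (p x) < d x) :
    Graded (pg p) d := by
  have : ∀ v w, (pg p).Adj v w → d w ≤ d v → w = p v := by
    rintro v w ⟨hne, h1 | h1⟩ hd
    · exact h1.symm
    · have := h w (by rw [h1]; exact hne)
      rw [h1] at this
      omega
  intro v w w' h1 h2 h3 h4
  rw [this v w h1 h3, this v w' h2 h4]

lemma pg_injective {p q : V → V} {d : V → ℕ} (h : ∀ x, p x ≠ x → d (p x) < d x) {r : V} (hp : ∀ x, p x = x ↔ x = r)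
    (hq : ∀ x, q x = x ↔ x = r) (hg : pg p = pg q) : p = q := by
  funext x
  induction hn : d x using Nat.strong_induction_on generalizing x with
  | _ n ih =>
    by_cases hx : x = r
    · rw [(hp x).2 hx, (hq x).2 hx]
    · have hpx : p x ≠ x := fun h1 => hx ((hp x).1 h1)
      have hadj : (pg q).Adj x (p x) := hg ▸ ⟨hpx.symm, Or.inl rfl⟩
      rcases hadj.2 with h1 | h1
      · exact h1.symm
      · have hd := h x hpx
        have h2 := ih (d (p x)) (hn ▸ hd) (p x) rfl
        rw [h1] at h2
        have h3 := h (p x) (by rw [h2]; exact hpx.symm)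
        rw [h2] at h3
        omega

/-- A lower bound for the number of trees: a rooted tree is given by a graph and a root. -/
lemma card_graded [Fintype V] (m : ℕ) (hm : Fintype.card V = m) (hm1 : 1 ≤ m) :
    m ^ (m - 1) ≤ Nat.card {G : SimpleGraph V // ∃ d, Graded G d} * m := by
  refine (RF_one m hm hm1).trans ?_
  have hr : ∀ p ∈ RF V 1, ∃ r, ∀ x, p x = x ↔ x = r := by
    intro p hp
    obtain ⟨r, hr⟩ := Finset.card_eq_one.1 (Finset.mem_filter.1 hp).2.2
    refine ⟨r, fun x => ?_⟩
    have : x ∈ (Finset.univ.filter fun u => p u = u) ↔ x = r := by rw [hr]; simp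
    simpa using this
  have hd : ∀ p ∈ RF V 1, ∃ d : V → ℕ, ∀ x, p x ≠ x → d (p x) < d x :=
    fun p hp => (Finset.mem_filter.1 hp).2.1
  have hne : Nonempty V := Fintype.card_pos_iff.1 (by omega)
  choose! r hr using hr
  choose! d hd using hd
  let f : {p // p ∈ RF V 1} → {G : SimpleGraph V // ∃ d, Graded G d} × V :=
    fun p => (⟨pg p.1, d p.1, graded_pg (hd p.1 p.2)⟩, r p.1)
  have hf : Function.Injective f := by
    intro p q hpq
    simp only [f, Prod.mk.injEq, Subtype.mk.injEq] at hpq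
    have h2 := hr q.1 q.2
    rw [← hpq.2] at h2
    exact Subtype.ext (pg_injective (hd p.1 p.2) (hr p.1 p.2) h2 hpq.1)
  have := Nat.card_le_card_of_injective f hf
  rw [Nat.card_prod, Nat.card_eq_fintype_card (α := V), hm] at this
  simpa using this

/-- The graph consisting of `T` and of `k` independent apex vertices with neighbourhoods `N i`
in `T`. -/
def apexSum {k m : ℕ} (N : Fin k → Finset (Fin m)) (T : SimpleGraph (Fin m)) :
    SimpleGraph (Fin k ⊕ Fin m) where
  Adj
    | .inl _, .inl _ => False
    | .inl i, .inr x => x ∈ N i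
    | .inr x, .inl i => x ∈ N i
    | .inr x, .inr y => T.Adj x y
  symm := ⟨by rintro (i | x) (j | y) h <;> first | exact h | exact SimpleGraph.Adj.symm h⟩
  loopless := ⟨by rintro (i | x) h <;> first | exact h | exact T.loopless.irrefl _ h⟩

/-- Adding `k` apex vertices to a forest creates no `k + 1` disjoint cycles, since the apex
vertices block all cycles. -/
lemma exCount_lower (k m : ℕ) (hm1 : 1 ≤ m) :
    2 ^ (m * k) * m ^ (m - 1) ≤ exCount (k + m) (k + 1) * m := by
  have h1 := card_graded (V := Fin m) m (by simp) hm1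
  let e : Fin k ⊕ Fin m ≃ Fin (k + m) := finSumFinEquiv
  let f : (Fin k → Finset (Fin m)) × {T : SimpleGraph (Fin m) // ∃ d, Graded T d} →
      {G : SimpleGraph (Fin (k + m)) // ¬ HasDisjointCycles G (k + 1)} := fun c =>
    ⟨(apexSum c.1 c.2.1).comap e.symm, by
      obtain ⟨N, T, d, hd⟩ := c
      refine not_hasDisjointCycles_of_blocker (Finset.univ.image fun i => e (.inl i))
        (Finset.card_image_le.trans (by simp)) ?_
      rintro ⟨C, hC, hne, hdeg⟩
      have hCr : ∀ v ∈ C, ∃ x, v = e (.inr x) := by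
        intro v hv
        obtain ⟨u, rfl⟩ := e.surjective v
        rcases u with i | x
        · have := hC hv
          simp at this
        · exact ⟨x, rfl⟩
      obtain ⟨v, hv, hmax⟩ := Finset.exists_max_image C
        (fun v => Sum.elim (fun _ => 0) d (e.symm v)) hne
      obtain ⟨w, hw, w', hw', hww⟩ := Finset.one_lt_card.1 (hdeg v hv)
      rw [mem_nb] at hw hw'
      obtain ⟨x, rfl⟩ := hCr v hv
      have hm1 := hmax w hw.1
      have hm2 := hmax w' hw'.1
      obtain ⟨y, rfl⟩ := hCr w hw.1
      obtain ⟨y', rfl⟩ := hCr w' hw'.1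
      simp only [Equiv.symm_apply_apply, Sum.elim_inr] at hm1 hm2
      have a1 := hw.2
      have a2 := hw'.2
      simp only [SimpleGraph.comap_adj, Equiv.symm_apply_apply] at a1 a2
      exact hww (by rw [hd x y y' a1 a2 hm1 hm2])⟩
  have hf : Function.Injective f := by
    rintro ⟨N, T⟩ ⟨N', T'⟩ h
    simp only [f, Subtype.mk.injEq] at h
    have h2 : ∀ a b, (apexSum N T.1).Adj a b ↔ (apexSum N' T'.1).Adj a b := by
      intro a b
      have := congrArg (fun G : SimpleGraph (Fin (k + m)) => G.Adj (e a) (e b)) h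
      simpa [SimpleGraph.comap_adj] using this
    have hN : N = N' := by
      funext i
      ext x
      exact h2 (.inl i) (.inr x)
    have hT : T = T' := by
      apply Subtype.ext
      ext x y
      exact h2 (.inr x) (.inr y)
    rw [hN, hT]
  have h2 := Nat.card_le_card_of_injective f hf
  rw [Nat.card_prod] at h2
  have h3 : Nat.card (Fin k → Finset (Fin m)) = 2 ^ (m * k) := by
    rw [Nat.card_eq_fintype_card]; simp [pow_mul]
  rw [h3] at h2
  calc _ ≤ 2 ^ (m * k) * (Nat.card {G : SimpleGraph (Fin m) // ∃ d, Graded G d} * m) :=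
        Nat.mul_le_mul_left _ h1
    _ = (2 ^ (m * k) * Nat.card {G : SimpleGraph (Fin m) // ∃ d, Graded G d}) * m := by ring
    _ ≤ _ := Nat.mul_le_mul_right _ h2

end LowerBound

/-! ### Asymptotics -/

section Asymptotics
open scoped Classical

lemma add_pow_le_exp {n : ℕ} (hn : 1 ≤ n) {b : ℝ} (hb : 0 ≤ b) :
    ((n : ℝ) + b) ^ n ≤ (n : ℝ) ^ n * Real.exp b := by
  have hn0 : (0 : ℝ) < n := by exact_mod_cast hn
  have h1 : (n : ℝ) + b = n * (b / n + 1) := by field_simp; ring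
  rw [h1, mul_pow]
  refine mul_le_mul_of_nonneg_left ?_ (by positivity)
  calc (b / n + 1) ^ n ≤ (Real.exp (b / n)) ^ n :=
        pow_le_pow_left₀ (by positivity) (Real.add_one_le_exp _) n
    _ = Real.exp b := by rw [← Real.exp_nat_mul]; congr 1; field_simp

/-- Up to a polynomial factor, there are at least `2 ^ (n * k) * n ^ n` graphs in the class. -/
lemma exCount_lower_real (k n : ℕ) (hn : k + 1 ≤ n) :
    (2 : ℝ) ^ (n * k) * (n : ℝ) ^ n ≤
      2 ^ (k * k) * Real.exp k * (n : ℝ) ^ (k + 2) * exCount n (k + 1) := by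
  obtain ⟨m, rfl⟩ := Nat.exists_eq_add_of_le (show k ≤ n by omega)
  have hm1 : 1 ≤ m := by omega
  have h := exCount_lower k m hm1
  have h' : (2 : ℝ) ^ (m * k) * (m : ℝ) ^ (m - 1) ≤ exCount (k + m) (k + 1) * m := by
    exact_mod_cast h
  have h2 : (2 : ℝ) ^ (m * k) * (m : ℝ) ^ m ≤ exCount (k + m) (k + 1) * (m : ℝ) ^ 2 := by
    have h3 : (m : ℝ) ^ m = (m : ℝ) ^ (m - 1) * m := by
      rw [← pow_succ, Nat.sub_add_cancel hm1]
    rw [h3, ← mul_assoc, sq, ← mul_assoc]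
    exact mul_le_mul_of_nonneg_right h' (by positivity)
  have h4 : ((k + m : ℕ) : ℝ) ^ m ≤ (m : ℝ) ^ m * Real.exp k := by
    have := add_pow_le_exp hm1 (b := (k : ℝ)) (by positivity)
    push_cast
    rwa [add_comm]
  have h5 : (m : ℝ) ≤ ((k + m : ℕ) : ℝ) := by push_cast; linarith [(Nat.cast_nonneg k : (0:ℝ) ≤ k)]
  generalize hN : ((k + m : ℕ) : ℝ) = N at *
  have hN0 : 0 ≤ N := by rw [← hN]; positivity
  have hE : (0 : ℝ) ≤ exCount (k + m) (k + 1) := by positivity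
  calc (2 : ℝ) ^ ((k + m) * k) * N ^ (k + m)
      = 2 ^ (k * k) * N ^ k * (2 ^ (m * k) * N ^ m) := by
        rw [add_mul, pow_add, pow_add]; ring
    _ ≤ 2 ^ (k * k) * N ^ k * (2 ^ (m * k) * ((m : ℝ) ^ m * Real.exp k)) := by gcongr
    _ = 2 ^ (k * k) * N ^ k * Real.exp k * (2 ^ (m * k) * (m : ℝ) ^ m) := by ring
    _ ≤ 2 ^ (k * k) * N ^ k * Real.exp k * (exCount (k + m) (k + 1) * (m : ℝ) ^ 2) := by gcongr
    _ ≤ 2 ^ (k * k) * N ^ k * Real.exp k * (exCount (k + m) (k + 1) * N ^ 2) := by gcongr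
    _ = _ := by rw [pow_add]; ring

/-- The gain `(η n) ^ (-(n / log n - K))` is essentially `exp (-n)`. -/
lemma rpow_gain {n K : ℕ} {η : ℝ} (hη : 0 < η) (hη1 : η ≤ 1) (hn : 2 ≤ n)
    (hl : -Real.log η ≤ Real.log n / 4) :
    (η * n) ^ (-((n : ℝ) / Real.log n - K)) ≤ Real.exp (-(3 / 4 * n)) * (n : ℝ) ^ K := by
  have hn0 : (0 : ℝ) < n := by exact_mod_cast (by omega : 0 < n)
  have hln : 0 < Real.log n := Real.log_pos (by exact_mod_cast hn)
  have hz0 : 0 < η * n := by positivity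
  rw [neg_sub, sub_eq_neg_add, Real.rpow_add hz0, Real.rpow_natCast]
  refine mul_le_mul ?_ (pow_le_pow_left₀ hz0.le (by nlinarith) K) (by positivity) (by positivity)
  rw [Real.rpow_def_of_pos hz0, Real.log_mul hη.ne' hn0.ne']
  refine Real.exp_le_exp.2 ?_
  have h1 : 3 / 4 * Real.log n ≤ Real.log η + Real.log n := by linarith
  have h2 : 3 / 4 * Real.log n * (n / Real.log n) ≤
      (Real.log η + Real.log n) * (n / Real.log n) :=
    mul_le_mul_of_nonneg_right h1 (by positivity)
  have h3 : 3 / 4 * Real.log n * (n / Real.log n) = 3 / 4 * n := by field_simp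
  linarith

/-- The bound of `card_bad_le` with the parameters specialised: the exponential saving is
`exp (-a n / 4)`. -/
lemma bracket_le {n k s K : ℕ} {a ε x y η : ℝ} (ha : a ≤ 2 * ε ^ 2)
    (ha1 : a ≤ 1) (hx : 0 < x) (hxs : x * s ≤ a / 4) (hy : 0 ≤ y) (hη : 0 < η) (hη1 : η ≤ 1)
    (hyη : 2 * (y * η) ≤ a / 4) (hn : 2 ≤ n)
    (hl : -Real.log η ≤ Real.log n / 4) :
    2 ^ (n * k) * ((1 + x) ^ n) ^ s *
      (k * (2 * Real.exp (-(2 * ε ^ 2 * n))) * ((n : ℝ) + y) ^ n +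
        (η * n) ^ (-((n : ℝ) / Real.log n - K)) *
          (((n : ℝ) + 2 * (y * (η * n))) ^ n * (1 + n * (1 + y * (η * n))))) ≤
    2 ^ (n * k) * (n : ℝ) ^ n * (Real.exp (-(a / 4 * n)) *
      ((2 * k * Real.exp y + 3) * (n : ℝ) ^ (K + 2))) := by
  have hn0 : (1 : ℝ) ≤ n := by exact_mod_cast (by omega : 1 ≤ n)
  have hn00 : (0 : ℝ) ≤ n := by linarith
  have e1 : ((1 + x) ^ n) ^ s ≤ Real.exp (a / 4 * n) := by
    calc ((1 + x) ^ n) ^ s ≤ ((Real.exp x) ^ n) ^ s := by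
          gcongr; linarith [Real.add_one_le_exp x]
      _ = Real.exp (x * s * n) := by
          rw [← Real.exp_nat_mul, ← Real.exp_nat_mul]; congr 1; ring
      _ ≤ _ := Real.exp_le_exp.2 (by gcongr)
  have e2 : ((n : ℝ) + y) ^ n ≤ (n : ℝ) ^ n * Real.exp y := add_pow_le_exp (by omega) hy
  have e3 : ((n : ℝ) + 2 * (y * (η * n))) ^ n ≤ (n : ℝ) ^ n * Real.exp (a / 4 * n) := by
    refine (add_pow_le_exp (by omega) (by positivity)).trans ?_
    refine mul_le_mul_of_nonneg_left (Real.exp_le_exp.2 ?_) (by positivity)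
    calc 2 * (y * (η * n)) = 2 * (y * η) * n := by ring
      _ ≤ _ := by gcongr
  have e4 := rpow_gain (K := K) hη hη1 hn hl
  have e5 : 1 + n * (1 + y * (η * n)) ≤ 3 * (n : ℝ) ^ 2 := by
    have : y * η * (n * n) ≤ 1 * (n * n) := by gcongr; linarith
    nlinarith
  have e6 : Real.exp (-(2 * ε ^ 2 * n)) ≤ Real.exp (-(a / 2 * n)) := by
    refine Real.exp_le_exp.2 (neg_le_neg ?_)
    have h0 : a / 2 ≤ 2 * ε ^ 2 := by nlinarith [sq_nonneg ε]
    gcongr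
  have e7 : Real.exp (-(3 / 4 * n)) * Real.exp (a / 4 * n) ≤ Real.exp (-(a / 2 * n)) := by
    rw [← Real.exp_add]
    refine Real.exp_le_exp.2 ?_
    nlinarith
  have e8 : Real.exp (a / 4 * n) * Real.exp (-(a / 2 * n)) = Real.exp (-(a / 4 * n)) := by
    rw [← Real.exp_add]; congr 1; ring
  have hy' : 0 ≤ Real.exp y := (Real.exp_pos y).le
  calc _ ≤ 2 ^ (n * k) * Real.exp (a / 4 * n) *
      (k * (2 * Real.exp (-(a / 2 * n))) * ((n : ℝ) ^ n * Real.exp y) +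
        (Real.exp (-(3 / 4 * n)) * (n : ℝ) ^ K) *
          (((n : ℝ) ^ n * Real.exp (a / 4 * n)) * (3 * (n : ℝ) ^ 2))) := by gcongr
    _ = 2 ^ (n * k) * (n : ℝ) ^ n * (Real.exp (a / 4 * n) *
      ((2 * k * Real.exp y) * Real.exp (-(a / 2 * n)) +
        (Real.exp (-(3 / 4 * n)) * Real.exp (a / 4 * n)) * (3 * ((n : ℝ) ^ (K + 2))))) := by
        rw [pow_add]; ring
    _ ≤ 2 ^ (n * k) * (n : ℝ) ^ n * (Real.exp (a / 4 * n) *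
      ((2 * k * Real.exp y * (n : ℝ) ^ (K + 2)) * Real.exp (-(a / 2 * n)) +
        Real.exp (-(a / 2 * n)) * (3 * ((n : ℝ) ^ (K + 2))))) := by
        have : 2 * k * Real.exp y ≤ 2 * k * Real.exp y * (n : ℝ) ^ (K + 2) :=
          le_mul_of_one_le_right (by positivity) (one_le_pow₀ hn0)
        gcongr
    _ = 2 ^ (n * k) * (n : ℝ) ^ n * ((Real.exp (a / 4 * n) * Real.exp (-(a / 2 * n))) *
      ((2 * k * Real.exp y + 3) * (n : ℝ) ^ (K + 2))) := by ring
    _ = _ := by rw [e8]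

/-- An exponential eventually beats any polynomial. -/
lemma eventually_poly_le (D b : ℝ) (P : ℕ) (hb : 0 < b) :
    ∀ᶠ n : ℕ in atTop, D * (n : ℝ) ^ P ≤ Real.exp (b * n) := by
  have h := (isLittleO_pow_exp_pos_mul_atTop P hb).comp_tendsto tendsto_natCast_atTop_atTop
  have h2 := (h.const_mul_left D).bound one_pos
  filter_upwards [h2] with n hn
  simp only [Function.comp, Real.norm_eq_abs, one_mul, Real.abs_exp] at hn
  exact (le_abs_self _).trans hn

end Asymptotics

/-- with probability 1 − e^{-Ω(n)}, every vertex of degree > n/ln n has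
degree between (1/2 − ε)n and (1/2 + ε)n. -/
theorem stmt_9 (k : ℕ) (hk : 1 ≤ k) (ε : ℝ) (hε : 0 < ε) :
    ∃ c : ℝ, 0 < c ∧ ∃ n0 : ℕ, ∀ n ≥ n0,
      (Nat.card {G : SimpleGraph (Fin n) // ¬ HasDisjointCycles G (k + 1) ∧
          ∃ v : Fin n, (n : ℝ) / Real.log n < ((G.neighborSet v).ncard : ℝ) ∧
            (((G.neighborSet v).ncard : ℝ) < (1 / 2 - ε) * n ∨
             (1 / 2 + ε) * n < ((G.neighborSet v).ncard : ℝ))} : ℝ)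
        ≤ Real.exp (-c * n) * (exCount n (k + 1) : ℝ) := by
  set s := sz k with hs
  -- `a` is the exponential rate of Chernoff's bound, capped at the rate `1` of the gain from
  -- many trees or children; `x` and `η` are so small that each of the remaining exponential
  -- factors costs at most a quarter of it
  obtain ⟨a, ha0, ha, ha1⟩ : ∃ a : ℝ, 0 < a ∧ a ≤ 2 * ε ^ 2 ∧ a ≤ 1 :=
    ⟨min (2 * ε ^ 2) 1, by positivity, min_le_left _ _, min_le_right _ _⟩
  obtain ⟨x, hx, hx1, hxs⟩ : ∃ x : ℝ, 0 < x ∧ x ≤ 1 ∧ x * s ≤ a / 4 := by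
    refine ⟨a / (4 * (s + 1)), by positivity, ?_, ?_⟩
    · rw [div_le_one (by positivity)]
      have : (0 : ℝ) ≤ s := by positivity
      linarith
    · rw [div_mul_eq_mul_div, div_le_div_iff₀ (by positivity) (by positivity)]
      nlinarith
  set y : ℝ := (x ^ s)⁻¹ with hy
  have hy0 : 0 < y := by positivity
  obtain ⟨η, hη, hη1, hyη⟩ : ∃ η : ℝ, 0 < η ∧ η ≤ 1 ∧ 2 * (y * η) ≤ a / 4 := by
    refine ⟨a / (8 * (y + 1)), by positivity, ?_, ?_⟩
    · rw [div_le_one (by positivity)]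
      linarith
    · have : y * (a / (8 * (y + 1))) ≤ a / 8 := by
        rw [mul_div_assoc', div_le_div_iff₀ (by positivity) (by positivity)]
        nlinarith
      linarith
  set K := k + s + 1 with hK
  -- the constant factor and the degree of the polynomial overhead
  set D : ℝ := 2 ^ (s * s) * (2 * k * Real.exp y + 3) * (2 ^ (k * k) * Real.exp k) with hD
  set P : ℕ := (k + s) + (K + 2) + (k + 2) with hP
  have hev1 : ∀ᶠ n : ℕ in atTop, 1 ≤ η * n :=
    (tendsto_natCast_atTop_atTop.const_mul_atTop hη).eventually_ge_atTop 1
  have hev2 : ∀ᶠ n : ℕ in atTop, -Real.log η ≤ Real.log n / 4 :=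
    ((Real.tendsto_log_atTop.comp tendsto_natCast_atTop_atTop).atTop_div_const
      (by norm_num : (0 : ℝ) < 4)).eventually_ge_atTop _
  have hev3 := eventually_poly_le D (a / 8) P (by positivity)
  obtain ⟨n0, hn0⟩ := eventually_atTop.1
    ((hev1.and (hev2.and hev3)).and (eventually_ge_atTop (k + 2)))
  refine ⟨a / 8, by positivity, n0, fun n hn => ?_⟩
  obtain ⟨⟨h1, h2, h3⟩, h4⟩ := hn0 n hn
  have : Nonempty (Fin n) := ⟨⟨0, by omega⟩⟩
  have hub := card_bad_le (V := Fin n) k ε ((n : ℝ) / Real.log n) x (η * n) hε hx hx1 h1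
  simp only [dg_eq_ncard, Fintype.card_fin, ← hs, ← hy, ← hK] at hub
  refine hub.trans ?_
  have hb := bracket_le (k := k) (K := K) ha ha1 hx hxs hy0.le hη hη1 hyη (by omega) h2
  have hl := exCount_lower_real k n (by omega)
  have hexp : Real.exp (-(a / 4 * n)) * Real.exp (a / 8 * n) = Real.exp (-(a / 8) * n) := by
    rw [← Real.exp_add]; congr 1; ring
  calc _ ≤ (n : ℝ) ^ (k + s) * 2 ^ (s * s) * (2 ^ (n * k) * (n : ℝ) ^ n *
        (Real.exp (-(a / 4 * n)) * ((2 * k * Real.exp y + 3) * (n : ℝ) ^ (K + 2)))) := by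
        gcongr
    _ ≤ (n : ℝ) ^ (k + s) * 2 ^ (s * s) *
        (2 ^ (k * k) * Real.exp k * (n : ℝ) ^ (k + 2) * exCount n (k + 1) *
        (Real.exp (-(a / 4 * n)) * ((2 * k * Real.exp y + 3) * (n : ℝ) ^ (K + 2)))) := by
        gcongr
    _ = Real.exp (-(a / 4 * n)) * (D * (n : ℝ) ^ P) * exCount n (k + 1) := by
        rw [hD, hP, pow_add (n : ℝ) (k + s + (K + 2)), pow_add (n : ℝ) (k + s)]; ring
    _ ≤ Real.exp (-(a / 4 * n)) * Real.exp (a / 8 * n) * exCount n (k + 1) := by gcongr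
    _ = _ := by rw [hexp]
end

section
/- There exist constants a > 0 and b > 0 and an integer n0 such that for all n ≥ n0, the number of forests F on vertex set {1,…,n} having fewer than a·n spikes is less than e^{-b n} · |F_n|. -/
/-!
The proof is a switching (double counting) argument inside the set of forests on a fixed vertex
set; no enumeration of forests is needed.

Call `x` a tip if it is the leaf of a spike (`IsTip`, a condition on neighbourhoods only; each tip
gives a spike). In a forest `F`, choose distinct vertices `x, v, u, z` with `x, v, u` of degree at
most two. Suppress `x`, `v`, `u` (joining the two neighbours of a vertex of degree two) and hang
the path `x v u` with its end `x` at `z`. The result is a forest in which `u` is a tip: because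
the path has three vertices, the component has at least four, whatever `z` is.

* A forest has at most `n` edges, so at least `n / 3` vertices have degree at most two
  (`card_low`), and there are of order `n ^ 4` switchings out of every forest.
* A switching is undone from the tip `u` and the three old positions of `u`, `v`, `x`, the vertices
  `v`, `x`, `z` being read off as the unique neighbours of `u`, `v`, `x` in the successive graphs
  (`mv_inj`). A position is a loop or an edge of the new forest, so it has at most `3 * n` values
  (`slots_ncard`).
* A switching changes boundedly many neighbourhoods, hence creates at most 48 tips (`tips_move`).

So if `few n s` counts the forests with at most `s` tips, then `few n s` is at most
`C * (s + 48) / n * few n (s + 48)` (`few_step`). For `s + 48` below a small multiple of `n` this is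
at most half of `few n (s + 48)`; iterating a linear number of times (`few_iterate`) gives the
exponential factor.
-/

open SimpleGraph Filter Real

namespace SpikeCount

variable {V : Type*}

/-! ### Moving a vertex of degree at most two -/

/-- Suppress the vertex `u` (whose neighbours are `p`, `q`; a loop `edge p p` is empty)
and hang it as a leaf at `z`. -/
def move (F : SimpleGraph V) (u p q z : V) : SimpleGraph V :=
  (F.deleteIncidenceSet u ⊔ edge p q) ⊔ edge u z

/-- The inverse of `move` at a known position: all edges at `u` and the edge `p q` are removed, then
`u` is joined to those of `p`, `q` that differ from `u`. -/
def unmove (H : SimpleGraph V) (u p q : V) : SimpleGraph V where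
  Adj a b := (H.Adj a b ∧ a ≠ u ∧ b ≠ u ∧ ¬ (a = p ∧ b = q) ∧ ¬ (a = q ∧ b = p)) ∨
    (a = u ∧ b ≠ u ∧ (b = p ∨ b = q)) ∨ (b = u ∧ a ≠ u ∧ (a = p ∨ a = q))
  symm := ⟨by intro a b h; have := H.adj_comm a b; tauto⟩
  loopless := ⟨by intro a h; have := H.loopless.irrefl a; tauto⟩

lemma move_adj {F : SimpleGraph V} {u p q z a b : V} :
    (move F u p q z).Adj a b ↔ (F.Adj a b ∧ a ≠ u ∧ b ≠ u) ∨
      ((a = p ∧ b = q ∨ a = q ∧ b = p) ∧ a ≠ b) ∨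
      ((a = u ∧ b = z ∨ a = z ∧ b = u) ∧ a ≠ b) := by
  simp only [move, sup_adj, edge_adj, deleteIncidenceSet_adj]
  tauto

/-- In a forest, two distinct neighbours of `u` are separated by the removal of `u`. -/
lemma not_reachable_of_adj {F : SimpleGraph V} (hF : F.IsAcyclic) {u p q : V}
    (hp : F.Adj u p) (hq : F.Adj u q) (hpq : p ≠ q) :
    ¬ (F.deleteIncidenceSet u).Reachable p q := by
  intro h
  have hb := isAcyclic_iff_forall_adj_isBridge.mp hF hp
  rw [isBridge_iff] at hb
  apply hb
  have h1 : (F.deleteEdges {s(u, p)}).Adj u q := by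
    rw [deleteEdges_adj]
    refine ⟨hq, ?_⟩
    simp only [Set.mem_singleton_iff, Sym2.eq_iff]
    have := hq.ne
    grind
  refine h1.reachable.trans (Reachable.mono ?_ h.symm)
  intro a b hab
  rw [deleteIncidenceSet_adj] at hab
  rw [deleteEdges_adj]
  refine ⟨hab.1, ?_⟩
  simp only [Set.mem_singleton_iff, Sym2.eq_iff]
  grind

lemma not_reachable_of_isolated {G : SimpleGraph V} {u z : V} (hu : ∀ w, ¬ G.Adj u w)
    (hz : z ≠ u) : ¬ G.Reachable u z := by
  rintro ⟨w⟩
  cases w with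
  | nil => exact hz rfl
  | cons h _ => exact hu _ h

/-- The pair `p`, `q` describes the position of `u` in `F`: `p = q = u` for an isolated vertex,
`p = q` the neighbour of a leaf, and otherwise the two neighbours of `u`, required to be
non-adjacent. -/
structure IsPos (F : SimpleGraph V) (u p q : V) : Prop where
  adj_iff : ∀ w, F.Adj u w ↔ (w = p ∨ w = q) ∧ w ≠ u
  nonadj : p = q ∨ (p ≠ u ∧ q ≠ u ∧ ¬ F.Adj p q)

lemma exists_isPos [Finite V] {F : SimpleGraph V} (hF : F.IsAcyclic) {u : V}
    (hu : (F.neighborSet u).ncard ≤ 2) : ∃ p q, IsPos F u p q := by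
  have hne : ∀ w, F.Adj u w → w ≠ u := fun w h => h.ne'
  obtain h | h | h : (F.neighborSet u).ncard = 0 ∨ (F.neighborSet u).ncard = 1 ∨
      (F.neighborSet u).ncard = 2 := by omega
  · rw [Set.ncard_eq_zero] at h
    refine ⟨u, u, fun w => ?_, Or.inl rfl⟩
    rw [← mem_neighborSet, h]; simp
  · obtain ⟨p, hp⟩ := Set.ncard_eq_one.mp h
    have hw : ∀ w, F.Adj u w ↔ w = p := fun w => by rw [← mem_neighborSet, hp]; simp
    refine ⟨p, p, fun w => ?_, Or.inl rfl⟩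
    grind
  · obtain ⟨p, q, hpq, hp⟩ := Set.ncard_eq_two.mp h
    have hw : ∀ w, F.Adj u w ↔ w = p ∨ w = q := fun w => by rw [← mem_neighborSet, hp]; simp
    refine ⟨p, q, fun w => by grind, Or.inr ⟨by grind, by grind, fun hadj => ?_⟩⟩
    refine not_reachable_of_adj hF ((hw p).2 (.inl rfl)) ((hw q).2 (.inr rfl)) hpq
      (Adj.reachable ?_)
    rw [deleteIncidenceSet_adj]
    grind

section

variable {F : SimpleGraph V} {u p q z : V}

lemma move_isAcyclic (hF : F.IsAcyclic) (h : IsPos F u p q) (hz : z ≠ u) :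
    (move F u p q z).IsAcyclic := by
  have h0 : (F.deleteIncidenceSet u).IsAcyclic := hF.anti (deleteIncidenceSet_le _ _)
  have h1 : (F.deleteIncidenceSet u ⊔ edge p q).IsAcyclic := by
    rcases eq_or_ne p q with rfl | hpq
    · simpa using h0
    · obtain ⟨hp, hq, -⟩ := h.nonadj.resolve_left hpq
      exact h0.sup_edge_of_not_reachable (not_reachable_of_adj hF
        ((h.adj_iff p).2 ⟨.inl rfl, hp⟩) ((h.adj_iff q).2 ⟨.inr rfl, hq⟩) hpq)
  refine h1.sup_edge_of_not_reachable (not_reachable_of_isolated (fun w hw => ?_) hz)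
  rw [sup_adj, edge_adj, deleteIncidenceSet_adj] at hw
  have := h.nonadj
  grind

lemma move_adj_left (h : IsPos F u p q) (hz : z ≠ u) (w : V) :
    (move F u p q z).Adj u w ↔ w = z := by
  rw [move_adj]
  have := h.nonadj
  grind

lemma unmove_move (h : IsPos F u p q) (hz : z ≠ u) :
    unmove (move F u p q z) u p q = F := by
  ext a b
  have h1 := h.nonadj
  have h2 := h.adj_iff
  have h3 := F.adj_comm
  have h4 := fun a => F.loopless.irrefl a
  simp only [unmove, move_adj]
  by_cases ha : a = u
  · subst ha
    grind
  · by_cases hb : b = u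
    · subst hb
      grind
    · grind

/-- After the move, the old position of `u` is a loop or an edge. -/
lemma move_pos (h : IsPos F u p q) : p = q ∨ (move F u p q z).Adj p q := by
  have := h.nonadj
  rw [move_adj]; tauto

/-- A vertex that is neither `u` nor a neighbour of `u` keeps its neighbourhood, except that `z`
gains `u`. -/
lemma move_adj_of_not_adj (h : IsPos F u p q) {a : V} (hau : a ≠ u)
    (hua : ¬ F.Adj u a) (w : V) :
    (move F u p q z).Adj a w ↔ F.Adj a w ∨ (a = z ∧ w = u) := by
  rw [move_adj]
  have h1 := h.nonadj
  have h2 := h.adj_iff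
  have h3 := F.adj_comm
  grind

lemma move_ncard_le [Finite V] (h : IsPos F u p q) {a : V} (hau : a ≠ u)
    (haz : a ≠ z) :
    ((move F u p q z).neighborSet a).ncard ≤ (F.neighborSet a).ncard := by
  classical
  by_cases hua : F.Adj u a
  · obtain ⟨b, hb⟩ : ∃ b, (move F u p q z).neighborSet a ⊆ insert b (F.neighborSet a \ {u}) := by
      refine ⟨if a = p then q else p, fun w hw => ?_⟩
      rw [mem_neighborSet, move_adj] at hw
      simp only [Set.mem_insert_iff, Set.mem_sdiff, mem_neighborSet, Set.mem_singleton_iff]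
      grind
    calc _ ≤ _ := Set.ncard_le_ncard hb
      _ ≤ (F.neighborSet a \ {u}).ncard + 1 := Set.ncard_insert_le _ _
      _ = _ := Set.ncard_sdiff_singleton_add_one (by simpa using hua.symm)
  · refine Set.ncard_le_ncard fun w hw => ?_
    rw [mem_neighborSet, move_adj_of_not_adj h hau hua] at hw
    rw [mem_neighborSet]; tauto

end

/-! ### Counting spikes locally -/

/-- A local form of `IsSpike`: `x` is a leaf, its neighbour `y` has exactly one further
neighbour `z`, and `z` has a neighbour other than `y`. -/
def IsTip (G : SimpleGraph V) (x : V) : Prop :=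
  ∃ y z, z ≠ x ∧ G.neighborSet x = {y} ∧ G.neighborSet y = {x, z} ∧ G.neighborSet z ≠ {y}

lemma IsTip.exists_isSpike {G : SimpleGraph V} {x : V} (h : IsTip G x) : ∃ y, IsSpike G x y := by
  obtain ⟨y, z, hzx, hx, hy, hz⟩ := h
  have ax : ∀ w, G.Adj x w ↔ w = y := fun w => by rw [← mem_neighborSet, hx]; simp
  have ay : ∀ w, G.Adj y w ↔ w = x ∨ w = z := fun w => by rw [← mem_neighborSet, hy]; simp
  refine ⟨y, (ax y).2 rfl, by simp [hx], by rw [hy, Set.ncard_pair hzx.symm], ?_⟩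
  rintro ⟨a, b, c, -, -, -, -, -, -, hs⟩
  have hxy : G.Adj x y := (ax y).2 rfl
  have hyz : G.Adj y z := (ay z).2 (.inr rfl)
  have mem : ∀ w, G.Reachable x w → w = a ∨ w = b ∨ w = c := fun w hw => by
    have : w ∈ (G.connectedComponentMk x).supp := by
      rw [ConnectedComponent.mem_supp_iff, ConnectedComponent.eq]; exact hw.symm
    rw [hs] at this
    simpa using this
  have mx := mem x .rfl
  have my := mem y hxy.reachable
  have mz := mem z (hxy.reachable.trans hyz.reachable)
  have hxy' := hxy.ne
  have hyz' := hyz.ne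
  apply hz
  ext w
  rw [mem_neighborSet, Set.mem_singleton_iff]
  refine ⟨fun hw => ?_, fun hw => hw ▸ hyz.symm⟩
  have mw := mem w (hxy.reachable.trans (hyz.reachable.trans hw.reachable))
  have hwz := hw.ne
  have hwx : w ≠ x := by
    rintro rfl
    exact hyz' ((ax z).1 hw.symm).symm
  grind

/-- The number of tips of `G`. -/
noncomputable def tips (G : SimpleGraph V) : ℕ := {x | IsTip G x}.ncard

lemma tips_le_spikes [Finite V] (G : SimpleGraph V) :
    tips G ≤ {p : V × V | IsSpike G p.1 p.2}.ncard := by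
  refine le_trans (Set.ncard_le_ncard (t := Prod.fst '' {p : V × V | IsSpike G p.1 p.2}) ?_)
    (Set.ncard_image_le)
  intro x hx
  obtain ⟨y, hy⟩ := hx.exists_isSpike
  exact ⟨(x, y), hy, rfl⟩

/-- Vertices that may become tips of `H` because of a change of the neighbourhood of `t`
between `F` and `H`. -/
def near (F H : SimpleGraph V) (t : V) : Set V :=
  {t} ∪ {x | ∃ z, H.neighborSet t = {x, z}} ∪
    {x | x ≠ t ∧ ∃ y, F.neighborSet t = {y} ∧ F.neighborSet y = {x, t}}

lemma near_ncard [Finite V] (F H : SimpleGraph V) (t : V) : (near F H t).ncard ≤ 4 := by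
  have h1 : {x | ∃ z, H.neighborSet t = {x, z}}.ncard ≤ 2 := by
    by_cases h : ∃ x z, H.neighborSet t = {x, z}
    · obtain ⟨x, z, h⟩ := h
      refine le_trans (Set.ncard_le_ncard (t := {x, z}) ?_) (Set.ncard_insert_le _ _ |>.trans (by simp))
      rintro a ⟨b, hb⟩
      rw [← h, hb]; simp
    · have : {x | ∃ z, H.neighborSet t = {x, z}} = ∅ := by
        ext x; simp only [Set.mem_ofPred_eq, Set.mem_empty_iff_false, iff_false]
        exact fun ⟨z, hz⟩ => h ⟨x, z, hz⟩
      simp [this]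
  have h2 : {x | x ≠ t ∧ ∃ y, F.neighborSet t = {y} ∧ F.neighborSet y = {x, t}}.ncard ≤ 1 := by
    rw [Set.ncard_le_one]
    rintro a ⟨ha, y, hy, hay⟩ b ⟨hb, y', hy', hby⟩
    have : y = y' := by rw [hy] at hy'; exact Set.singleton_injective hy'
    subst this
    have : a ∈ ({b, t} : Set V) := by rw [← hby, hay]; simp
    simpa [ha] using this
  have h3 := Set.ncard_union_le ({t} ∪ {x | ∃ z, H.neighborSet t = {x, z}})
    {x | x ≠ t ∧ ∃ y, F.neighborSet t = {y} ∧ F.neighborSet y = {x, t}}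
  have h4 := Set.ncard_union_le {t} {x | ∃ z, H.neighborSet t = {x, z}}
  have h5 := Set.ncard_singleton t
  unfold near
  omega

/-- A tip of `H` that is not near a changed vertex was already a tip of `F`. In the notation of
`IsTip`, if `x` and `y` are unchanged then only `z` can matter, and only if it was a leaf at `y`. -/
lemma isTip_cases {F H : SimpleGraph V} {T : Set V}
    (hT : ∀ a ∉ T, H.neighborSet a = F.neighborSet a) {x : V} (hx : IsTip H x) :
    IsTip F x ∨ ∃ t ∈ T, x ∈ near F H t := by
  by_contra! hc
  obtain ⟨hF, hnear⟩ := hc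
  obtain ⟨y, z, hzx, h1, h2, h3⟩ := hx
  have hxT : x ∉ T := fun h => hnear x h (by simp [near])
  have hyT : y ∉ T := fun h => hnear y h (.inl (.inr ⟨z, h2⟩))
  rw [hT x hxT] at h1
  rw [hT y hyT] at h2
  by_cases h4 : F.neighborSet z = {y}
  · have hzT : z ∈ T := by
      by_contra hz
      exact h3 (hT z hz ▸ h4)
    exact hnear z hzT (.inr ⟨hzx.symm, y, h4, h2⟩)
  · exact hF ⟨y, z, hzx, h1, h2, h4⟩

lemma tips_move [Finite V] {F : SimpleGraph V} {u p q z : V} (h : IsPos F u p q) :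
    tips (move F u p q z) ≤ tips F + 16 := by
  set H := move F u p q z with hH
  have hT : ∀ a ∉ ({u, p, q, z} : Set V), H.neighborSet a = F.neighborSet a := by
    intro a ha
    simp only [Set.mem_insert_iff, Set.mem_singleton_iff, not_or] at ha
    ext w
    rw [mem_neighborSet, mem_neighborSet,
      move_adj_of_not_adj h ha.1 (by rw [h.adj_iff]; tauto)]
    tauto
  have hsub : {x | IsTip H x} ⊆ {x | IsTip F x} ∪
      (near F H u ∪ near F H p ∪ near F H q ∪ near F H z) := by
    intro x hx
    rcases isTip_cases hT hx with h | ⟨t, ht, h⟩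
    · exact .inl h
    · simp only [Set.mem_insert_iff, Set.mem_singleton_iff] at ht
      right
      rcases ht with rfl | rfl | rfl | rfl <;> simp [h]
  have h0 := Set.ncard_le_ncard hsub
  have h1 := Set.ncard_union_le {x | IsTip F x}
    (near F H u ∪ near F H p ∪ near F H q ∪ near F H z)
  have h2 := Set.ncard_union_le (near F H u ∪ near F H p ∪ near F H q) (near F H z)
  have h3 := Set.ncard_union_le (near F H u ∪ near F H p) (near F H q)
  have h4 := Set.ncard_union_le (near F H u) (near F H p)
  have := near_ncard F H u
  have := near_ncard F H p
  have := near_ncard F H q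
  have := near_ncard F H z
  unfold tips
  omega

/-! ### Sparsity of forests -/

lemma card_edges_le {n : ℕ} {F : SimpleGraph (Fin n)} [DecidableRel F.Adj] (hF : F.IsAcyclic) :
    F.edgeFinset.card ≤ n := by
  classical
  rcases Nat.eq_zero_or_pos n with rfl | hn
  · have : F.edgeFinset = ∅ := by
      ext e
      induction e with | h a b => exact a.elim0
    simp [this]
  · have : Nonempty (Fin n) := ⟨⟨0, hn⟩⟩
    obtain ⟨T, hFT, -, hT⟩ :=
      (connected_top (V := Fin n)).exists_isTree_le_of_le_of_isAcyclic le_top hF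
    have h1 := hT.card_edgeFinset
    have h2 : F.edgeFinset.card ≤ T.edgeFinset.card :=
      Finset.card_le_card (edgeFinset_mono hFT)
    simp only [Fintype.card_fin] at h1
    omega

lemma sum_degree_le {n : ℕ} {F : SimpleGraph (Fin n)} (hF : F.IsAcyclic) :
    ∑ v, (F.neighborSet v).ncard ≤ 2 * n := by
  classical
  have h := F.sum_degrees_eq_twice_card_edges
  have h2 := card_edges_le hF
  have h3 : ∑ v, (F.neighborSet v).ncard = ∑ v, F.degree v := by
    refine Finset.sum_congr rfl fun v _ => ?_
    rw [← card_neighborSet_eq_degree, ← Nat.card_coe_set_eq, Nat.card_eq_fintype_card]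
  omega

/-- At least a third of the vertices of a forest have degree at most two. -/
lemma card_low {n : ℕ} {F : SimpleGraph (Fin n)} (hF : F.IsAcyclic) :
    n ≤ 3 * {v | (F.neighborSet v).ncard ≤ 2}.ncard := by
  classical
  have h := sum_degree_le hF
  -- A vertex of degree at least three contributes three to the degree sum, which is at most `2 * n`.
  have h1 : ∑ v : Fin n, 3 ≤ ∑ v, ((F.neighborSet v).ncard +
      3 * if (F.neighborSet v).ncard ≤ 2 then 1 else 0) := by
    refine Finset.sum_le_sum fun v _ => ?_
    split_ifs <;> omega
  rw [Finset.sum_add_distrib, ← Finset.mul_sum, Finset.sum_boole] at h1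
  simp only [Finset.sum_const, Finset.card_univ, Fintype.card_fin, smul_eq_mul, Nat.cast_id] at h1
  rw [Set.ncard_eq_toFinset_card', Set.toFinset_ofPred]
  omega

/-- The pairs that may serve as positions: loops and (ordered) edges. -/
def slots (H : SimpleGraph V) : Set (V × V) := {e | e.1 = e.2 ∨ H.Adj e.1 e.2}

lemma slots_ncard {n : ℕ} {H : SimpleGraph (Fin n)} (hH : H.IsAcyclic) :
    (slots H).ncard ≤ 3 * n := by
  classical
  have h := sum_degree_le hH
  have h1 : slots H ⊆ ⋃ v, (fun w => (v, w)) '' (insert v (H.neighborSet v)) := by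
    rintro ⟨a, b⟩ hab
    simp only [Set.mem_iUnion]
    refine ⟨a, b, ?_, rfl⟩
    rcases hab with h | h
    · left; exact h.symm
    · right; exact h
  have h2 := Set.ncard_iUnion_le_of_fintype
    (fun v : Fin n => (fun w => (v, w)) '' (insert v (H.neighborSet v)))
  have h3 : ∑ v : Fin n, ((fun w => (v, w)) '' (insert v (H.neighborSet v))).ncard ≤
      ∑ v : Fin n, ((H.neighborSet v).ncard + 1) :=
    Finset.sum_le_sum fun v _ => (Set.ncard_image_le).trans (Set.ncard_insert_le _ _)
  rw [Finset.sum_add_distrib] at h3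
  simp only [Finset.sum_const, Finset.card_univ, Fintype.card_fin, smul_eq_mul, mul_one] at h3
  have h4 := Set.ncard_le_ncard h1
  omega

lemma exists_code {α : Type*} [Finite α] (S : Set α) {m : ℕ} (hm : 0 < m) (h : S.ncard ≤ m) :
    ∃ c : α → Fin m, Set.InjOn c S := by
  classical
  have := Fintype.ofFinite α
  have h' : Fintype.card S ≤ Fintype.card (Fin m) := by
    rwa [Fintype.card_fin, ← Nat.card_eq_fintype_card, Nat.card_coe_set_eq]
  obtain ⟨g⟩ := Function.Embedding.nonempty_of_card_le h'
  refine ⟨fun a => if ha : a ∈ S then g ⟨a, ha⟩ else ⟨0, hm⟩, fun a ha b hb hab => ?_⟩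
  simp only [ha, hb, dif_pos] at hab
  simpa using g.injective hab

/-! ### The switching -/

/-- A chosen position of the vertex `u` in `F` (meaningful if `u` has degree at most two). -/
noncomputable def pos [Nonempty V] (F : SimpleGraph V) (u : V) : V × V :=
  Classical.epsilon fun e : V × V => IsPos F u e.1 e.2

lemma pos_spec [Finite V] [Nonempty V] {F : SimpleGraph V} (hF : F.IsAcyclic) {u : V}
    (hu : (F.neighborSet u).ncard ≤ 2) : IsPos F u (pos F u).1 (pos F u).2 := by
  obtain ⟨p, q, h⟩ := exists_isPos hF hu
  exact Classical.epsilon_spec (p := fun e : V × V => IsPos F u e.1 e.2) ⟨(p, q), h⟩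

/-- Move `u` from its position in `F` to become a leaf at `z`. -/
noncomputable def mv [Nonempty V] (F : SimpleGraph V) (u z : V) : SimpleGraph V :=
  move F u (pos F u).1 (pos F u).2 z

/-- A single move of `u` is reversible once the old position of `u` is recorded. -/
lemma mv_inj [Nonempty V] {F F' : SimpleGraph V} {u z z' : V} {β : Type*}
    {c : SimpleGraph V → V × V → β} (hc : Set.InjOn (c (mv F u z)) (slots (mv F u z)))
    (hp : IsPos F u (pos F u).1 (pos F u).2) (hp' : IsPos F' u (pos F' u).1 (pos F' u).2)
    (hz : z ≠ u) (hz' : z' ≠ u) (h : mv F u z = mv F' u z')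
    (he : c (mv F u z) (pos F u) = c (mv F' u z') (pos F' u)) : F = F' ∧ z = z' := by
  have h1 : pos F u ∈ slots (mv F u z) := move_pos hp
  have h2 : pos F' u ∈ slots (mv F u z) := h ▸ move_pos hp'
  have h3 : pos F u = pos F' u := hc h1 h2 (by rw [he, h])
  refine ⟨?_, ?_⟩
  · rw [← unmove_move hp hz, ← unmove_move hp' hz', ← h3]
    have h : move F u (pos F u).1 (pos F u).2 z = move F' u (pos F' u).1 (pos F' u).2 z' := h
    rw [h, h3]
  · have h4 : (mv F' u z').Adj u z := h ▸ (move_adj_left hp hz z).2 rfl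
    exact (move_adj_left hp' hz' z).1 h4

/-- Admissible data for the switching: distinct vertices, the first three of degree at
most two. -/
structure Good (F : SimpleGraph V) (x v u z : V) : Prop where
  acyc : F.IsAcyclic
  hx : (F.neighborSet x).ncard ≤ 2
  hv : (F.neighborSet v).ncard ≤ 2
  hu : (F.neighborSet u).ncard ≤ 2
  xv : x ≠ v
  xu : x ≠ u
  xz : x ≠ z
  vu : v ≠ u
  vz : v ≠ z
  uz : u ≠ z

section

variable [Finite V] [Nonempty V] {F : SimpleGraph V} {x v u z : V}

/-- The switching: remove `x`, `v`, `u` from their positions and hang the path `x v u`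
with its end `x` at `z`. -/
noncomputable def switch (F : SimpleGraph V) (x v u z : V) : SimpleGraph V :=
  mv (mv (mv F x z) v x) u v

/-! The positions and forests met along the switching are numbered by the three successive moves. -/

lemma Good.pos₁ (h : Good F x v u z) : IsPos F x (pos F x).1 (pos F x).2 :=
  pos_spec h.acyc h.hx

lemma Good.acyc₁ (h : Good F x v u z) : (mv F x z).IsAcyclic :=
  move_isAcyclic h.acyc h.pos₁ h.xz.symm

lemma Good.pos₂ (h : Good F x v u z) :
    IsPos (mv F x z) v (pos (mv F x z) v).1 (pos (mv F x z) v).2 :=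
  pos_spec h.acyc₁ ((move_ncard_le h.pos₁ h.xv.symm h.vz).trans h.hv)

lemma Good.acyc₂ (h : Good F x v u z) : (mv (mv F x z) v x).IsAcyclic :=
  move_isAcyclic h.acyc₁ h.pos₂ h.xv

lemma Good.pos₃ (h : Good F x v u z) : IsPos (mv (mv F x z) v x) u
    (pos (mv (mv F x z) v x) u).1 (pos (mv (mv F x z) v x) u).2 :=
  pos_spec h.acyc₂ ((move_ncard_le h.pos₂ h.vu.symm h.xu.symm).trans
    ((move_ncard_le h.pos₁ h.xu.symm h.uz).trans h.hu))

lemma Good.acyc₃ (h : Good F x v u z) : (switch F x v u z).IsAcyclic :=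
  move_isAcyclic h.acyc₂ h.pos₃ h.vu

lemma Good.tips (h : Good F x v u z) : tips (switch F x v u z) ≤ tips F + 48 := by
  have h1 := tips_move (z := z) h.pos₁
  have h2 := tips_move (z := x) h.pos₂
  have h3 := tips_move (z := v) h.pos₃
  unfold switch
  simp only [mv] at *
  omega

lemma Good.isTip (h : Good F x v u z) : IsTip (switch F x v u z) u := by
  have hsymm := fun (G : SimpleGraph V) a b => G.adj_comm a b
  have a1 : ∀ w, (mv F x z).Adj x w ↔ w = z := move_adj_left h.pos₁ h.xz.symm
  have a2 : ∀ w, (mv (mv F x z) v x).Adj v w ↔ w = x := move_adj_left h.pos₂ h.xv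
  have a3 : ∀ w, (switch F x v u z).Adj u w ↔ w = v := move_adj_left h.pos₃ h.vu
  have b2 : ∀ w, (mv (mv F x z) v x).Adj x w ↔ w = z ∨ w = v := fun w => by
    have hvx : ¬ (mv F x z).Adj v x := by
      rw [hsymm, a1]; exact h.vz
    have := move_adj_of_not_adj (z := x) h.pos₂ h.xv hvx w
    rw [a1] at this
    simpa [mv] using this
  have b3 : ∀ w, (switch F x v u z).Adj v w ↔ w = x ∨ w = u := fun w => by
    have huv : ¬ (mv (mv F x z) v x).Adj u v := by
      rw [hsymm, a2]; exact h.xu.symm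
    have := move_adj_of_not_adj (z := v) h.pos₃ h.vu huv w
    rw [a2] at this
    simpa [switch, mv] using this
  have c3 : ∀ w, (switch F x v u z).Adj x w ↔ w = z ∨ w = v := fun w => by
    have hux : ¬ (mv (mv F x z) v x).Adj u x := by
      rw [hsymm, b2]
      have := h.uz
      have := h.vu
      tauto
    have := move_adj_of_not_adj (z := v) h.pos₃ h.xu hux w
    rw [b2] at this
    have hxv := h.xv
    simpa [switch, mv, hxv] using this
  refine ⟨v, x, h.xu, ?_, ?_, fun hc => ?_⟩
  · ext w; simp [a3]
  · ext w; simp [b3, or_comm]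
  · have : z ∈ (switch F x v u z).neighborSet x := (c3 z).2 (.inl rfl)
    rw [hc] at this
    exact h.vz this.symm

end

/-- The number of forests on `Fin n` with at most `s` tips. -/
noncomputable def few (n s : ℕ) : ℕ :=
  Nat.card {F : SimpleGraph (Fin n) // F.IsAcyclic ∧ tips F ≤ s}

/-- Distinct entries of the table `f` serve as the four vertices of a switching; using one row per
vertex makes distinctness automatic. -/
lemma exists_places {n k : ℕ} (hk : 12 * k ≤ n) {F : SimpleGraph (Fin n)} (hF : F.IsAcyclic) :
    ∃ f : Fin 4 × Fin k → Fin n, Function.Injective f ∧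
      ∀ i, (F.neighborSet (f i)).ncard ≤ 2 := by
  classical
  have h := card_low hF
  have h' : Fintype.card (Fin 4 × Fin k) ≤
      Fintype.card {v | (F.neighborSet v).ncard ≤ 2} := by
    rw [← Nat.card_eq_fintype_card (α := Set.Elem _), Nat.card_coe_set_eq]
    simp only [Fintype.card_prod, Fintype.card_fin]
    omega
  obtain ⟨g⟩ := Function.Embedding.nonempty_of_card_le h'
  exact ⟨fun i => (g i).1, Subtype.val_injective.comp g.injective, fun i => (g i).2⟩

/-- Double counting of the switchings. On the left, `k` choices for each of the four vertices; on
the right, `s + 48` choices for the tip `u` and `3 * n` for each of the three old positions. -/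
lemma few_step {n k s : ℕ} (hn : 0 < n) (hk : 12 * k ≤ n) :
    few n s * (k * (k * (k * k))) ≤
      few n (s + 48) * ((s + 48) * ((3 * n) * ((3 * n) * (3 * n)))) := by
  classical
  have : Nonempty (Fin n) := ⟨⟨0, hn⟩⟩
  have hf : ∀ F : {F : SimpleGraph (Fin n) // F.IsAcyclic ∧ tips F ≤ s},
      ∃ f : Fin 4 × Fin k → Fin n, Function.Injective f ∧
        ∀ i, (F.1.neighborSet (f i)).ncard ≤ 2 := fun F => exists_places hk F.2.1
  choose f hf1 hf2 using hf
  have hc : ∀ H : SimpleGraph (Fin n), ∃ c : Fin n × Fin n → Fin (3 * n),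
      H.IsAcyclic → Set.InjOn c (slots H) := fun H => by
    by_cases hH : H.IsAcyclic
    · obtain ⟨c, hc⟩ := exists_code (slots H) (by omega) (slots_ncard hH)
      exact ⟨c, fun _ => hc⟩
    · exact ⟨fun _ => ⟨0, by omega⟩, fun h => absurd h hH⟩
  choose c hc using hc
  have ht : ∀ H : SimpleGraph (Fin n), ∃ t : Fin n → Fin (s + 48),
      tips H ≤ s + 48 → Set.InjOn t {x | IsTip H x} := fun H => by
    by_cases hH : tips H ≤ s + 48
    · obtain ⟨t, ht⟩ := exists_code {x | IsTip H x} (by omega) hH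
      exact ⟨t, fun _ => ht⟩
    · exact ⟨fun _ => ⟨0, by omega⟩, fun h => absurd h hH⟩
  choose t ht using ht
  have good : ∀ (F : {F : SimpleGraph (Fin n) // F.IsAcyclic ∧ tips F ≤ s})
      (i : Fin k × Fin k × Fin k × Fin k),
      Good F.1 (f F (0, i.1)) (f F (1, i.2.1)) (f F (2, i.2.2.1)) (f F (3, i.2.2.2)) :=
    fun F i => by
      constructor
      · exact F.2.1
      · exact hf2 _ _
      · exact hf2 _ _
      · exact hf2 _ _
      all_goals
        intro h
        have := (Prod.ext_iff.mp (hf1 F h)).1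
        dsimp only at this
        revert this
        decide
  -- A forest with a choice of four vertices is sent to the switched forest together with the codes
  -- of the tip `u` and of the old positions of `u`, `v`, `x`.
  let Φ : {F : SimpleGraph (Fin n) // F.IsAcyclic ∧ tips F ≤ s} ×
      (Fin k × Fin k × Fin k × Fin k) →
      {F : SimpleGraph (Fin n) // F.IsAcyclic ∧ tips F ≤ s + 48} ×
        (Fin (s + 48) × Fin (3 * n) × Fin (3 * n) × Fin (3 * n)) := fun a =>
    let F := a.1.1
    let x := f a.1 (0, a.2.1)
    let v := f a.1 (1, a.2.2.1)
    let u := f a.1 (2, a.2.2.2.1)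
    let z := f a.1 (3, a.2.2.2.2)
    (⟨switch F x v u z, (good a.1 a.2).acyc₃,
        (good a.1 a.2).tips.trans (Nat.add_le_add_right a.1.2.2 48)⟩,
      (t (switch F x v u z) u,
        c (switch F x v u z) (pos (mv (mv F x z) v x) u),
        c (mv (mv F x z) v x) (pos (mv F x z) v),
        c (mv F x z) (pos F x)))
  have key : ∀ (F F' : SimpleGraph (Fin n)) (x v u z x' v' u' z' : Fin n),
      Good F x v u z → Good F' x' v' u' z' → tips (switch F x v u z) ≤ s + 48 →
      switch F x v u z = switch F' x' v' u' z' →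
      t (switch F x v u z) u = t (switch F' x' v' u' z') u' →
      c (switch F x v u z) (pos (mv (mv F x z) v x) u) =
        c (switch F' x' v' u' z') (pos (mv (mv F' x' z') v' x') u') →
      c (mv (mv F x z) v x) (pos (mv F x z) v) =
        c (mv (mv F' x' z') v' x') (pos (mv F' x' z') v') →
      c (mv F x z) (pos F x) = c (mv F' x' z') (pos F' x') →
      F = F' ∧ x = x' ∧ v = v' ∧ u = u' ∧ z = z' := by
    intro F F' x v u z x' v' u' z' g g' htips e0 e1 e2 e3 e4
    have hu : u = u' := ht _ htips g.isTip (by rw [e0]; exact g'.isTip) (by rw [e1, e0])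
    subst hu
    obtain ⟨e5, hv⟩ := mv_inj (c := c) (hc _ g.acyc₃) g.pos₃ g'.pos₃ g.vu g'.vu e0 e2
    subst hv
    obtain ⟨e6, hx⟩ := mv_inj (c := c) (hc _ g.acyc₂) g.pos₂ g'.pos₂ g.xv g'.xv e5 e3
    subst hx
    obtain ⟨e7, hz⟩ := mv_inj (c := c) (hc _ g.acyc₁) g.pos₁ g'.pos₁ g.xz.symm g'.xz.symm e6 e4
    exact ⟨e7, rfl, rfl, rfl, hz⟩
  have hΦ : Function.Injective Φ := by
    rintro ⟨F, i1, i2, i3, i4⟩ ⟨F', j1, j2, j3, j4⟩ h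
    simp only [Φ, Prod.mk.injEq, Subtype.mk.injEq] at h
    obtain ⟨e0, e1, e2, e3, e4⟩ := h
    have gF := good F (i1, i2, i3, i4)
    obtain ⟨hF, hx, hv, hu, hz⟩ := key _ _ _ _ _ _ _ _ _ _ gF (good F' (j1, j2, j3, j4))
      (gF.tips.trans (Nat.add_le_add_right F.2.2 48)) e0 e1 e2 e3 e4
    have hF := Subtype.ext hF
    subst hF
    have hx := hf1 F hx
    have hv := hf1 F hv
    have hu := hf1 F hu
    have hz := hf1 F hz
    simp only [Prod.mk.injEq, true_and] at hx hv hu hz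
    rw [hx, hv, hu, hz]
  have := Nat.card_le_card_of_injective Φ hΦ
  simpa only [Nat.card_prod, Nat.card_fin, Nat.card_eq_fintype_card (α := Fin _),
    Fintype.card_fin, few] using this

/-! ### Iterating the estimate -/

lemma few_half {n s : ℕ} (hn : 24 ≤ n) (hs : 2 * 8957952 * (s + 48) ≤ n) :
    2 * few n s ≤ few n (s + 48) := by
  have h := few_step (n := n) (k := n / 12) (s := s) (by omega) (by omega)
  set k := n / 12
  set N := few n s
  set M := few n (s + 48)
  have hk : n ≤ 24 * k := by omega
  have hn0 : 0 < n := by omega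
  have h1 : (N * n) * n ^ 3 ≤ (8957952 * (s + 48) * M) * n ^ 3 :=
    calc (N * n) * n ^ 3 = N * n ^ 4 := by ring
      _ ≤ N * (24 * k) ^ 4 := by gcongr
      _ = 24 ^ 4 * (N * (k * (k * (k * k)))) := by ring
      _ ≤ 24 ^ 4 * (M * ((s + 48) * ((3 * n) * ((3 * n) * (3 * n))))) := by gcongr
      _ = _ := by ring
  have h2 := Nat.le_of_mul_le_mul_right h1 (by positivity)
  refine Nat.le_of_mul_le_mul_right (c := n) ?_ hn0
  calc 2 * N * n = 2 * (N * n) := by ring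
    _ ≤ 2 * (8957952 * (s + 48) * M) := by gcongr
    _ = M * (2 * 8957952 * (s + 48)) := by ring
    _ ≤ M * n := by gcongr

lemma few_iterate {n : ℕ} (hn : 24 ≤ n) (j : ℕ) : ∀ s, 2 * 8957952 * (s + 48 * j) ≤ n →
    2 ^ j * few n s ≤ few n (s + 48 * j) := by
  induction j with
  | zero => intro s _; simp
  | succ j ih =>
    intro s hs
    have h1 := ih (s + 48) (by omega)
    have h2 := few_half (s := s) hn (by omega)
    calc 2 ^ (j + 1) * few n s = 2 ^ j * (2 * few n s) := by ring
      _ ≤ 2 ^ j * few n (s + 48) := by gcongr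
      _ ≤ few n (s + 48 + 48 * j) := h1
      _ = few n (s + 48 * (j + 1)) := by congr 1; ring

lemma few_le_forestCount (n s : ℕ) : few n s ≤ forestCount n := by
  refine Nat.card_le_card_of_injective
    (fun F : {F : SimpleGraph (Fin n) // F.IsAcyclic ∧ tips F ≤ s} =>
      (⟨F.1, F.2.1⟩ : {G : SimpleGraph (Fin n) // G.IsAcyclic})) ?_
  intro F F' h
  exact Subtype.ext (Subtype.mk.inj h)

lemma forestCount_pos (n : ℕ) : 0 < forestCount n := by
  have : Nonempty {G : SimpleGraph (Fin n) // G.IsAcyclic} := ⟨⟨⊥, isAcyclic_bot⟩⟩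
  exact Nat.card_pos

end SpikeCount

open SpikeCount

/-- there are a, b > 0 such that for all large n, fewer than e^{-bn}|F_n|
forests on {1,…,n} have fewer than a·n spikes. -/
theorem stmt_12 :
    ∃ a : ℝ, 0 < a ∧ ∃ b : ℝ, 0 < b ∧ ∃ n0 : ℕ, ∀ n ≥ n0,
      (Nat.card {F : SimpleGraph (Fin n) // F.IsAcyclic ∧
          (({p : Fin n × Fin n | IsSpike F p.1 p.2}.ncard : ℝ) < a * n)} : ℝ)
        < Real.exp (-b * n) * (forestCount n : ℝ) := by
  -- With `K = 8957952`: start at `s = n / (4K)` tips and perform `j = n / (192K)` doublings,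
  -- which keeps the number of tips at most `n / (2K)`, as `few_iterate` requires.
  refine ⟨1 / (4 * 8957952), by norm_num, 1 / (768 * 8957952), by norm_num,
    192 * 8957952, fun n hn => ?_⟩
  set s := n / (4 * 8957952) with hs
  set j := n / (192 * 8957952) with hj
  have h1 : Nat.card {F : SimpleGraph (Fin n) // F.IsAcyclic ∧
      (({p : Fin n × Fin n | IsSpike F p.1 p.2}.ncard : ℝ) < 1 / (4 * 8957952) * n)} ≤
      few n s := by
    refine Nat.card_le_card_of_injective (fun F => (⟨F.1, F.2.1, ?_⟩ :
      {F : SimpleGraph (Fin n) // F.IsAcyclic ∧ tips F ≤ s})) ?_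
    · refine (tips_le_spikes F.1).trans ?_
      rw [hs, Nat.le_div_iff_mul_le (by norm_num)]
      have := F.2.2
      have h : (({p : Fin n × Fin n | IsSpike F.1 p.1 p.2}.ncard : ℝ)) * (4 * 8957952) ≤ n := by
        linarith
      exact_mod_cast h
    · intro F F' h
      exact Subtype.ext (Subtype.mk.inj h)
  have h2 := few_iterate (n := n) (by omega) j s (by omega)
  have h3 : 2 ^ j * Nat.card {F : SimpleGraph (Fin n) // F.IsAcyclic ∧
      (({p : Fin n × Fin n | IsSpike F p.1 p.2}.ncard : ℝ) < 1 / (4 * 8957952) * n)} ≤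
      forestCount n :=
    (Nat.mul_le_mul_left _ h1).trans (h2.trans (few_le_forestCount _ _))
  have h4 : Real.exp (1 / (768 * 8957952) * n) < 2 ^ j := by
    have hj1 : (1 : ℝ) ≤ j := by
      have : 1 ≤ j := by omega
      exact_mod_cast this
    have hnj : (n : ℝ) < 192 * 8957952 * (j + 1) := by
      have : n < 192 * 8957952 * (j + 1) := by omega
      exact_mod_cast this
    have hhalf : Real.exp (1 / 2) ≤ 2 := by
      have h := Real.exp_one_lt_d9
      have h' : Real.exp (1 / 2) * Real.exp (1 / 2) = Real.exp 1 := by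
        rw [← Real.exp_add]; norm_num
      nlinarith [Real.exp_pos (1 / 2)]
    calc Real.exp (1 / (768 * 8957952) * n) < Real.exp (j * (1 / 2)) := by
          apply Real.exp_lt_exp.mpr; linarith
      _ = Real.exp (1 / 2) ^ j := Real.exp_nat_mul _ _
      _ ≤ 2 ^ j := by gcongr
  have hpos : (0 : ℝ) < forestCount n := by exact_mod_cast forestCount_pos n
  have h5 : (2 : ℝ) ^ j * Nat.card {F : SimpleGraph (Fin n) // F.IsAcyclic ∧
      (({p : Fin n × Fin n | IsSpike F p.1 p.2}.ncard : ℝ) < 1 / (4 * 8957952) * n)} ≤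
      forestCount n := by exact_mod_cast h3
  rw [neg_mul, Real.exp_neg, inv_mul_eq_div, lt_div_iff₀ (Real.exp_pos _), mul_comm]
  rcases (Nat.cast_nonneg (α := ℝ) (Nat.card {F : SimpleGraph (Fin n) // F.IsAcyclic ∧
      (({p : Fin n × Fin n | IsSpike F p.1 p.2}.ncard : ℝ) <
        1 / (4 * 8957952) * n)})).eq_or_lt with h0 | h0
  · rw [← h0, mul_zero]; exact hpos
  · exact (mul_lt_mul_of_pos_right h4 h0).trans_le h5
end
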